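/- Let ω be a concave weight function. Then the ring of germs at 0 ∈ ℝ of complex-valued E^{ω}-functions (Roumieu) has property (D), and the ring of germs at 0 ∈ ℝ of complex-valued E^{(ω)}-functions (Beurling) has property (D): for every function f defined on an open neighborhood of 0 in ℝ and every integer j ≥ 1, if f^j and f^{j+1} are of the respective class on some open neighborhood of 0, then f is of that class on some open neighborhood of 0. -/

import Mathlib

open Filter Set Asymptotics MeasureTheory

noncomputable section

/-- `M` is a weight sequence: `M 0 = 1`, positive, `M 1 ≥ 1`, log-convex and
`M k ^ (1/k) → ∞`. -/
def IsWeightSeq (M : ℕ → ℝ) : Prop :=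
  M 0 = 1 ∧ (∀ k, 0 < M k) ∧ 1 ≤ M 1 ∧
    (∀ k : ℕ, 1 ≤ k → M k ^ 2 ≤ M (k - 1) * M (k + 1)) ∧
    Tendsto (fun k : ℕ => M k ^ (1 / (k : ℝ))) atTop atTop

/-- The sequence `m k = M k / k!`. -/
def mseq (M : ℕ → ℝ) : ℕ → ℝ := fun k => M k / (Nat.factorial k : ℝ)

/-- Log-convexity of a sequence. -/
def LogConvexSeq (m : ℕ → ℝ) : Prop := ∀ k : ℕ, 1 ≤ k → m k ^ 2 ≤ m (k - 1) * m (k + 1)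

/-- `m k ^ (1/k) → ∞`. -/
def RootTendsToInfty (m : ℕ → ℝ) : Prop :=
  Tendsto (fun k : ℕ => m k ^ (1 / (k : ℝ))) atTop atTop

/-- Moderate growth of a sequence. -/
def ModerateGrowth (M : ℕ → ℝ) : Prop :=
  ∃ C : ℝ, 0 < C ∧ ∀ j k : ℕ, M (j + k) ≤ C ^ (j + k) * M j * M k

/-- Derivation closedness of a sequence. -/
def DerivClosed (M : ℕ → ℝ) : Prop :=
  ∃ C : ℝ, 0 < C ∧ ∀ k : ℕ, M (k + 1) ≤ C ^ (k + 1) * M k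

/-- Non-quasianalyticity: `∑_{k≥1} M (k-1) / M k = ∑_{k≥1} 1/μ_k < ∞`. -/
def NonQuasianalytic (M : ℕ → ℝ) : Prop := Summable fun k : ℕ => M k / M (k + 1)

/-- Quasianalyticity: `∑_{k≥1} 1/μ_k = ∞`. -/
def Quasianalytic (M : ℕ → ℝ) : Prop := ¬ NonQuasianalytic M

/-- The associated function `h_m (t) = inf_k m k * t ^ k`. -/
def hFun (m : ℕ → ℝ) (t : ℝ) : ℝ := ⨅ k : ℕ, m k * t ^ k

/-- `Γ̄_m (t) = min {k | h_m t = m k * t ^ k}`. -/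
def GammaBar (m : ℕ → ℝ) (t : ℝ) : ℕ := sInf {k : ℕ | hFun m t = m k * t ^ k}

/-- `Γ̲_m (t) = min {k | m (k+1) / m k ≥ 1 / t}`. -/
def GammaLow (m : ℕ → ℝ) (t : ℝ) : ℕ := sInf {k : ℕ | 1 / t ≤ m (k + 1) / m k}

/-- The set whose supremum is `mg (M, N)`. -/
def mgSet (M N : ℕ → ℝ) : Set ℝ :=
  {x | ∃ j k : ℕ, 1 ≤ j + k ∧ x = (M (j + k) / (N j * N k)) ^ (1 / (j + k : ℝ))}

/-- `mg (M, N) = sup_{j+k ≥ 1} (M (j+k) / (N j * N k)) ^ (1/(j+k))`. -/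
def mg (M N : ℕ → ℝ) : ℝ := sSup (mgSet M N)

/-- `mg (M, N) < ∞`. -/
def MgFinite (M N : ℕ → ℝ) : Prop := BddAbove (mgSet M N)

/-- A weight sequence is regular: `m k ^ (1/k) → ∞`, derivation closed, and
`Γ̄_m (C t) ≤ Γ̲_m t` for some `C ≥ 1`. -/
def RegularWS (M : ℕ → ℝ) : Prop :=
  RootTendsToInfty (mseq M) ∧ DerivClosed M ∧
    ∃ C : ℝ, 1 ≤ C ∧ ∀ t : ℝ, 0 < t → GammaBar (mseq M) (C * t) ≤ GammaLow (mseq M) t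

/-- `f` is of class `E^{M}` (Roumieu) on the open set `U`. -/
def RoumieuOn {E : Type*} [NormedAddCommGroup E] [NormedSpace ℝ E]
    (M : ℕ → ℝ) (f : E → ℂ) (U : Set E) : Prop :=
  ContDiffOn ℝ (⊤ : ℕ∞) f U ∧
    ∀ V : Set E, IsOpen V → IsCompact (closure V) → closure V ⊆ U →
      ∃ C σ : ℝ, 0 < C ∧ 0 < σ ∧
        ∀ x ∈ V, ∀ k : ℕ, ‖iteratedFDerivWithin ℝ k f U x‖ ≤ C * σ ^ k * M k

/-- `f` is of class `E^{(M)}` (Beurling) on the open set `U`. -/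
def BeurlingOn {E : Type*} [NormedAddCommGroup E] [NormedSpace ℝ E]
    (M : ℕ → ℝ) (f : E → ℂ) (U : Set E) : Prop :=
  ContDiffOn ℝ (⊤ : ℕ∞) f U ∧
    ∀ V : Set E, IsOpen V → IsCompact (closure V) → closure V ⊆ U →
      ∀ σ : ℝ, 0 < σ → ∃ C : ℝ, 0 < C ∧
        ∀ x ∈ V, ∀ k : ℕ, ‖iteratedFDerivWithin ℝ k f U x‖ ≤ C * σ ^ k * M k

/-- A weight matrix: a nonempty, pointwise totally ordered family of weight sequences. -/
def IsWeightMatrix (W : Set (ℕ → ℝ)) : Prop :=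
  W.Nonempty ∧ (∀ M ∈ W, IsWeightSeq M) ∧
    ∀ M ∈ W, ∀ N ∈ W, (∀ k, M k ≤ N k) ∨ (∀ k, N k ≤ M k)

/-- R-regularity of a weight matrix. -/
def RRegular (W : Set (ℕ → ℝ)) : Prop :=
  (∀ M ∈ W, RootTendsToInfty (mseq M)) ∧
    (∀ M ∈ W, ∃ N ∈ W, ∃ C : ℝ, 1 ≤ C ∧ ∀ j : ℕ, M (j + 1) ≤ C ^ (j + 1) * N j) ∧
    (∀ M ∈ W, ∃ N ∈ W, ∃ C : ℝ, 1 ≤ C ∧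
      ∀ t : ℝ, 0 < t → GammaBar (mseq N) (C * t) ≤ GammaLow (mseq M) t)

/-- B-regularity of a weight matrix. -/
def BRegular (W : Set (ℕ → ℝ)) : Prop :=
  (∀ M ∈ W, RootTendsToInfty (mseq M)) ∧
    (∀ M ∈ W, ∃ N ∈ W, ∃ C : ℝ, 1 ≤ C ∧ ∀ j : ℕ, N (j + 1) ≤ C ^ j * M j) ∧
    (∀ M ∈ W, ∃ N ∈ W, ∃ C : ℝ, 1 ≤ C ∧
      ∀ t : ℝ, 0 < t → GammaBar (mseq M) (C * t) ≤ GammaLow (mseq N) t)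

/-- R-moderate growth of a weight matrix. -/
def RModerateGrowth (W : Set (ℕ → ℝ)) : Prop := ∀ M ∈ W, ∃ N ∈ W, MgFinite M N

/-- B-moderate growth of a weight matrix. -/
def BModerateGrowth (W : Set (ℕ → ℝ)) : Prop := ∀ M ∈ W, ∃ N ∈ W, MgFinite N M

/-- `f` is of class `E^{W}` (Roumieu, weight matrix) on the open set `U`. -/
def MatrixRoumieuOn {E : Type*} [NormedAddCommGroup E] [NormedSpace ℝ E]
    (W : Set (ℕ → ℝ)) (f : E → ℂ) (U : Set E) : Prop :=
  ContDiffOn ℝ (⊤ : ℕ∞) f U ∧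
    ∀ V : Set E, IsOpen V → IsCompact (closure V) → closure V ⊆ U →
      ∃ M ∈ W, ∃ C σ : ℝ, 0 < C ∧ 0 < σ ∧
        ∀ x ∈ V, ∀ k : ℕ, ‖iteratedFDerivWithin ℝ k f U x‖ ≤ C * σ ^ k * M k

/-- `f` is of class `E^{(W)}` (Beurling, weight matrix) on the open set `U`. -/
def MatrixBeurlingOn {E : Type*} [NormedAddCommGroup E] [NormedSpace ℝ E]
    (W : Set (ℕ → ℝ)) (f : E → ℂ) (U : Set E) : Prop :=
  ContDiffOn ℝ (⊤ : ℕ∞) f U ∧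
    ∀ V : Set E, IsOpen V → IsCompact (closure V) → closure V ⊆ U →
      ∀ M ∈ W, ∀ σ : ℝ, 0 < σ → ∃ C : ℝ, 0 < C ∧
        ∀ x ∈ V, ∀ k : ℕ, ‖iteratedFDerivWithin ℝ k f U x‖ ≤ C * σ ^ k * M k

/-- `ω` is a weight function. -/
def IsWeightFunction (ω : ℝ → ℝ) : Prop :=
  ContinuousOn ω (Ici 0) ∧ MonotoneOn ω (Ici 0) ∧ (∀ t ∈ Ici (0 : ℝ), 0 ≤ ω t) ∧
    ((fun t => ω (2 * t)) =O[atTop] ω) ∧ (ω =o[atTop] fun t : ℝ => t) ∧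
    ((fun t => Real.log t) =o[atTop] ω) ∧ ConvexOn ℝ (Ici 0) fun t => ω (Real.exp t)

/-- The Young conjugate `φ*_ω (s) = sup_{t ≥ 0} (s t - ω (e^t))`. -/
def phiStar (ω : ℝ → ℝ) (s : ℝ) : ℝ := sSup ((fun t => s * t - ω (Real.exp t)) '' Ici 0)

/-- Non-quasianalyticity of a weight function. -/
def NonQuasianalyticW (ω : ℝ → ℝ) : Prop := IntegrableOn (fun t => ω t / t ^ 2) (Ici 1)

/-- `f` is of class `E^{ω}` (Roumieu) on the open set `U`. -/
def OmegaRoumieuOn {E : Type*} [NormedAddCommGroup E] [NormedSpace ℝ E]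
    (ω : ℝ → ℝ) (f : E → ℂ) (U : Set E) : Prop :=
  ContDiffOn ℝ (⊤ : ℕ∞) f U ∧
    ∀ V : Set E, IsOpen V → IsCompact (closure V) → closure V ⊆ U →
      ∃ C ρ : ℝ, 0 < C ∧ 0 < ρ ∧
        ∀ x ∈ V, ∀ k : ℕ,
          ‖iteratedFDerivWithin ℝ k f U x‖ ≤ C * Real.exp (phiStar ω (ρ * k) / ρ)

/-- `f` is of class `E^{(ω)}` (Beurling) on the open set `U`. -/
def OmegaBeurlingOn {E : Type*} [NormedAddCommGroup E] [NormedSpace ℝ E]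
    (ω : ℝ → ℝ) (f : E → ℂ) (U : Set E) : Prop :=
  ContDiffOn ℝ (⊤ : ℕ∞) f U ∧
    ∀ V : Set E, IsOpen V → IsCompact (closure V) → closure V ⊆ U →
      ∀ ρ : ℝ, 0 < ρ → ∃ C : ℝ, 0 < C ∧
        ∀ x ∈ V, ∀ k : ℕ,
          ‖iteratedFDerivWithin ℝ k f U x‖ ≤ C * Real.exp (phiStar ω (ρ * k) / ρ)

/-- The open ellipse `Ω_ε` with vertices `± cosh ε` and co-vertices `± i sinh ε`. -/
def OmegaE (ε : ℝ) : Set ℂ :=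
  {z : ℂ | (z.re / Real.cosh ε) ^ 2 + (z.im / Real.sinh ε) ^ 2 < 1}

/-- The sequence space `Λ^{M}`. -/
def Lambda (M : ℕ → ℝ) : Set (ℕ → ℂ) :=
  {c | ∃ ρ : ℝ, 0 < ρ ∧ ∃ C : ℝ, ∀ k, ‖c k‖ ≤ C * ρ ^ k * M k}

/-- `L(M)`: all non-quasianalytic weight sequences `N ≥ M` with `n = N/k!` log-convex. -/
def LM (M : ℕ → ℝ) : Set (ℕ → ℝ) :=
  {N | IsWeightSeq N ∧ NonQuasianalytic N ∧ (∀ k, M k ≤ N k) ∧ LogConvexSeq (mseq N)}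

/-- A quasianalytic weight sequence `M` is intersectable if `Λ^{M} = ⋂_{N ∈ L(M)} Λ^{N}`. -/
def Intersectable (M : ℕ → ℝ) : Prop := Lambda M = ⋂ N ∈ LM M, Lambda N


/-- The Cauchy-Riemann operator. -/
def cpDbar (u : ℂ → ℂ) (z : ℂ) : ℂ := (fderiv ℝ u z 1 + Complex.I * fderiv ℝ u z Complex.I) / 2

lemma cp_lin (L : ℂ →L[ℝ] ℂ) (c s : ℝ) :
    L (c + s * Complex.I) = c * L 1 + s * L Complex.I := by
  have : ((c : ℂ) + s * Complex.I) = c • (1:ℂ) + s • Complex.I := by simp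
  rw [this, map_add, map_smul, map_smul]; simp

lemma cp_exp (θ : ℝ) : Complex.exp (θ * Complex.I) = Real.cos θ + Real.sin θ * Complex.I := by
  rw [Complex.exp_mul_I]; simp

lemma cp_split (L : ℂ →L[ℝ] ℂ) (θ : ℝ) :
    (L 1 + Complex.I * L Complex.I) / 2 * Complex.exp (-(θ * Complex.I)) =
      (1/2 : ℂ) * L (Complex.exp (θ * Complex.I)) +
        (Complex.I / 2) * L (Complex.I * Complex.exp (θ * Complex.I)) := by
  have h1 : Complex.exp (-(θ * Complex.I)) = Real.cos θ - Real.sin θ * Complex.I := by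
    have := cp_exp (-θ)
    simp only [Complex.ofReal_neg, neg_mul, Real.cos_neg, Real.sin_neg] at this
    rw [this]; ring
  have h2 : Complex.I * ((Real.cos θ : ℂ) + Real.sin θ * Complex.I) =
      ((-Real.sin θ : ℝ) : ℂ) + (Real.cos θ : ℝ) * Complex.I := by
    rw [Complex.ofReal_neg]
    linear_combination (Real.sin θ : ℂ) * Complex.I_mul_I
  rw [h1, cp_exp, h2, cp_lin, cp_lin]
  rw [Complex.ofReal_neg]
  linear_combination (-(1/2) * Real.sin θ * L Complex.I) * Complex.I_mul_I

lemma cp_pompeiu (β : ℂ → ℂ) (hβ : ContDiff ℝ 1 β) (hs : ∀ z, 1 ≤ ‖z‖ → β z = 0)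
    (z : ℂ) (hz : ‖z‖ < 1) :
    ∫ θ in (0:ℝ)..(2 * Real.pi), ∫ r in (0:ℝ)..2,
      cpDbar β (z - r * Complex.exp (θ * Complex.I)) * Complex.exp (-(θ * Complex.I))
      = Real.pi * β z := by
  have hfd : Continuous (fderiv ℝ β) := hβ.continuous_fderiv one_ne_zero
  set γ : ℝ → ℝ → ℂ := fun θ r => z - r * Complex.exp (θ * Complex.I) with hγ
  have hγc : Continuous (fun p : ℝ × ℝ => γ p.1 p.2) := by
    simp only [hγ]; fun_prop
  set N : ℝ → ℝ → ℂ := fun θ r => fderiv ℝ β (γ θ r) (Complex.exp (θ * Complex.I)) with hN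
  set S : ℝ → ℝ → ℂ := fun θ r => fderiv ℝ β (γ θ r) (Complex.I * Complex.exp (θ * Complex.I)) with hS
  have hNc : Continuous (fun p : ℝ × ℝ => N p.1 p.2) := by
    simp only [hN]
    exact (hfd.comp hγc).clm_apply (by fun_prop)
  have hSc : Continuous (fun p : ℝ × ℝ => S p.1 p.2) := by
    simp only [hS]
    exact (hfd.comp hγc).clm_apply (by fun_prop)
  have e1 : ∀ θ r : ℝ, cpDbar β (z - r * Complex.exp (θ * Complex.I)) * Complex.exp (-(θ * Complex.I))
      = (1/2 : ℂ) * N θ r + (Complex.I / 2) * S θ r := by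
    intro θ r
    exact cp_split _ _
  have hNr : ∀ θ, Continuous (N θ) := fun θ => hNc.comp (by fun_prop : Continuous fun r : ℝ => (θ, r))
  have hSr : ∀ θ, Continuous (S θ) := fun θ => hSc.comp (by fun_prop : Continuous fun r : ℝ => (θ, r))
  have hSθ : ∀ r, Continuous (fun θ => S θ r) := fun r => hSc.comp (by fun_prop : Continuous fun θ : ℝ => (θ, r))
  have e2 : ∀ θ, ∫ r in (0:ℝ)..2, N θ r = β z := by
    intro θ
    have hd : ∀ r : ℝ, HasDerivAt (fun r : ℝ => - β (γ θ r)) (N θ r) r := by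
      intro r
      have h1 : HasDerivAt (γ θ) (-(Complex.exp (θ * Complex.I))) r := by
        have := ((Complex.ofRealCLM.hasDerivAt (x := r)).mul_const (Complex.exp (θ * Complex.I))).const_sub z
        simpa [hγ] using this
      have h2 : HasDerivAt (fun r : ℝ => - β (γ θ r)) _ r :=
        ((hβ.differentiable one_ne_zero (γ θ r)).hasFDerivAt.comp_hasDerivAt r h1).neg
      exact h2.congr_deriv (by simp only [hN, map_neg, neg_neg])
    rw [intervalIntegral.integral_eq_sub_of_hasDerivAt (fun r _ => hd r)
      ((hNr θ).intervalIntegrable _ _)]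
    have : β (γ θ 2) = 0 := by
      apply hs
      have h3 : ‖((2:ℝ):ℂ) * Complex.exp (θ * Complex.I)‖ = 2 := by
        rw [norm_mul, Complex.norm_exp_ofReal_mul_I]; simp
      have := norm_sub_norm_le (((2:ℝ):ℂ) * Complex.exp (θ * Complex.I)) z
      rw [h3, norm_sub_rev] at this
      simp only [hγ]; linarith
    rw [this]; simp [hγ]
  have e3 : ∀ r : ℝ, 0 < r → ∫ θ in (0:ℝ)..(2 * Real.pi), S θ r = 0 := by
    intro r hr
    have hd : ∀ θ : ℝ, HasDerivAt (fun θ : ℝ => (-(1/r : ℝ)) • β (γ θ r)) (S θ r) θ := by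
      intro θ
      have h0 : HasDerivAt (fun θ : ℝ => Complex.exp (θ * Complex.I))
          (Complex.exp (θ * Complex.I) * Complex.I) θ := by
        have := ((Complex.ofRealCLM.hasDerivAt (x := θ)).mul_const Complex.I).cexp
        simpa using this
      have h1 : HasDerivAt (fun θ => γ θ r) (-r • (Complex.I * Complex.exp (θ * Complex.I))) θ := by
        have : HasDerivAt (fun θ => γ θ r) _ θ := (h0.const_mul (r:ℂ)).const_sub z
        refine this.congr_deriv ?_
        rw [Complex.real_smul]; push_cast; ring
      have h2 : HasDerivAt (fun θ : ℝ => (-(1/r : ℝ)) • β (γ θ r)) _ θ := ((hβ.differentiable one_ne_zero (γ θ r)).hasFDerivAt.comp_hasDerivAt θ h1).const_smul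
        (-(1/r : ℝ))
      refine h2.congr_deriv ?_
      rw [map_smul, smul_smul]
      have : -(1/r) * -r = 1 := by field_simp
      rw [this, one_smul]
    rw [intervalIntegral.integral_eq_sub_of_hasDerivAt (fun θ _ => hd θ)
      ((hSθ r).intervalIntegrable _ _)]
    have : γ (2 * Real.pi) r = γ 0 r := by
      simp only [hγ]
      push_cast
      rw [Complex.exp_two_pi_mul_I]; simp
    rw [this, sub_self]
  simp_rw [e1]
  have e4 : ∀ θ, ∫ r in (0:ℝ)..2, ((1/2 : ℂ) * N θ r + (Complex.I / 2) * S θ r)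
      = (1/2 : ℂ) * β z + (Complex.I / 2) * ∫ r in (0:ℝ)..2, S θ r := by
    intro θ
    rw [intervalIntegral.integral_add (f := fun r => (1/2 : ℂ) * N θ r) (g := fun r => (Complex.I / 2) * S θ r)
      ((continuous_const.mul (hNr θ)).intervalIntegrable _ _)
      ((continuous_const.mul (hSr θ)).intervalIntegrable _ _),
      intervalIntegral.integral_const_mul, intervalIntegral.integral_const_mul, e2]
  simp_rw [e4]
  have hSI : Continuous (fun θ => ∫ r in (0:ℝ)..2, S θ r) :=
    intervalIntegral.continuous_parametric_intervalIntegral_of_continuous' hSc 0 2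
  rw [intervalIntegral.integral_add (f := fun θ => (1/2 : ℂ) * β z)
    (g := fun θ => (Complex.I / 2) * ∫ r in (0:ℝ)..2, S θ r) (by simp) ((continuous_const.mul hSI).intervalIntegrable _ _),
    intervalIntegral.integral_const_mul, intervalIntegral.integral_const_mul,
    intervalIntegral_intervalIntegral_swap]
  · have : ∫ r in (0:ℝ)..2, ∫ θ in (0:ℝ)..(2 * Real.pi), S θ r = 0 := by
      rw [intervalIntegral.integral_congr_ae (g := fun _ => 0)]
      · simp
      · refine Eventually.of_forall fun r hr => e3 r ?_
        rw [uIoc_of_le (by norm_num)] at hr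
        exact hr.1
    rw [this]
    simp; ring
  · refine IntegrableOn.mono_set (t := uIcc 0 (2 * Real.pi) ×ˢ uIcc 0 2) ?_ (Set.prod_mono uIoc_subset_uIcc uIoc_subset_uIcc)
    exact hSc.continuousOn.integrableOn_compact (isCompact_uIcc.prod isCompact_uIcc)

lemma cp_solve0 (β : ℂ → ℂ) (hβ : ContDiff ℝ 1 β) (hs : ∀ z, 1 ≤ ‖z‖ → β z = 0) :
    ∃ v : ℂ → ℂ, Differentiable ℝ v ∧ (∀ z, ‖z‖ < 1 → cpDbar v z = β z) ∧
      ∫ z in Metric.ball (0:ℂ) (1/2), ‖v z‖ ≤ 4 * ∫ z, ‖β z‖ := by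
  have hfd : Continuous (fderiv ℝ β) := hβ.continuous_fderiv one_ne_zero
  have hcs : HasCompactSupport β := by
    apply HasCompactSupport.intro (isCompact_closedBall (0:ℂ) 1)
    intro x hx
    apply hs
    simp at hx; exact hx.le
  have hcs' : HasCompactSupport (fderiv ℝ β) := hcs.fderiv (𝕜 := ℝ)
  obtain ⟨B0, hB0⟩ := hcs.exists_bound_of_continuous hβ.continuous
  obtain ⟨B1, hB1⟩ := hcs'.exists_bound_of_continuous hfd
  have hβi : Integrable β := hβ.continuous.integrable_of_hasCompactSupport hcs
  set μ : Measure (ℝ × ℝ) := (volume.restrict (Ioc 0 (2 * Real.pi))).prod (volume.restrict (Ioc 0 2)) with hμ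
  have hfin : IsFiniteMeasure μ := by rw [hμ]; infer_instance
  set γ : ℝ × ℝ → ℂ := fun p => p.2 * Complex.exp (p.1 * Complex.I) with hγ
  have hγc : Continuous γ := by simp only [hγ]; fun_prop
  set e : ℝ × ℝ → ℂ := fun p => Complex.exp (-(p.1 * Complex.I)) with he
  have hec : Continuous e := by simp only [he]; fun_prop
  have hen : ∀ p, ‖e p‖ = 1 := by
    intro p
    simp only [he]
    have : -((p.1:ℂ) * Complex.I) = ((-p.1 : ℝ) : ℂ) * Complex.I := by push_cast; ring
    rw [this, Complex.norm_exp_ofReal_mul_I]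
  have hderiv : ∀ z, HasFDerivAt (fun z => ∫ p, e p • β (z - γ p) ∂μ)
      (∫ p, e p • fderiv ℝ β (z - γ p) ∂μ) z := by
    intro z
    refine hasFDerivAt_integral_of_dominated_of_fderiv_le (𝕜 := ℝ) (s := univ) (bound := fun _ => B1)
      (F := fun z p => e p • β (z - γ p)) (F' := fun z p => e p • fderiv ℝ β (z - γ p))
      univ_mem ?_ ?_ ?_ ?_ ?_ ?_
    · refine Eventually.of_forall fun x => Continuous.aestronglyMeasurable ?_
      exact hec.smul (hβ.continuous.comp (continuous_const.sub hγc))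
    · refine Integrable.of_bound (C := B0) (Continuous.aestronglyMeasurable ?_) ?_
      · exact hec.smul (hβ.continuous.comp (continuous_const.sub hγc))
      · refine Eventually.of_forall fun p => ?_
        rw [norm_smul, hen, one_mul]; exact hB0 _
    · refine Continuous.aestronglyMeasurable ?_
      exact hec.smul (hfd.comp (continuous_const.sub hγc))
    · refine Eventually.of_forall fun p x _ => ?_
      rw [norm_smul, hen, one_mul]; exact hB1 _
    · exact integrable_const _
    · refine Eventually.of_forall fun p x _ => ?_
      have h1 := (hβ.differentiable one_ne_zero (x - γ p)).hasFDerivAt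
      have h2 := h1.comp x ((hasFDerivAt_id x).sub_const (γ p))
      have h3 := h2.const_smul (e p)
      exact h3
  have hFi : ∀ z, Integrable (fun p => e p • fderiv ℝ β (z - γ p)) μ := by
    intro z
    refine Integrable.of_bound (C := B1) (Continuous.aestronglyMeasurable ?_) ?_
    · exact hec.smul (hfd.comp (continuous_const.sub hγc))
    · refine Eventually.of_forall fun p => ?_
      rw [norm_smul, hen, one_mul]; exact hB1 _
  set c : ℂ := ((1 / Real.pi : ℝ) : ℂ) with hc
  refine ⟨fun z => c • ∫ p, e p • β (z - γ p) ∂μ, fun z => ((hderiv z).const_smul c).differentiableAt, ?_, ?_⟩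
  · intro z hz
    have hcd : cpDbar (fun z => c • ∫ p, e p • β (z - γ p) ∂μ) z = c * ∫ p, cpDbar β (z - γ p) * e p ∂μ := by
      unfold cpDbar
      have hcs : HasFDerivAt (fun z => c • ∫ p, e p • β (z - γ p) ∂μ) _ z := (hderiv z).const_smul c
      rw [hcs.fderiv]
      rw [_root_.smul_apply, _root_.smul_apply,
        ContinuousLinearMap.integral_apply (hFi z), ContinuousLinearMap.integral_apply (hFi z)]
      have i1 : Integrable (fun p => (e p • fderiv ℝ β (z - γ p)) 1) μ := (hFi z).apply_continuousLinearMap 1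
      have i2 : Integrable (fun p => (e p • fderiv ℝ β (z - γ p)) Complex.I) μ :=
        (hFi z).apply_continuousLinearMap Complex.I
      have : ∫ p, (fderiv ℝ β (z - γ p) 1 + Complex.I * fderiv ℝ β (z - γ p) Complex.I) / 2 * e p ∂μ
        = (1/2 : ℂ) * ∫ p, (e p • fderiv ℝ β (z - γ p)) 1 ∂μ +
          (Complex.I/2) * ∫ p, (e p • fderiv ℝ β (z - γ p)) Complex.I ∂μ := by
        rw [← integral_const_mul, ← integral_const_mul, ← integral_add (i1.const_mul _) (i2.const_mul _)]
        congr 1; ext p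
        simp only [_root_.smul_apply, smul_eq_mul]; ring
      rw [this]
      simp only [smul_eq_mul]; ring
    rw [hcd]
    have hdc : Continuous (cpDbar β) := by
      unfold cpDbar
      exact ((hfd.clm_apply continuous_const).add (continuous_const.mul (hfd.clm_apply continuous_const))).div_const _
    have hI : Integrable (fun p => cpDbar β (z - γ p) * e p) μ := by
      refine Integrable.of_bound (C := B1) (Continuous.aestronglyMeasurable ?_) ?_
      · exact (hdc.comp (continuous_const.sub hγc)).mul hec
      · refine Eventually.of_forall fun p => ?_
        rw [norm_mul, hen, mul_one]
        unfold cpDbar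
        have h1 := (fderiv ℝ β (z - γ p)).le_opNorm 1
        have h2 := (fderiv ℝ β (z - γ p)).le_opNorm Complex.I
        have h3 := hB1 (z - γ p)
        have h4 := norm_add_le (fderiv ℝ β (z - γ p) 1) (Complex.I * fderiv ℝ β (z - γ p) Complex.I)
        simp only [norm_mul, Complex.norm_I, norm_one, mul_one, one_mul] at h1 h2 h4
        rw [norm_div]; simp only [Complex.norm_ofNat]; linarith
    have hp := cp_pompeiu β hβ hs z hz
    rw [hμ, integral_prod _ (by rw [← hμ]; exact hI)]
    rw [intervalIntegral.integral_of_le (by positivity)] at hp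
    simp_rw [intervalIntegral.integral_of_le (by norm_num : (0:ℝ) ≤ 2)] at hp
    simp only [hγ, he]
    rw [hp, hc]
    have : (Real.pi : ℂ) ≠ 0 := by exact_mod_cast Real.pi_ne_zero
    push_cast; field_simp
  · set ν : Measure ℂ := volume.restrict (Metric.ball (0:ℂ) (1/2)) with hν
    have hνf : IsFiniteMeasure ν := ⟨by rw [hν, Measure.restrict_apply_univ]; exact measure_ball_lt_top⟩
    have hnc : ‖c‖ = 1 / Real.pi := by
      rw [hc, Complex.norm_real, Real.norm_of_nonneg (by positivity)]
    have hpt : ∀ z, ‖c • ∫ p, e p • β (z - γ p) ∂μ‖ ≤ 1 / Real.pi * ∫ p, ‖β (z - γ p)‖ ∂μ := by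
      intro z
      rw [norm_smul, hnc]
      gcongr
      refine (norm_integral_le_integral_norm _).trans (le_of_eq ?_)
      congr 1; ext p
      rw [norm_smul, hen, one_mul]
    have hjc : Continuous (fun q : ℂ × (ℝ × ℝ) => ‖β (q.1 - γ q.2)‖) :=
      (hβ.continuous.comp (continuous_fst.sub (hγc.comp continuous_snd))).norm
    have hji : Integrable (fun q : ℂ × (ℝ × ℝ) => ‖β (q.1 - γ q.2)‖) (ν.prod μ) := by
      refine Integrable.of_bound (C := B0) hjc.aestronglyMeasurable ?_
      refine Eventually.of_forall fun p => ?_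
      rw [norm_norm]; exact hB0 _
    calc ∫ z, ‖c • ∫ p, e p • β (z - γ p) ∂μ‖ ∂ν
        ≤ ∫ z, 1 / Real.pi * ∫ p, ‖β (z - γ p)‖ ∂μ ∂ν := by
          refine integral_mono_of_nonneg (Eventually.of_forall fun _ => norm_nonneg _) ?_ (Eventually.of_forall hpt)
          exact (hji.integral_prod_left).const_mul _
      _ = 1 / Real.pi * ∫ p, ∫ z, ‖β (z - γ p)‖ ∂ν ∂μ := by
          rw [integral_const_mul, integral_integral_swap hji]
      _ ≤ 1 / Real.pi * ∫ p, (∫ z : ℂ, ‖β z‖) ∂μ := by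
          refine mul_le_mul_of_nonneg_left ?_ (by positivity)
          refine integral_mono_of_nonneg (f := fun p => ∫ z, ‖β (z - γ p)‖ ∂ν)
            (Eventually.of_forall fun p => integral_nonneg (f := fun z => ‖β (z - γ p)‖) fun _ => norm_nonneg _) (integrable_const (μ := μ) (∫ z : ℂ, ‖β z‖))
            (Eventually.of_forall fun p => ?_)
          have h1 : ∫ z, ‖β (z - γ p)‖ = ∫ z, ‖β z‖ := integral_sub_right_eq_self (fun z => ‖β z‖) (γ p)
          show ∫ z, ‖β (z - γ p)‖ ∂ν ≤ _
          rw [← h1]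
          exact setIntegral_le_integral (hβi.norm.comp_sub_right (γ p)) (Eventually.of_forall fun _ => norm_nonneg _)
      _ = 4 * ∫ z, ‖β z‖ := by
          rw [integral_const]
          have : μ.real univ = 2 * Real.pi * 2 := by
            rw [hμ, ← univ_prod_univ, measureReal_prod_prod]
            simp [Real.pi_pos.le]
          rw [this, smul_eq_mul]
          field_simp; ring

lemma cp_solve : ∀ u : ℂ → ℂ, ContDiff ℝ 2 u → ∃ F : ℂ → ℂ, Continuous F ∧
    DifferentiableOn ℂ F (Metric.ball 0 (1/2)) ∧
      ∫ z in Metric.ball (0:ℂ) (1/2), ‖F z - u z‖ ≤ 4 * ∫ z in Metric.ball (0:ℂ) 1, ‖cpDbar u z‖ := by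
  intro u hu
  have hfd : ContDiff ℝ 1 (fderiv ℝ u) := hu.fderiv_right (by norm_num)
  have hd : ContDiff ℝ 1 (cpDbar u) := by
    unfold cpDbar
    exact ((hfd.clm_apply contDiff_const).add (contDiff_const.mul (hfd.clm_apply contDiff_const))).div_const _
  let χ : ContDiffBump (0:ℂ) := ⟨1/2, 1, by norm_num, by norm_num⟩
  set β : ℂ → ℂ := fun z => (χ z : ℝ) • cpDbar u z with hβ
  have hβc : ContDiff ℝ 1 β := (χ.contDiff).smul hd
  have hz : ∀ z, 1 ≤ ‖z‖ → β z = 0 := by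
    intro z hz
    simp only [hβ]
    rw [χ.zero_of_le_dist (by simpa [χ] using hz), zero_smul]
  obtain ⟨v, hv, hv2, hv3⟩ := cp_solve0 β hβc hz
  refine ⟨fun z => u z - v z, hu.continuous.sub hv.continuous, ?_, ?_⟩
  · intro z hz
    refine DifferentiableAt.differentiableWithinAt ?_
    rw [Metric.mem_ball, dist_zero_right] at hz
    rw [differentiableAt_complex_iff_differentiableAt_real]
    have hud : DifferentiableAt ℝ u z := hu.differentiable (by norm_num) z
    refine ⟨hud.sub (hv z), ?_⟩
    have e1 := hv2 z (by linarith)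
    have e2 : β z = cpDbar u z := by
      simp only [hβ]
      rw [χ.one_of_mem_closedBall (by simpa [χ] using hz.le), one_smul]
    rw [e2] at e1
    unfold cpDbar at e1
    rw [show (fun z => u z - v z) = u - v from rfl, fderiv_sub hud (hv z)]
    simp only [sub_apply, smul_eq_mul]
    linear_combination (2 * Complex.I) * e1 - (fderiv ℝ v z Complex.I - fderiv ℝ u z Complex.I) * Complex.I_mul_I
  · have h1 : ∀ z, ‖u z - v z - u z‖ = ‖v z‖ := by
      intro z; rw [← norm_neg]; congr 1; ring
    simp_rw [h1]
    refine hv3.trans ?_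
    gcongr
    have h2 : ∫ z in Metric.ball (0:ℂ) 1, ‖β z‖ = ∫ z, ‖β z‖ := by
      refine setIntegral_eq_integral_of_forall_compl_eq_zero fun z hz' => ?_
      rw [hz z (by simpa using hz'), norm_zero]
    rw [← h2]
    refine setIntegral_mono_on ?_ ?_ measurableSet_ball ?_
    · exact (hβc.continuous.norm.continuousOn.integrableOn_compact (isCompact_closedBall (0:ℂ) 1)).mono_set Metric.ball_subset_closedBall
    · exact (hd.continuous.norm.continuousOn.integrableOn_compact (isCompact_closedBall (0:ℂ) 1)).mono_set Metric.ball_subset_closedBall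
    · intro z _
      simp only [hβ]
      rw [norm_smul, Real.norm_of_nonneg χ.nonneg]
      exact mul_le_of_le_one_left (norm_nonneg _) χ.le_one

lemma cp_ibp (χ Φ : ℂ → ℝ) (hχ : ContDiff ℝ 2 χ) (hc : HasCompactSupport χ) (hΦ : ContDiff ℝ 2 Φ)
    (e : ℂ) :
    ∫ z, χ z * fderiv ℝ (fun w => fderiv ℝ Φ w e) z e
      = ∫ z, Φ z * fderiv ℝ (fun w => fderiv ℝ χ w e) z e := by
  have h1 : ContDiff ℝ 1 (fun w => fderiv ℝ Φ w e) :=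
    (hΦ.fderiv_right (by norm_num)).clm_apply contDiff_const
  have h2 : ContDiff ℝ 1 (fun w => fderiv ℝ χ w e) :=
    (hχ.fderiv_right (by norm_num)).clm_apply contDiff_const
  have h3 : Continuous (fun z => fderiv ℝ (fun w => fderiv ℝ Φ w e) z e) :=
    (h1.continuous_fderiv one_ne_zero).clm_apply continuous_const
  have h4 : Continuous (fun z => fderiv ℝ (fun w => fderiv ℝ χ w e) z e) :=
    (h2.continuous_fderiv one_ne_zero).clm_apply continuous_const
  have c2 : HasCompactSupport (fun w => fderiv ℝ χ w e) := hc.fderiv_apply (𝕜 := ℝ) e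
  have c4 : HasCompactSupport (fun z => fderiv ℝ (fun w => fderiv ℝ χ w e) z e) := c2.fderiv_apply (𝕜 := ℝ) e
  rw [integral_mul_fderiv_eq_neg_fderiv_mul_of_integrable]
  rotate_left
  · exact (h2.continuous.mul h1.continuous).integrable_of_hasCompactSupport c2.mul_right
  · exact (hχ.continuous.mul h3).integrable_of_hasCompactSupport hc.mul_right
  · exact (hχ.continuous.mul h1.continuous).integrable_of_hasCompactSupport hc.mul_right
  · exact fun x _ => hχ.differentiable (by norm_num) x
  · exact fun x _ => h1.differentiable (by norm_num) x
  have : ∫ z, Φ z * fderiv ℝ (fun w => fderiv ℝ χ w e) z e = - ∫ z, fderiv ℝ Φ z e * fderiv ℝ χ z e := by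
    rw [integral_mul_fderiv_eq_neg_fderiv_mul_of_integrable]
    · exact (h1.continuous.mul h2.continuous).integrable_of_hasCompactSupport c2.mul_left
    · exact (hΦ.continuous.mul h4).integrable_of_hasCompactSupport c4.mul_left
    · exact (hΦ.continuous.mul h2.continuous).integrable_of_hasCompactSupport c2.mul_left
    · exact fun x _ => hΦ.differentiable (by norm_num) x
    · exact fun x _ => h2.differentiable (by norm_num) x
  rw [this]
  congr 1
  congr 1; ext z; ring

lemma cp_line (G : ℂ → ℂ) (hG : Differentiable ℂ G) (w e : ℂ) :
    HasDerivAt (fun t : ℝ => G (w + t • e)) (deriv G w * e) 0 := by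
  have h1 : HasDerivAt (fun t : ℝ => w + t • e) e 0 := by
    have := ((hasDerivAt_id (0:ℝ)).smul_const e).const_add w
    exact this.congr_deriv (by simp)
  have h2 : HasDerivAt G (deriv G w) (w + (0:ℝ) • e) := by
    rw [zero_smul, add_zero]; exact (hG w).hasDerivAt
  exact h2.scomp_of_eq (0:ℝ) h1 rfl |>.congr_deriv (by simp [mul_comm])

lemma cp_lap (G : ℂ → ℂ) (hG : Differentiable ℂ G) (r : ℝ) (hr : 0 < r) :
    ContDiff ℝ 2 (fun w => Real.log (‖G w‖^2 + r^2)) ∧ ∀ z,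
    fderiv ℝ (fun w => fderiv ℝ (fun w => Real.log (‖G w‖^2 + r^2)) w 1) z 1 +
    fderiv ℝ (fun w => fderiv ℝ (fun w => Real.log (‖G w‖^2 + r^2)) w Complex.I) z Complex.I
     = 4 * (‖deriv G z‖^2 * r^2 / (‖G z‖^2 + r^2)^2) := by
  have hpos : ∀ w, 0 < ‖G w‖^2 + r^2 := fun w => by positivity
  have hΦ : ContDiff ℝ 2 (fun w => Real.log (‖G w‖^2 + r^2)) := by
    have hGc : ContDiff ℝ 2 G := (hG.contDiff (n := 2)).restrict_scalars ℝ
    exact ((hGc.norm_sq ℝ).add contDiff_const).log (fun w => (hpos w).ne')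
  have hG1 : Differentiable ℂ (deriv G) := by
    have := hG.differentiableOn.deriv isOpen_univ
    rwa [differentiableOn_univ] at this
  refine ⟨hΦ, fun z => ?_⟩
  have hlineS : ∀ w e : ℂ, HasDerivAt (fun t : ℝ => ‖G (w + t • e)‖^2 + r^2)
      (2 * inner ℝ (G w) (deriv G w * e)) 0 := by
    intro w e
    have := (cp_line G hG w e).norm_sq.add_const (r^2)
    exact this.congr_deriv (by simp)
  have hP : ∀ w e : ℂ, fderiv ℝ (fun w => Real.log (‖G w‖^2 + r^2)) w e =
      2 * inner ℝ (G w) (deriv G w * e) / (‖G w‖^2 + r^2) := by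
    intro w e
    rw [← (hΦ.differentiable (by norm_num) w).lineDeriv_eq_fderiv, lineDeriv]
    have := (hlineS w e).log (by have := hpos w; simpa using this.ne')
    rw [this.deriv]; simp
  have hP2 : ∀ e : ℂ, fderiv ℝ (fun w => fderiv ℝ (fun w => Real.log (‖G w‖^2 + r^2)) w e) z e =
      ((2 * (inner ℝ (G z) (deriv (deriv G) z * e * e) + inner ℝ (deriv G z * e) (deriv G z * e))) * (‖G z‖^2 + r^2)
        - (2 * inner ℝ (G z) (deriv G z * e)) * (2 * inner ℝ (G z) (deriv G z * e))) / (‖G z‖^2 + r^2)^2 := by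
    intro e
    have h1 : ContDiff ℝ 1 (fun w => fderiv ℝ (fun w => Real.log (‖G w‖^2 + r^2)) w e) :=
      (hΦ.fderiv_right (by norm_num)).clm_apply contDiff_const
    rw [← (h1.differentiable (by norm_num) z).lineDeriv_eq_fderiv, lineDeriv]
    simp only [hP]
    have hn := ((cp_line G hG z e).inner ℝ ((cp_line _ hG1 z e).mul_const e)).const_mul 2
    have := hn.div (hlineS z e) (by have := hpos z; simpa using this.ne')
    have h2 := this.deriv
    simp only [zero_smul, add_zero] at h2
    exact h2
  rw [hP2, hP2, ← add_div]
  have e1 : deriv (deriv G) z * Complex.I * Complex.I = - (deriv (deriv G) z * 1 * 1) := by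
    linear_combination deriv (deriv G) z * Complex.I_mul_I
  rw [e1, inner_neg_right]
  have e2 : inner ℝ (deriv G z * 1) (deriv G z * 1) = ‖deriv G z‖^2 := by
    rw [real_inner_self_eq_norm_sq, mul_one]
  have e3 : inner ℝ (deriv G z * Complex.I) (deriv G z * Complex.I) = ‖deriv G z‖^2 := by
    rw [real_inner_self_eq_norm_sq, norm_mul, Complex.norm_I, mul_one]
  have e4 : inner ℝ (G z) (deriv G z * 1) ^ 2 + inner ℝ (G z) (deriv G z * Complex.I) ^ 2
      = ‖G z‖^2 * ‖deriv G z‖^2 := by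
    rw [← Complex.normSq_eq_norm_sq, ← Complex.normSq_eq_norm_sq]
    simp [Complex.inner, Complex.normSq_apply]; ring
  rw [e2, e3, ← mul_div_assoc]
  congr 1
  linear_combination (-4) * e4

lemma cp_energy : ∃ C0 : ℝ, 0 < C0 ∧ ∀ K : ℝ, 1 ≤ K → ∀ G : ℂ → ℂ, Differentiable ℂ G →
    (∀ z ∈ Metric.closedBall (0:ℂ) 2, ‖G z‖ ≤ K) → ∀ r : ℝ, 0 < r → r ≤ 1 →
    ∫ z in Metric.ball (0:ℂ) 1, ‖deriv G z‖^2 * r^2 / (‖G z‖^2 + r^2)^2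
      ≤ C0 * (Real.log (K^2+1) + 2 * Real.log (1/r)) := by
  let χ : ContDiffBump (0:ℂ) := ⟨1, 2, by norm_num, by norm_num⟩
  have hχ : ContDiff ℝ 2 χ := χ.contDiff
  have hc : HasCompactSupport χ := χ.hasCompactSupport
  set D : ℂ → ℝ := fun z => fderiv ℝ (fun w => fderiv ℝ χ w 1) z 1 +
    fderiv ℝ (fun w => fderiv ℝ χ w Complex.I) z Complex.I with hD
  have hd : ∀ e : ℂ, Continuous (fun z => fderiv ℝ (fun w => fderiv ℝ χ w e) z e) ∧
      HasCompactSupport (fun z => fderiv ℝ (fun w => fderiv ℝ χ w e) z e) := by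
    intro e
    have h2 : ContDiff ℝ 1 (fun w => fderiv ℝ χ w e) :=
      (hχ.fderiv_right (by norm_num)).clm_apply contDiff_const
    have c2 : HasCompactSupport (fun w => fderiv ℝ χ w e) := hc.fderiv_apply (𝕜 := ℝ) e
    exact ⟨(h2.continuous_fderiv one_ne_zero).clm_apply continuous_const, c2.fderiv_apply (𝕜 := ℝ) e⟩
  have hDc : Continuous D := (hd 1).1.add (hd Complex.I).1
  have hDs : HasCompactSupport D := (hd 1).2.add (hd Complex.I).2
  have hDi : Integrable D := hDc.integrable_of_hasCompactSupport hDs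
  have hD0 : ∀ z, z ∉ Metric.closedBall (0:ℂ) 2 → D z = 0 := by
    intro z hz
    have hev : (χ : ℂ → ℝ) =ᶠ[nhds z] fun _ => 0 := by
      filter_upwards [Metric.isClosed_closedBall.isOpen_compl.mem_nhds hz] with w hw
      refine χ.zero_of_le_dist ?_
      simp only [mem_compl_iff, Metric.mem_closedBall, not_le] at hw
      exact hw.le
    have h1 : ∀ e : ℂ, (fun w => fderiv ℝ χ w e) =ᶠ[nhds z] fun _ => 0 := by
      intro e
      filter_upwards [hev.fderiv (𝕜 := ℝ)] with w hw
      rw [hw]; simp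
    simp only [hD]
    rw [(h1 1).fderiv_eq, (h1 Complex.I).fderiv_eq]; simp
  have hDn : 0 ≤ ∫ z, |D z| := integral_nonneg fun _ => abs_nonneg _
  refine ⟨(∫ z, |D z|) + 1, by linarith, ?_⟩
  intro K hK G hG hGK r hr hr1
  obtain ⟨hΦ, hlap⟩ := cp_lap G hG r hr
  have hpos : ∀ w, 0 < ‖G w‖^2 + r^2 := fun w => by positivity
  set Φ : ℂ → ℝ := fun w => Real.log (‖G w‖^2 + r^2) with hΦd
  set X : ℂ → ℝ := fun z => ‖deriv G z‖^2 * r^2 / (‖G z‖^2 + r^2)^2 with hX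
  have hX0 : ∀ z, 0 ≤ X z := fun z => by simp only [hX]; positivity
  set B := Real.log (K^2+1) + 2 * Real.log (1/r) with hB
  have hlk : 0 ≤ Real.log (K^2+1) := Real.log_nonneg (by nlinarith)
  have hlr : 0 ≤ Real.log (1/r) := Real.log_nonneg (by rw [le_div_iff₀ hr]; linarith)
  have hB0 : 0 ≤ B := by rw [hB]; positivity
  have hG1 : Differentiable ℂ (deriv G) := by
    have := hG.differentiableOn.deriv isOpen_univ
    rwa [differentiableOn_univ] at this
  have hXc : Continuous X := by
    simp only [hX]
    exact ((hG1.continuous.norm.pow 2).mul continuous_const).div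
      (((hG.continuous.norm.pow 2).add continuous_const).pow 2) (fun z => (pow_pos (hpos z) 2).ne')
  have hχX : Integrable (fun z => χ z * X z) :=
    (hχ.continuous.mul hXc).integrable_of_hasCompactSupport hc.mul_right
  have hd' : ∀ e : ℂ, Continuous (fun z => fderiv ℝ (fun w => fderiv ℝ Φ w e) z e) := by
    intro e
    have h2 : ContDiff ℝ 1 (fun w => fderiv ℝ Φ w e) :=
      (hΦ.fderiv_right (by norm_num)).clm_apply contDiff_const
    exact (h2.continuous_fderiv one_ne_zero).clm_apply continuous_const
  have step1 : ∫ z in Metric.ball (0:ℂ) 1, X z ≤ ∫ z, χ z * X z := by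
    have : ∫ z in Metric.ball (0:ℂ) 1, X z = ∫ z in Metric.ball (0:ℂ) 1, χ z * X z := by
      refine setIntegral_congr_fun measurableSet_ball fun z hz => ?_
      show X z = χ z * X z
      rw [χ.one_of_mem_closedBall (Metric.ball_subset_closedBall hz), one_mul]
    rw [this]
    exact setIntegral_le_integral hχX (Eventually.of_forall fun z => mul_nonneg χ.nonneg (hX0 z))
  have step2 : 4 * ∫ z, χ z * X z = ∫ z, Φ z * D z := by
    have a1 := cp_ibp χ Φ hχ hc hΦ 1
    have a2 := cp_ibp χ Φ hχ hc hΦ Complex.I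
    rw [← integral_const_mul]
    have b1 : ∀ z, 4 * (χ z * X z) = χ z * fderiv ℝ (fun w => fderiv ℝ Φ w 1) z 1 +
        χ z * fderiv ℝ (fun w => fderiv ℝ Φ w Complex.I) z Complex.I := by
      intro z
      have := hlap z
      rw [← mul_add, this]; ring
    have b2 : ∀ z, Φ z * D z = Φ z * fderiv ℝ (fun w => fderiv ℝ χ w 1) z 1 +
        Φ z * fderiv ℝ (fun w => fderiv ℝ χ w Complex.I) z Complex.I := by
      intro z
      simp only [hD]; ring
    simp_rw [b1, b2]
    rw [integral_add, integral_add, a1, a2]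
    · exact (hΦ.continuous.mul (hd 1).1).integrable_of_hasCompactSupport (hd 1).2.mul_left
    · exact (hΦ.continuous.mul (hd Complex.I).1).integrable_of_hasCompactSupport (hd Complex.I).2.mul_left
    · exact (hχ.continuous.mul (hd' 1)).integrable_of_hasCompactSupport hc.mul_right
    · exact (hχ.continuous.mul (hd' Complex.I)).integrable_of_hasCompactSupport hc.mul_right
  have step3 : ∫ z, Φ z * D z ≤ B * ∫ z, |D z| := by
    rw [← integral_const_mul]
    refine integral_mono ?_ (hDi.abs.const_mul _) ?_
    · exact (hΦ.continuous.mul hDc).integrable_of_hasCompactSupport hDs.mul_left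
    intro z
    show Φ z * D z ≤ B * |D z|
    by_cases hz : z ∈ Metric.closedBall (0:ℂ) 2
    · have h1 : |Φ z| ≤ B := by
        have hk := hGK z hz
        have h2 : Φ z ≤ Real.log (K^2+1) := by
          apply Real.log_le_log (hpos z)
          have := norm_nonneg (G z)
          nlinarith
        have h3 : -(2 * Real.log (1/r)) ≤ Φ z := by
          have : -(2 * Real.log (1/r)) = Real.log (r^2) := by
            rw [Real.log_pow, one_div, Real.log_inv]; push_cast; ring
          rw [this]
          apply Real.log_le_log (by positivity)
          have := sq_nonneg ‖G z‖
          linarith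
        rw [abs_le]; constructor <;> linarith
      calc Φ z * D z ≤ |Φ z * D z| := le_abs_self _
        _ = |Φ z| * |D z| := abs_mul _ _
        _ ≤ _ := by gcongr
    · rw [hD0 z hz]; simp
  nlinarith

lemma cp_circle (D : ℂ → ℂ) (hD : Continuous D) (z : ℂ) (a : ℝ)
    (hd : DifferentiableOn ℂ D (Metric.ball z a)) (r : ℝ) (hr : 0 < r) (hra : r < a) :
    2 * Real.pi * ‖D z‖ ≤ ∫ θ in Ioo (-Real.pi) Real.pi, ‖D (z + r * (Real.cos θ + Real.sin θ * Complex.I))‖ := by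
  have h1 : DiffContOnCl ℂ D (Metric.ball z |r|) :=
    ⟨hd.mono (Metric.ball_subset_ball (by rw [abs_of_pos hr]; exact hra.le)), hD.continuousOn⟩
  have h2 := h1.circleAverage
  rw [Real.circleAverage] at h2
  have h3 : ∫ θ in (0:ℝ)..(2*Real.pi), D (circleMap z r θ) =
      ∫ θ in (-Real.pi)..(Real.pi), D (circleMap z r θ) := by
    have hp : Function.Periodic (fun θ => D (circleMap z r θ)) (2 * Real.pi) := by
      intro θ; simp only [periodic_circleMap z r θ]
    have := hp.intervalIntegral_add_eq 0 (-Real.pi)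
    rw [zero_add] at this
    rw [this]; congr 1; ring
  rw [h3, intervalIntegral.integral_of_le (by linarith [Real.pi_pos]), integral_Ioc_eq_integral_Ioo] at h2
  have h4 : ∀ θ : ℝ, circleMap z r θ = z + r * (Real.cos θ + Real.sin θ * Complex.I) := by
    intro θ; rw [circleMap, cp_exp]
  simp_rw [h4] at h2
  rw [← h2, norm_smul, Real.norm_of_nonneg (by positivity), ← mul_assoc, mul_inv_cancel₀ (by positivity), one_mul]
  exact norm_integral_le_integral_norm _

lemma cp_area (D : ℂ → ℂ) (hD : Continuous D) (z : ℂ) (a : ℝ) (ha : 0 < a)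
    (hd : DifferentiableOn ℂ D (Metric.ball z a)) :
    Real.pi * a^2 * ‖D z‖ ≤ ∫ w in Metric.ball z a, ‖D w‖ := by
  set f : ℂ → ℝ := (Metric.ball (0:ℂ) a).indicator (fun w => ‖D (z + w)‖) with hf
  have h0 : ∫ w in Metric.ball z a, ‖D w‖ = ∫ w, f w := by
    rw [← integral_indicator measurableSet_ball, ← integral_add_left_eq_self _ z]
    congr 1; ext w
    simp only [hf, indicator, Metric.mem_ball, dist_eq_norm, add_sub_cancel_left, sub_zero]
  rw [h0, ← Complex.integral_comp_polarCoord_symm]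
  set g : ℝ × ℝ → ℝ := fun p => p.1 * ‖D (z + p.1 * (Real.cos p.2 + Real.sin p.2 * Complex.I))‖ with hg
  have hgc : Continuous g := by
    simp only [hg]
    refine continuous_fst.mul (hD.comp ?_).norm
    fun_prop
  have h1 : ∫ p in polarCoord.target, p.1 • f (Complex.polarCoord.symm p)
      = ∫ p in Ioo 0 a ×ˢ Ioo (-Real.pi) Real.pi, g p := by
    have hsub : Ioo 0 a ×ˢ Ioo (-Real.pi) Real.pi ⊆ polarCoord.target := by
      rw [polarCoord_target]
      exact Set.prod_mono Ioo_subset_Ioi_self le_rfl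
    have hn : ∀ p : ℝ × ℝ, 0 < p.1 → ‖(p.1:ℂ) * (Real.cos p.2 + Real.sin p.2 * Complex.I)‖ = p.1 := by
      intro p hp
      rw [norm_mul, ← cp_exp, Complex.norm_exp_ofReal_mul_I, mul_one, Complex.norm_real, Real.norm_of_nonneg hp.le]
    rw [setIntegral_eq_of_subset_of_forall_sdiff_eq_zero polarCoord.open_target.measurableSet hsub]
    · refine setIntegral_congr_fun (measurableSet_Ioo.prod measurableSet_Ioo) fun p hp => ?_
      simp only [Complex.polarCoord_symm_apply, hg, smul_eq_mul]
      congr 1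
      rw [hf, indicator_of_mem]
      rw [Metric.mem_ball, dist_zero_right, hn p hp.1.1]; exact hp.1.2
    · intro p hp
      have hp1 : 0 < p.1 := by have := hp.1; rw [polarCoord_target] at this; exact this.1
      have hp2 : a ≤ p.1 := by
        by_contra hlt
        have h3 := hp.1
        rw [polarCoord_target] at h3
        exact hp.2 ⟨⟨hp1, not_le.mp hlt⟩, h3.2⟩
      rw [Complex.polarCoord_symm_apply, hf, indicator_of_notMem, smul_zero]
      rw [Metric.mem_ball, dist_zero_right, hn p hp1]; exact not_lt.mpr hp2
  rw [h1, Measure.volume_eq_prod, setIntegral_prod]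
  swap
  · refine IntegrableOn.mono_set (t := Icc 0 a ×ˢ Icc (-Real.pi) Real.pi) ?_ (Set.prod_mono Ioo_subset_Icc_self Ioo_subset_Icc_self)
    exact hgc.continuousOn.integrableOn_compact (isCompact_Icc.prod isCompact_Icc)
  have h2 : Real.pi * a^2 * ‖D z‖ = ∫ r in Ioo 0 a, (2 * Real.pi * ‖D z‖) * r := by
    rw [integral_const_mul, ← integral_Ioc_eq_integral_Ioo, ← intervalIntegral.integral_of_le ha.le, integral_id]
    ring
  rw [h2]
  refine setIntegral_mono_on ?_ ?_ measurableSet_Ioo ?_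
  · exact ((continuous_const.mul continuous_id).continuousOn.integrableOn_compact (isCompact_Icc (a := 0) (b := a))).mono_set Ioo_subset_Icc_self
  · have : IntegrableOn g (Ioo 0 a ×ˢ Ioo (-Real.pi) Real.pi) (volume.prod volume) := by
      refine IntegrableOn.mono_set (t := Icc 0 a ×ˢ Icc (-Real.pi) Real.pi) ?_ (Set.prod_mono Ioo_subset_Icc_self Ioo_subset_Icc_self)
      exact hgc.continuousOn.integrableOn_compact (isCompact_Icc.prod isCompact_Icc)
    rw [IntegrableOn, ← Measure.prod_restrict] at this
    exact this.integral_prod_left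
  · intro r hr
    simp only [hg]
    rw [integral_const_mul, mul_comm]
    exact mul_le_mul_of_nonneg_left (cp_circle D hD z a hd r hr.1 hr.2) hr.1.le

lemma cp_pow_sub (a b : ℂ) (M : ℝ) (hM : 1 ≤ M) (ha : ‖a‖ ≤ M) (hb : ‖b‖ ≤ M) (j : ℕ) :
    ‖a^j - b^j‖ ≤ j * M^j * ‖a - b‖ := by
  induction j with
  | zero => simp
  | succ j ih =>
    have e : a^(j+1) - b^(j+1) = a * (a^j - b^j) + b^j * (a - b) := by ring
    rw [e]
    refine (norm_add_le _ _).trans ?_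
    rw [norm_mul, norm_mul, norm_pow]
    have h1 : ‖a‖ * ‖a^j - b^j‖ ≤ M * (j * M^j * ‖a - b‖) := by gcongr
    have h2 : ‖b‖^j * ‖a-b‖ ≤ M^(j+1) * ‖a-b‖ := by
      gcongr
      calc ‖b‖^j ≤ M^j := by gcongr
        _ ≤ M^(j+1) := pow_le_pow_right₀ hM (by omega)
    push_cast
    calc _ ≤ M * (j * M^j * ‖a - b‖) + M^(j+1) * ‖a-b‖ := add_le_add h1 h2
      _ = _ := by ring

/-- The quasi quotient. -/
def cpU (G H : ℂ → ℂ) (r : ℝ) (z : ℂ) : ℂ :=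
  (starRingEnd ℂ (G z)) * H z / (starRingEnd ℂ (G z) * G z + ((r^2 : ℝ) : ℂ))

lemma cp_S (a : ℂ) (r : ℝ) : starRingEnd ℂ a * a + ((r^2 : ℝ) : ℂ) = ((‖a‖^2 + r^2 : ℝ) : ℂ) := by
  rw [mul_comm, Complex.mul_conj, Complex.normSq_eq_norm_sq]; push_cast; ring

lemma cp_S_ne (a : ℂ) (r : ℝ) (hr : 0 < r) : starRingEnd ℂ a * a + ((r^2 : ℝ) : ℂ) ≠ 0 := by
  rw [cp_S]
  have : 0 < ‖a‖^2 + r^2 := by positivity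
  exact_mod_cast this.ne'

lemma cpU_contDiff (G H : ℂ → ℂ) (hG : Differentiable ℂ G) (hH : Differentiable ℂ H) (r : ℝ) (hr : 0 < r) :
    ContDiff ℝ 2 (cpU G H r) := by
  have hGc : ContDiff ℝ 2 G := (hG.contDiff (n := 2)).restrict_scalars ℝ
  have hHc : ContDiff ℝ 2 H := (hH.contDiff (n := 2)).restrict_scalars ℝ
  have hcj : ContDiff ℝ 2 (fun z => starRingEnd ℂ (G z)) := Complex.conjCLE.contDiff.comp hGc
  have h1 : ContDiff ℝ 2 (fun z => starRingEnd ℂ (G z) * G z + ((r^2 : ℝ) : ℂ)) := (hcj.mul hGc).add contDiff_const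
  have h2 : ContDiff ℝ 2 (fun z => (starRingEnd ℂ (G z)) * H z * (starRingEnd ℂ (G z) * G z + ((r^2 : ℝ) : ℂ))⁻¹) :=
    (hcj.mul hHc).mul (h1.inv (fun z => cp_S_ne _ r hr))
  have h3 : cpU G H r = fun z => (starRingEnd ℂ (G z)) * H z * (starRingEnd ℂ (G z) * G z + ((r^2 : ℝ) : ℂ))⁻¹ := by
    ext z; rw [cpU, div_eq_mul_inv]
  rw [h3]; exact h2

lemma cpU_dbar (G H : ℂ → ℂ) (hG : Differentiable ℂ G) (hH : Differentiable ℂ H) (r : ℝ) (hr : 0 < r) (z : ℂ) :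
    cpDbar (cpU G H r) z = starRingEnd ℂ (deriv G z) * H z * ((r^2 : ℝ) : ℂ) /
      (starRingEnd ℂ (G z) * G z + ((r^2 : ℝ) : ℂ))^2 := by
  have hu := cpU_contDiff G H hG hH r hr
  have hne := cp_S_ne (G z) r hr
  have hline : ∀ e : ℂ, fderiv ℝ (cpU G H r) z e =
     ((starRingEnd ℂ (deriv G z * e) * H z + starRingEnd ℂ (G z) * (deriv H z * e)) *
        (starRingEnd ℂ (G z) * G z + ((r^2 : ℝ) : ℂ)) -
      starRingEnd ℂ (G z) * H z * (starRingEnd ℂ (deriv G z * e) * G z + starRingEnd ℂ (G z) * (deriv G z * e))) /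
      (starRingEnd ℂ (G z) * G z + ((r^2 : ℝ) : ℂ))^2 := by
    intro e
    rw [← (hu.differentiable (by norm_num) z).lineDeriv_eq_fderiv, lineDeriv]
    have h1 := cp_line G hG z e
    have h2 := cp_line H hH z e
    have h3 : HasDerivAt (fun t : ℝ => starRingEnd ℂ (G (z + t • e))) (starRingEnd ℂ (deriv G z * e)) 0 :=
      (Complex.conjCLE.toContinuousLinearMap.hasFDerivAt.comp_hasDerivAt (0:ℝ) h1)
    have h4 := ((h3.mul h2).div ((h3.mul h1).add_const ((r^2 : ℝ) : ℂ)) (by simpa using hne)).deriv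
    simp only [zero_smul, add_zero, Pi.mul_apply] at h4
    exact h4
  unfold cpDbar
  rw [hline, hline]
  simp only [map_mul, map_one, Complex.conj_I]
  rw [div_eq_div_iff (by norm_num) (pow_ne_zero 2 hne)]
  field_simp
  generalize starRingEnd ℂ (G z) = c
  generalize starRingEnd ℂ (deriv G z) = d
  have := Complex.I_mul_I
  grind

lemma cp_ptwise (j : ℕ) (hj : 1 ≤ j) (K : ℝ) (hK : 1 ≤ K) : ∃ K1 : ℝ, 1 ≤ K1 ∧ ∀ (G H : ℂ) (q r : ℝ),
    0 < q → q ≤ 1 → r = q^(2*j) → ‖G‖ ≤ K → ‖H‖ ≤ K → ‖G^(j+1) - H^j‖ ≤ K * q^(2*j*(j+1)) →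
    ∀ u : ℂ, u = (starRingEnd ℂ G) * H / (starRingEnd ℂ G * G + ((r^2 : ℝ) : ℂ)) →
    ‖H‖ * r / (‖G‖^2 + r^2) ≤ (1+K) * q^2 ∧ ‖u‖ ≤ K1 ∧ ‖u^j - G‖ ≤ K1 * q^2 ∧ ‖u^(j+1) - H‖ ≤ K1 * q^2 := by
  set K0 : ℝ := (1+K)^2 with hK0
  set C2 : ℝ := j * K^j * (1+K) + K + (2 * (1+K) + 1) with hC2
  refine ⟨K0 * C2 + (1+K) + K0 + C2, by
    have : 0 ≤ C2 := by rw [hC2]; positivity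
    have : 1 ≤ K0 := by rw [hK0]; nlinarith
    nlinarith, ?_⟩
  intro G H q r hq hq1 hr hG hH hGH u hu
  have hr0 : 0 < r := by rw [hr]; positivity
  have hr1 : r ≤ 1 := by rw [hr]; exact pow_le_one₀ hq.le hq1
  have hS0 : 0 < ‖G‖^2 + r^2 := by positivity
  set s : ℝ := Real.sqrt (‖G‖^2 + r^2) with hs
  have hs2 : s^2 = ‖G‖^2 + r^2 := Real.sq_sqrt hS0.le
  have hs0 : 0 < s := Real.sqrt_pos.mpr hS0
  have hrs : r ≤ s := by
    refine le_of_pow_le_pow_left₀ (n := 2) two_ne_zero hs0.le ?_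
    rw [hs2]; nlinarith [sq_nonneg ‖G‖]
  have hGs : ‖G‖ ≤ s := by
    refine le_of_pow_le_pow_left₀ (n := 2) two_ne_zero hs0.le ?_
    rw [hs2]; nlinarith
  have hsle : s ≤ ‖G‖ + r := by
    refine le_of_pow_le_pow_left₀ (n := 2) two_ne_zero (by positivity) ?_
    rw [hs2]; nlinarith [norm_nonneg G]
  have hrj : q^(2*j*(j+1)) = r^(j+1) := by rw [hr, ← pow_mul]
  rw [hrj] at hGH
  have hHj : ‖H‖^j ≤ (1+K) * s^(j+1) := by
    have h1 : ‖H^j‖ ≤ ‖G^(j+1)‖ + ‖G^(j+1) - H^j‖ := by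
      have := norm_sub_norm_le (H^j) (G^(j+1))
      rw [norm_sub_rev] at this; linarith
    rw [norm_pow, norm_pow] at h1
    have h2 : ‖G‖^(j+1) ≤ s^(j+1) := by gcongr
    have h3 : K * r^(j+1) ≤ K * s^(j+1) := by gcongr
    linarith
  have hq2 : q^(2*j) = (q^2)^j := by rw [pow_mul]
  have hrq2 : r ≤ q^2 := by
    rw [hr, hq2]
    exact pow_le_of_le_one (by positivity) (pow_le_one₀ hq.le hq1) (by omega)
  -- main bound
  have hA : ‖H‖ * r / (‖G‖^2 + r^2) ≤ (1+K) * q^2 := by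
    rw [← hs2]
    refine le_of_pow_le_pow_left₀ (n := j) (by omega) (by positivity) ?_
    have h1 : (‖H‖ * r / s^2)^j ≤ (1+K) * r := by
      rw [div_pow, mul_pow, div_le_iff₀ (by positivity)]
      obtain ⟨i, rfl⟩ : ∃ i, j = i + 1 := ⟨j - 1, by omega⟩
      calc ‖H‖^(i+1) * r^(i+1) ≤ ((1+K) * s^(i+1+1)) * (r * s^i) := by
            rw [pow_succ' r]
            gcongr
        _ = _ := by ring
    refine h1.trans ?_
    rw [mul_pow, hr, hq2]
    gcongr
    exact le_self_pow₀ (by linarith) (by omega)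
  have huG : u * G - H = - (H * ((r^2 : ℝ) : ℂ) / ((‖G‖^2 + r^2 : ℝ) : ℂ)) := by
    rw [hu, ← cp_S]
    have := cp_S_ne G r hr0
    field_simp
    ring
  have huGn : ‖u * G - H‖ ≤ (1+K) * q^2 * r := by
    rw [huG, norm_neg, norm_div, norm_mul, Complex.norm_real, Complex.norm_real, Real.norm_of_nonneg (by positivity),
      Real.norm_of_nonneg hS0.le]
    calc ‖H‖ * r^2 / (‖G‖^2 + r^2) = ‖H‖ * r / (‖G‖^2 + r^2) * r := by ring
      _ ≤ _ := by gcongr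
  have hun : ‖u‖ = ‖G‖ * ‖H‖ / s^2 := by
    rw [hu, cp_S, norm_div, norm_mul, Complex.norm_real, Real.norm_of_nonneg hS0.le, RCLike.norm_conj, hs2]
  have hus : ‖u‖ ≤ ‖H‖ / s := by
    rw [hun, div_le_div_iff₀ (by positivity) hs0]
    have h5 := mul_le_mul_of_nonneg_right hGs (mul_nonneg (norm_nonneg H) hs0.le)
    calc ‖G‖ * ‖H‖ * s = ‖G‖ * (‖H‖ * s) := by ring
      _ ≤ s * (‖H‖ * s) := h5
      _ = _ := by ring
  have huj : ‖u‖^j ≤ (1+K) * s := by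
    calc ‖u‖^j ≤ (‖H‖ / s)^j := by gcongr
      _ = ‖H‖^j / s^j := div_pow _ _ _
      _ ≤ _ := by
        rw [div_le_iff₀ (by positivity)]
        calc _ ≤ _ := hHj
          _ = _ := by ring
  have hK01 : 1 ≤ K0 := by rw [hK0]; nlinarith
  have huK : ‖u‖ ≤ K0 := by
    refine le_of_pow_le_pow_left₀ (n := j) (by omega) (by positivity) ?_
    calc ‖u‖^j ≤ (1+K) * s := huj
      _ ≤ K0 := by rw [hK0]; nlinarith
      _ ≤ K0^j := le_self_pow₀ hK01 (by omega)
  have hC2p : 0 ≤ C2 := by rw [hC2]; positivity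
  have hujG : ‖u^j - G‖ ≤ C2 * q^2 := by
    by_cases hGq : q^2 ≤ ‖G‖
    · have hGp : 0 < ‖G‖ := lt_of_lt_of_le (by positivity) hGq
      have h1 : ‖G‖^j * ‖u^j - G‖ ≤ (j * K^j * (1+K) + K) * q^2 * r := by
        have e : G^j * (u^j - G) = ((u*G)^j - H^j) - (G^(j+1) - H^j) := by ring
        rw [← norm_pow, ← norm_mul, e]
        refine (norm_sub_le _ _).trans ?_
        have h2 : ‖u * G‖ ≤ K := by
          rw [norm_mul, hun]
          refine le_trans ?_ hH
          rw [div_mul_eq_mul_div, div_le_iff₀ (by positivity)]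
          have h5 := mul_le_mul hGs hGs (norm_nonneg _) hs0.le
          calc ‖G‖ * ‖H‖ * ‖G‖ = ‖H‖ * (‖G‖ * ‖G‖) := by ring
            _ ≤ ‖H‖ * (s * s) := mul_le_mul_of_nonneg_left h5 (norm_nonneg H)
            _ = _ := by ring
        have h3 := cp_pow_sub (u*G) H K hK h2 hH j
        have h4 : j * K^j * ‖u * G - H‖ ≤ j * K^j * ((1+K) * q^2 * r) := by gcongr
        have h5 : K * r^(j+1) ≤ K * (q^2 * r) := by
          rw [pow_succ]
          gcongr
          exact (pow_le_of_le_one hr0.le hr1 (by omega)).trans hrq2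
        calc _ ≤ j * K^j * ((1+K) * q^2 * r) + K * (q^2 * r) := add_le_add (h3.trans h4) (hGH.trans h5)
          _ = _ := by ring
      have h2 : r ≤ ‖G‖^j := by rw [hr, hq2]; gcongr
      have h3 : ‖G‖^j * ‖u^j - G‖ ≤ ‖G‖^j * ((j * K^j * (1+K) + K) * q^2) := by
        refine h1.trans ?_
        rw [mul_comm]; gcongr
      have h4 := le_of_mul_le_mul_left h3 (by positivity)
      refine h4.trans ?_
      gcongr
      rw [hC2]; linarith
    · push Not at hGq
      refine (norm_sub_le _ _).trans ?_
      rw [norm_pow]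
      have h1 : (1+K) * s ≤ (1+K) * (2 * q^2) := by gcongr; linarith
      have h2 : 0 ≤ (j * K^j * (1+K) + K) * q^2 := by positivity
      calc _ ≤ (1+K) * (2 * q^2) + q^2 := add_le_add (huj.trans h1) hGq.le
        _ ≤ (j * K^j * (1+K) + K) * q^2 + ((1+K) * (2 * q^2) + q^2) := by linarith
        _ = _ := by rw [hC2]; ring
  refine ⟨hA, ?_, ?_, ?_⟩
  · have := mul_nonneg (by positivity : 0 ≤ K0) hC2p
    linarith
  · refine hujG.trans ?_
    gcongr
    have := mul_nonneg (by positivity : 0 ≤ K0) hC2p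
    linarith
  · have e : u^(j+1) - H = u * (u^j - G) + (u * G - H) := by ring
    rw [e]
    refine (norm_add_le _ _).trans ?_
    rw [norm_mul]
    have h1 : ‖u‖ * ‖u^j - G‖ ≤ K0 * (C2 * q^2) := by gcongr
    have h2 : (1+K) * q^2 * r ≤ (1+K) * q^2 := mul_le_of_le_one_right (by positivity) hr1
    have h3 : 0 ≤ (K0 + C2) * q^2 := by positivity
    calc _ ≤ K0 * (C2 * q^2) + (1+K) * q^2 := add_le_add h1 (huGn.trans h2)
      _ ≤ K0 * (C2 * q^2) + (1+K) * q^2 + (K0 + C2) * q^2 := by linarith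
      _ = _ := by ring

lemma cp_qlog (q : ℝ) (hq : 0 < q) (hq1 : q ≤ 1) : q^2 * Real.log (1/q) ≤ q := by
  have h := Real.log_le_self (by positivity : 0 ≤ 1/q)
  have : q^2 * (1/q) = q := by field_simp
  calc _ ≤ q^2 * (1/q) := by gcongr
    _ = q := this

lemma cp_dbar_int (j : ℕ) (hj : 1 ≤ j) (K : ℝ) (hK : 1 ≤ K) : ∃ C : ℝ, 1 ≤ C ∧
    ∀ G H : ℂ → ℂ, Differentiable ℂ G → Differentiable ℂ H → ∀ q : ℝ, 0 < q → q ≤ 1 →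
    (∀ z ∈ Metric.closedBall (0:ℂ) 2, ‖G z‖ ≤ K ∧ ‖H z‖ ≤ K ∧ ‖(G z)^(j+1) - (H z)^j‖ ≤ K * q^(2*j*(j+1))) →
    ∫ z in Metric.ball (0:ℂ) 1, ‖cpDbar (cpU G H (q^(2*j))) z‖ ≤ C * q := by
  obtain ⟨K1, hK1, hpt⟩ := cp_ptwise j hj K hK
  obtain ⟨C0, hC0, hen⟩ := cp_energy
  refine ⟨(1+K) * (1 + Real.pi + C0 * (Real.log (K^2+1) + 4 * j)), ?_, ?_⟩
  · have hlk : 0 ≤ Real.log (K^2+1) := Real.log_nonneg (by nlinarith)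
    have : 0 ≤ C0 * (Real.log (K^2+1) + 4 * j) := by positivity
    nlinarith [Real.pi_pos]
  intro G H hG hH q hq hq1 hb
  have hlk : 0 ≤ Real.log (K^2+1) := Real.log_nonneg (by nlinarith)
  set r := q^(2*j) with hr
  have hr0 : 0 < r := by positivity
  have hr1 : r ≤ 1 := pow_le_one₀ hq.le hq1
  set X : ℂ → ℝ := fun z => ‖deriv G z‖^2 * r^2 / (‖G z‖^2 + r^2)^2 with hX
  have hE := hen K hK G hG (fun z hz => (hb z hz).1) r hr0 hr1
  have hpos : ∀ w, 0 < ‖G w‖^2 + r^2 := fun w => by positivity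
  have hG1 : Differentiable ℂ (deriv G) := by
    have := hG.differentiableOn.deriv isOpen_univ
    rwa [differentiableOn_univ] at this
  have hXc : Continuous X := by
    simp only [hX]
    exact ((hG1.continuous.norm.pow 2).mul continuous_const).div
      (((hG.continuous.norm.pow 2).add continuous_const).pow 2) (fun z => (pow_pos (hpos z) 2).ne')
  have hXi : IntegrableOn X (Metric.ball (0:ℂ) 1) :=
    (hXc.continuousOn.integrableOn_compact (isCompact_closedBall (0:ℂ) 1)).mono_set Metric.ball_subset_closedBall
  have h1i : IntegrableOn (fun _ => (1:ℝ)) (Metric.ball (0:ℂ) 1) :=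
    (continuous_const.continuousOn.integrableOn_compact (isCompact_closedBall (0:ℂ) 1)).mono_set Metric.ball_subset_closedBall
  have hptw : ∀ z ∈ Metric.ball (0:ℂ) 1, ‖cpDbar (cpU G H r) z‖ ≤ ((1+K) * q^2) * (1 + X z) := by
    intro z hz
    have hz2 : z ∈ Metric.closedBall (0:ℂ) 2 := Metric.ball_subset_closedBall (Metric.ball_subset_ball (by norm_num) hz)
    obtain ⟨b1, b2, b3⟩ := hb z hz2
    have hA := (hpt (G z) (H z) q r hq hq1 hr b1 b2 b3 _ rfl).1
    rw [cpU_dbar G H hG hH r hr0, cp_S, norm_div, norm_mul, norm_mul, norm_pow, Complex.norm_real, Complex.norm_real,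
      Real.norm_of_nonneg (hpos z).le, Real.norm_of_nonneg (by positivity), RCLike.norm_conj]
    have hy : ‖deriv G z‖ * r / (‖G z‖^2 + r^2) ≤ 1 + X z := by
      have e : X z = (‖deriv G z‖ * r / (‖G z‖^2 + r^2))^2 := by
        simp only [hX]; rw [div_pow, mul_pow]
      rw [e]
      nlinarith [sq_nonneg (‖deriv G z‖ * r / (‖G z‖^2 + r^2) - 1), sq_nonneg (‖deriv G z‖ * r / (‖G z‖^2 + r^2))]
    calc ‖deriv G z‖ * ‖H z‖ * r^2 / (‖G z‖^2 + r^2)^2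
        = (‖H z‖ * r / (‖G z‖^2 + r^2)) * (‖deriv G z‖ * r / (‖G z‖^2 + r^2)) := by
          have := (hpos z).ne'
          field_simp
      _ ≤ _ := by gcongr
  have hvol : ∫ _ in Metric.ball (0:ℂ) 1, (1:ℝ) = Real.pi := by
    rw [setIntegral_const, Measure.real, Complex.volume_ball]; simp
  have hdc : Continuous (cpDbar (cpU G H r)) := by
    have hfd := ((cpU_contDiff G H hG hH r hr0).continuous_fderiv (by norm_num))
    unfold cpDbar
    exact ((hfd.clm_apply continuous_const).add (continuous_const.mul (hfd.clm_apply continuous_const))).div_const _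
  have hlog : Real.log (1/r) = 2 * j * Real.log (1/q) := by
    rw [hr, one_div, one_div, Real.log_inv, Real.log_inv, Real.log_pow]; push_cast; ring
  have hlq := cp_qlog q hq hq1
  have hq2 : q^2 ≤ q := pow_le_of_le_one hq.le hq1 two_ne_zero
  calc ∫ z in Metric.ball (0:ℂ) 1, ‖cpDbar (cpU G H r) z‖
      ≤ ∫ z in Metric.ball (0:ℂ) 1, ((1+K) * q^2) * (1 + X z) := by
        refine setIntegral_mono_on ?_ ((h1i.add hXi).const_mul _) measurableSet_ball hptw
        exact (hdc.norm.continuousOn.integrableOn_compact (isCompact_closedBall (0:ℂ) 1)).mono_set Metric.ball_subset_closedBall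
    _ = ((1+K) * q^2) * (Real.pi + ∫ z in Metric.ball (0:ℂ) 1, X z) := by
        rw [integral_const_mul, integral_add h1i hXi, hvol]
    _ ≤ ((1+K) * q^2) * (Real.pi + C0 * (Real.log (K^2+1) + 2 * Real.log (1/r))) := by gcongr
    _ = (1+K) * (Real.pi * q^2 + C0 * (Real.log (K^2+1) * q^2 + 4 * j * (q^2 * Real.log (1/q)))) := by
        rw [hlog]; ring
    _ ≤ (1+K) * (Real.pi * q + C0 * (Real.log (K^2+1) * q + 4 * j * q)) := by gcongr
    _ = (1+K) * (Real.pi + C0 * (Real.log (K^2+1) + 4 * j)) * q := by ring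
    _ ≤ _ := by gcongr; linarith

lemma cp_core (j : ℕ) (hj : 1 ≤ j) (K : ℝ) (hK : 1 ≤ K) : ∃ K' : ℝ, 1 ≤ K' ∧
    ∀ G H : ℂ → ℂ, Differentiable ℂ G → Differentiable ℂ H → ∀ q : ℝ, 0 < q → q ≤ 1 →
    (∀ z ∈ Metric.closedBall (0:ℂ) 2, ‖G z‖ ≤ K ∧ ‖H z‖ ≤ K ∧ ‖(G z)^(j+1) - (H z)^j‖ ≤ K * q^(2*j*(j+1))) →
    ∃ F : ℂ → ℂ, DifferentiableOn ℂ F (Metric.ball 0 (1/2)) ∧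
      ∀ z ∈ Metric.ball (0:ℂ) (1/4), ‖F z‖ ≤ K' ∧ ‖(F z)^j - G z‖ ≤ K' * q ∧ ‖(F z)^(j+1) - H z‖ ≤ K' * q := by
  obtain ⟨K1, hK1, hpt⟩ := cp_ptwise j hj K hK
  obtain ⟨C, hC, hintg⟩ := cp_dbar_int j hj K hK
  have hpi := Real.pi_gt_three
  set M : ℝ := 64 * (4 * C + K1) + K1 with hM
  have hM1 : 1 ≤ M := by linarith
  have hMK1 : K1 ≤ M := by linarith
  set M' : ℝ := M + 64 * ((j+1) * M^(j+1) * (4 * C) + K1) with hM'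
  have hMM' : M ≤ M' := by
    have : 0 ≤ 64 * ((j+1) * M^(j+1) * (4 * C) + K1) := by positivity
    linarith
  refine ⟨M', by linarith, ?_⟩
  intro G H hG hH q hq hq1 hb
  have hr0 : 0 < q^(2*j) := by positivity
  set u := cpU G H (q^(2*j)) with hu
  have huC : ContDiff ℝ 2 u := cpU_contDiff G H hG hH _ hr0
  have huc : Continuous u := huC.continuous
  obtain ⟨F, hFc, hFd, hFi⟩ := cp_solve u huC
  have hFi2 : ∫ z in Metric.ball (0:ℂ) (1/2), ‖F z - u z‖ ≤ 4 * C * q := by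
    have := hintg G H hG hH q hq hq1 hb
    linarith
  have hptz : ∀ z ∈ Metric.ball (0:ℂ) (1/2), ‖u z‖ ≤ K1 ∧ ‖(u z)^j - G z‖ ≤ K1 * q ∧ ‖(u z)^(j+1) - H z‖ ≤ K1 * q := by
    intro z hz
    have hz2 : z ∈ Metric.closedBall (0:ℂ) 2 := Metric.ball_subset_closedBall (Metric.ball_subset_ball (by norm_num) hz)
    obtain ⟨b1, b2, b3⟩ := hb z hz2
    have hA := (hpt (G z) (H z) q _ hq hq1 rfl b1 b2 b3 (u z) rfl).2
    have hq2 : q^2 ≤ q := pow_le_of_le_one hq.le hq1 two_ne_zero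
    refine ⟨hA.1, hA.2.1.trans ?_, hA.2.2.trans ?_⟩ <;> gcongr
  -- averaging principle
  have havg : ∀ D : ℂ → ℂ, Continuous D → DifferentiableOn ℂ D (Metric.ball 0 (1/2)) → ∀ z, ∀ A B : ℝ, 0 ≤ A → 0 ≤ B →
      Metric.ball z (1/8) ⊆ Metric.ball (0:ℂ) (1/2) →
      (∀ w ∈ Metric.ball z (1/8), ‖D w‖ ≤ A * ‖F w - u w‖ + B) → ‖D z‖ ≤ 64 * (A * (4 * C * q) + B) := by
    intro D hDc hDd z A B hA hB hsub hle
    have h1 := cp_area D hDc z (1/8) (by norm_num) (hDd.mono hsub)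
    have hio : ∀ f : ℂ → ℝ, Continuous f → ∀ z a, IntegrableOn f (Metric.ball z a) := fun f hf z a =>
      (hf.continuousOn.integrableOn_compact (isCompact_closedBall z a)).mono_set Metric.ball_subset_closedBall
    have hFu : Continuous (fun w => ‖F w - u w‖) := (hFc.sub huc).norm
    have h2 : ∫ w in Metric.ball z (1/8), ‖D w‖ ≤ A * (4 * C * q) + Real.pi / 64 * B := by
      calc ∫ w in Metric.ball z (1/8), ‖D w‖ ≤ ∫ w in Metric.ball z (1/8), (A * ‖F w - u w‖ + B) :=
            setIntegral_mono_on (hio _ hDc.norm _ _) (hio _ ((continuous_const.mul hFu).add continuous_const) _ _) measurableSet_ball hle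
        _ = A * (∫ w in Metric.ball z (1/8), ‖F w - u w‖) + Real.pi / 64 * B := by
            rw [integral_add ((hio _ hFu _ _).const_mul _) (hio _ continuous_const _ _), integral_const_mul, setIntegral_const,
              Measure.real, Complex.volume_ball]
            simp; left; norm_num; ring
        _ ≤ _ := by
            gcongr
            refine le_trans (setIntegral_mono_set (hio _ hFu _ _) (Eventually.of_forall fun _ => norm_nonneg _) hsub.eventuallyLE) hFi2
    have h3 : 0 ≤ A * (4 * C * q) := by positivity
    nlinarith [norm_nonneg (D z)]
  have hsub1 : ∀ z ∈ Metric.ball (0:ℂ) (3/8), Metric.ball z (1/8) ⊆ Metric.ball (0:ℂ) (1/2) := by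
    intro z hz
    refine Metric.ball_subset_ball' ?_
    rw [Metric.mem_ball] at hz; linarith
  have hsub2 : ∀ z ∈ Metric.ball (0:ℂ) (1/4), Metric.ball z (1/8) ⊆ Metric.ball (0:ℂ) (3/8) := by
    intro z hz
    refine Metric.ball_subset_ball' ?_
    rw [Metric.mem_ball] at hz; linarith
  have hFM : ∀ z ∈ Metric.ball (0:ℂ) (3/8), ‖F z‖ ≤ M := by
    intro z hz
    have h := havg F hFc hFd z 1 K1 zero_le_one (by linarith) (hsub1 z hz) (fun w hw => by
      have h1 := norm_add_le (F w - u w) (u w)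
      rw [sub_add_cancel] at h1
      have := (hptz w (hsub1 z hz hw)).1
      linarith)
    have : 4 * C * q ≤ 4 * C := mul_le_of_le_one_right (by linarith) hq1
    linarith
  have hdiff : ∀ i : ℕ, i ≤ j + 1 → ∀ T : ℂ → ℂ, Differentiable ℂ T → (∀ w ∈ Metric.ball (0:ℂ) (1/2), ‖(u w)^i - T w‖ ≤ K1 * q) →
      ∀ z ∈ Metric.ball (0:ℂ) (1/4), ‖(F z)^i - T z‖ ≤ M' * q := by
    intro i hi T hT hTu z hz
    have hsub : Metric.ball z (1/8) ⊆ Metric.ball (0:ℂ) (1/2) := (hsub2 z hz).trans (Metric.ball_subset_ball (by norm_num))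
    have h := havg (fun w => (F w)^i - T w) ((hFc.pow i).sub hT.continuous) ((hFd.pow i).sub hT.differentiableOn) z
      ((j+1) * M^(j+1)) (K1 * q) (by positivity) (by positivity) hsub (fun w hw => by
        have h1 := cp_pow_sub (F w) (u w) M hM1 (hFM w (hsub2 z hz hw)) ((hptz w (hsub hw)).1.trans hMK1) i
        have h2 : (i:ℝ) * M^i * ‖F w - u w‖ ≤ (j+1) * M^(j+1) * ‖F w - u w‖ := by
          gcongr
          · exact_mod_cast hi
        have h3 := hTu w (hsub hw)
        have e : (F w)^i - T w = ((F w)^i - (u w)^i) + ((u w)^i - T w) := by ring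
        show ‖(F w)^i - T w‖ ≤ _
        rw [e]
        exact (norm_add_le _ _).trans (add_le_add (h1.trans h2) h3))
    refine h.trans ?_
    calc _ = 64 * ((j+1) * M^(j+1) * (4 * C) + K1) * q := by ring
      _ ≤ _ := by gcongr; linarith
  refine ⟨F, hFd, fun z hz => ⟨(hFM z (Metric.ball_subset_ball (by norm_num) hz)).trans hMM', ?_, ?_⟩⟩
  · exact hdiff j (by omega) G hG (fun w hw => (hptz w hw).2.1) z hz
  · exact hdiff (j+1) le_rfl H hH (fun w hw => (hptz w hw).2.2) z hz

lemma cp_alg (j : ℕ) (hj : 1 ≤ j) (K : ℝ) (hK : 1 ≤ K) (a b : ℂ) (p : ℝ) (hp : 0 < p) (hp1 : p ≤ 1)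
    (ha : ‖a‖ ≤ K) (h1 : ‖a^j - b^j‖ ≤ K * p^(2*j)) (h2 : ‖a^(j+1) - b^(j+1)‖ ≤ K * p^(2*j)) :
    ‖a - b‖ ≤ ((K+1)*K + K + 2) * p := by
  have e2 : p^(2*j) = p^j * p^j := by rw [two_mul, pow_add]
  have hpj : p^j ≤ p := pow_le_of_le_one hp.le hp1 (by omega)
  have hpj0 : 0 < p^j := by positivity
  by_cases hb : p ≤ ‖b‖
  · have hbj : p^j ≤ ‖b‖^j := by gcongr
    have e : b^j * (a - b) = a * -(a^j - b^j) + (a^(j+1) - b^(j+1)) := by ring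
    have h3 : ‖b‖^j * ‖a - b‖ ≤ K * (K * p^(2*j)) + K * p^(2*j) := by
      rw [← norm_pow, ← norm_mul, e]
      refine (norm_add_le _ _).trans (add_le_add ?_ h2)
      rw [norm_mul, norm_neg]; gcongr
    have h4 : p^j * ‖a - b‖ ≤ p^j * ((K+1)*K*p^j) := by
      calc p^j * ‖a - b‖ ≤ ‖b‖^j * ‖a - b‖ := by gcongr
        _ ≤ _ := h3
        _ = _ := by rw [e2]; ring
    have h5 := le_of_mul_le_mul_left h4 hpj0
    calc ‖a - b‖ ≤ (K+1)*K*p^j := h5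
      _ ≤ (K+1)*K*p := by gcongr
      _ ≤ _ := by gcongr; linarith
  · push Not at hb
    have h3 : ‖a‖^j ≤ ((1+K)*p)^j := by
      have h6 := norm_sub_norm_le (a^j) (b^j)
      rw [norm_pow, norm_pow] at h6
      have h7 : ‖b‖^j ≤ p^j := by gcongr
      have h8 : p^j * p^j ≤ p^j := mul_le_of_le_one_left hpj0.le (pow_le_one₀ hp.le hp1)
      have h9 : K * (p^j * p^j) ≤ K * p^j := by gcongr
      rw [e2] at h1
      rw [mul_pow]
      calc ‖a‖^j ≤ (1+K) * p^j := by linarith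
        _ ≤ (1+K)^j * p^j := by gcongr; exact le_self_pow₀ (by linarith) (by omega)
    have h4 := le_of_pow_le_pow_left₀ (by omega) (by positivity) h3
    calc ‖a - b‖ ≤ ‖a‖ + ‖b‖ := norm_sub_le _ _
      _ ≤ (1+K)*p + p := by linarith
      _ = (K+2) * p := by ring
      _ ≤ _ := by gcongr; nlinarith

lemma cp_bernstein (P : Polynomial ℂ) (N : ℕ) (hN : P.natDegree ≤ N) (D : ℝ)
    (hD : ∀ x : ℝ, |x| ≤ 1 → ‖P.eval (x:ℂ)‖ ≤ D) (z : ℂ) (hz : ‖z‖ ≤ 1) : ‖P.eval z‖ ≤ 3^N * D := by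
  have hD0 : 0 ≤ D := (norm_nonneg _).trans (hD 0 (by simp))
  set Q : ℂ → ℂ := fun ζ => ∑ k ∈ Finset.range (N+1), P.coeff k * (ζ^(N-k) * ((ζ^2+1)/2)^k) with hQ
  have hQd : Differentiable ℂ Q := by
    simp only [hQ]
    fun_prop
  have hQe : ∀ ζ : ℂ, ζ ≠ 0 → Q ζ = ζ^N * P.eval ((ζ + ζ⁻¹)/2) := by
    intro ζ hζ
    rw [Polynomial.eval_eq_sum_range' (Nat.lt_succ_of_le hN), Finset.mul_sum]
    refine Finset.sum_congr rfl fun k hk => ?_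
    have hk' : k ≤ N := by simpa [Nat.lt_succ_iff] using hk
    have : (ζ^2+1)/2 = ζ * ((ζ + ζ⁻¹)/2) := by field_simp
    rw [this, mul_pow ζ, ← mul_assoc (ζ^(N-k)), ← pow_add, Nat.sub_add_cancel hk']
    ring
  have hQb : ∀ ζ : ℂ, ‖ζ‖ ≤ 1 → ‖Q ζ‖ ≤ D := by
    intro ζ hζ
    refine Complex.norm_le_of_forall_mem_frontier_norm_le (U := Metric.ball 0 1) Metric.isBounded_ball hQd.diffContOnCl ?_ ?_
    · intro w hw
      rw [frontier_ball (0:ℂ) one_ne_zero, mem_sphere_zero_iff_norm] at hw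
      have hw0 : w ≠ 0 := by rintro rfl; simp at hw
      rw [hQe w hw0, norm_mul, norm_pow, hw, one_pow, one_mul]
      have h1 : w⁻¹ = starRingEnd ℂ w := by
        rw [Complex.inv_def, Complex.normSq_eq_norm_sq, hw]; simp
      rw [h1, Complex.add_conj]
      have : ((2 * w.re : ℝ) : ℂ) / 2 = ((w.re : ℝ) : ℂ) := by push_cast; ring
      rw [this]
      exact hD _ (by rw [← hw]; exact Complex.abs_re_le_norm w)
    · rw [closure_ball (0:ℂ) one_ne_zero]; simpa using hζ
  obtain ⟨s, hs⟩ := IsAlgClosed.exists_pow_nat_eq (z^2 - 1) (n := 2) (by norm_num)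
  have key : ∀ s : ℂ, s^2 = z^2 - 1 → ‖z + s‖ ≤ 1 → ‖P.eval z‖ ≤ 3^N * D := by
    intro s hs hle
    have hprod : (z + s) * (z - s) = 1 := by linear_combination -hs
    have hne : z + s ≠ 0 := left_ne_zero_of_mul_eq_one hprod
    have hinv : (z+s)⁻¹ = z - s := (eq_inv_of_mul_eq_one_right hprod).symm
    have h1 := hQe _ hne
    rw [hinv] at h1
    have h2 : (z + s + (z - s))/2 = z := by ring
    rw [h2] at h1
    have h3 : P.eval z = (z-s)^N * Q (z+s) := by
      rw [h1, ← mul_assoc, ← mul_pow, mul_comm (z-s), hprod, one_pow, one_mul]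
    have h4 : ‖z - s‖ ≤ 3 := by
      have : z - s = 2 * z - (z+s) := by ring
      rw [this]
      refine (norm_sub_le _ _).trans ?_
      rw [norm_mul]; simp only [Complex.norm_ofNat]; linarith
    rw [h3, norm_mul, norm_pow]
    have := hQb _ hle
    gcongr
  rcases le_total ‖z + s‖ 1 with h | h
  · exact key s hs h
  · refine key (-s) (by rw [neg_sq]; exact hs) ?_
    have hprod : (z + s) * (z + -s) = 1 := by linear_combination -hs
    have : ‖z+s‖ * ‖z + -s‖ = 1 := by rw [← norm_mul, hprod, norm_one]
    by_contra hc
    push Not at hc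
    nlinarith

lemma cp_coeff (P : Polynomial ℂ) (D R : ℝ) (hR : 0 < R)
    (hD : ∀ z : ℂ, ‖z‖ ≤ R → ‖P.eval z‖ ≤ D) (k : ℕ) : ‖P.coeff k‖ ≤ D / R^k := by
  have h1 := Complex.norm_iteratedDeriv_le_of_forall_mem_sphere_norm_le (f := fun z => P.eval z) (c := 0) k hR
    P.differentiable.diffContOnCl (fun z hz => hD z (by simpa using (mem_sphere_zero_iff_norm.mp hz).le))
  have h2 : iteratedDeriv k (fun z => P.eval z) 0 = k.factorial * P.coeff k := by
    have h3 : ∀ (k : ℕ) (P : Polynomial ℂ), iteratedDeriv k (fun z => P.eval z) = fun z => (Polynomial.derivative^[k] P).eval z := by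
      intro k
      induction k with
      | zero => intro P; simp
      | succ k ih =>
        intro P
        rw [iteratedDeriv_succ', Function.iterate_succ_apply, ← ih]
        congr 1; ext z; simp
    rw [h3]
    beta_reduce
    rw [← Polynomial.coeff_zero_eq_eval_zero, Polynomial.coeff_iterate_derivative]
    simp [Nat.descFactorial_self]
  rw [h2, norm_mul, Complex.norm_natCast, mul_div_assoc] at h1
  exact le_of_mul_le_mul_left h1 (by positivity)

structure CpW (w : ℝ → ℝ) : Prop where
  cont : ContinuousOn w (Ici 0)
  mono : MonotoneOn w (Ici 0)
  nonneg : ∀ t, 0 ≤ t → 0 ≤ w t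
  conc : ConcaveOn ℝ (Ici 0) w
  conv : ConvexOn ℝ (Ici 0) fun t => w (Real.exp t)
  lin : ∀ δ : ℝ, 0 < δ → ∃ B : ℝ, ∀ T, 0 ≤ T → w T ≤ δ * T + B
  logg : ∀ A : ℝ, 0 < A → ∃ B : ℝ, ∀ T, 1 ≤ T → A * Real.log T ≤ w T + B

lemma CpW.of_weight {ω : ℝ → ℝ} (hω : IsWeightFunction ω) (hconc : ConcaveOn ℝ (Ici 0) ω) : CpW ω := by
  obtain ⟨h1, h2, h3, h4, h5, h6, h7⟩ := hω
  refine ⟨h1, h2, h3, hconc, h7, ?_, ?_⟩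
  · intro δ hδ
    have := h5.bound hδ
    rw [eventually_atTop] at this
    obtain ⟨a, ha⟩ := this
    refine ⟨ω (max a 0), fun T hT => ?_⟩
    rcases le_total T (max a 0) with h | h
    · have := h2 hT (le_max_right a 0) h
      nlinarith [mul_nonneg hδ.le hT]
    · have h8 := ha T ((le_max_left a 0).trans h)
      rw [Real.norm_eq_abs, Real.norm_eq_abs, abs_of_nonneg hT] at h8
      have := h3 (max a 0) (le_max_right a 0)
      linarith [le_abs_self (ω T)]
  · intro A hA
    have := h6.bound (inv_pos.mpr hA)
    rw [eventually_atTop] at this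
    obtain ⟨a, ha⟩ := this
    refine ⟨A * Real.log (max a 1), fun T hT => ?_⟩
    rcases le_total T (max a 1) with h | h
    · have h8 := Real.log_le_log (by linarith) h
      have := h3 T (by simp; linarith)
      nlinarith
    · have h8 := ha T ((le_max_left a 1).trans h)
      have h9 := h3 T (by simp; linarith)
      rw [Real.norm_eq_abs, Real.norm_eq_abs, abs_of_nonneg h9, abs_of_nonneg (Real.log_nonneg hT)] at h8
      have h10 : 0 ≤ Real.log (max a 1) := Real.log_nonneg (le_max_right _ _)
      have h11 : A * Real.log T ≤ ω T := by
        calc A * Real.log T ≤ A * (A⁻¹ * ω T) := by gcongr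
          _ = ω T := by field_simp
      nlinarith

lemma CpW.scale {w : ℝ → ℝ} (h : CpW w) {c : ℝ} (hc : 0 < c) : CpW (fun t => c * w t) := by
  refine ⟨continuousOn_const.mul h.cont, ?_, ?_, ?_, ?_, ?_, ?_⟩
  · intro a ha b hb hab
    exact mul_le_mul_of_nonneg_left (h.mono ha hb hab) hc.le
  · exact fun t ht => mul_nonneg hc.le (h.nonneg t ht)
  · exact h.conc.smul hc.le
  · exact h.conv.smul hc.le
  · intro δ hδ
    obtain ⟨B, hB⟩ := h.lin (δ / c) (by positivity)
    refine ⟨c * B, fun T hT => ?_⟩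
    calc c * w T ≤ c * (δ / c * T + B) := by gcongr; exact hB T hT
      _ = _ := by field_simp
  · intro A hA
    obtain ⟨B, hB⟩ := h.logg (A / c) (by positivity)
    refine ⟨c * B, fun T hT => ?_⟩
    calc A * Real.log T = c * (A / c * Real.log T) := by field_simp
      _ ≤ c * (w T + B) := by gcongr; exact hB T hT
      _ = _ := by ring

def cpM (w : ℝ → ℝ) (k : ℕ) : ℝ := Real.exp (phiStar w k)

lemma CpW.bdd {w : ℝ → ℝ} (h : CpW w) (s : ℝ) (hs : 0 ≤ s) :
    BddAbove ((fun t => s*t - w (Real.exp t)) '' Ici 0) := by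
  obtain ⟨B, hB⟩ := h.logg (s+1) (by linarith)
  refine ⟨B, ?_⟩
  rintro _ ⟨t, ht, rfl⟩
  have := hB (Real.exp t) (Real.one_le_exp ht)
  rw [Real.log_exp] at this
  simp only [mem_Ici] at ht
  dsimp only
  linarith

lemma CpW.M_ge {w : ℝ → ℝ} (h : CpW w) (k : ℕ) {T : ℝ} (hT : 1 ≤ T) :
    T^k * Real.exp (-w T) ≤ cpM w k := by
  have hT0 : 0 < T := by linarith
  have h1 := le_csSup (h.bdd k (by positivity)) ⟨Real.log T, Real.log_nonneg hT, rfl⟩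
  have h2 := Real.exp_le_exp.mpr h1
  refine le_trans (le_of_eq ?_) h2
  beta_reduce
  rw [Real.exp_log hT0, sub_eq_add_neg, Real.exp_add, mul_comm (k:ℝ), Real.exp_mul, Real.exp_log hT0, Real.rpow_natCast]

lemma cpM_le {w : ℝ → ℝ} (k : ℕ) {B : ℝ} (h : ∀ T : ℝ, 1 ≤ T → T^k * Real.exp (-w T) ≤ B) :
    cpM w k ≤ B := by
  have hB : 0 < B := lt_of_lt_of_le (by positivity) (h 1 le_rfl)
  unfold cpM phiStar
  rw [← Real.le_log_iff_exp_le hB]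
  apply csSup_le ((Set.nonempty_Ici).image _)
  rintro _ ⟨t, ht, rfl⟩
  rw [Real.le_log_iff_exp_le hB]
  have := h (Real.exp t) (Real.one_le_exp ht)
  refine le_trans (le_of_eq ?_) this
  beta_reduce
  rw [sub_eq_add_neg, Real.exp_add, mul_comm (k:ℝ), Real.exp_mul, Real.rpow_natCast]

lemma cpM_pos (w : ℝ → ℝ) (k : ℕ) : 0 < cpM w k := Real.exp_pos _

lemma CpW.M_eq {ω : ℝ → ℝ} (h : CpW ω) (ρ : ℝ) (hρ : 0 < ρ) (k : ℕ) :
    Real.exp (phiStar ω (ρ * k) / ρ) = cpM (fun t => ρ⁻¹ * ω t) k := by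
  apply le_antisymm
  · have h' := h.scale (inv_pos.mpr hρ)
    unfold cpM
    rw [Real.exp_le_exp, div_le_iff₀ hρ]
    apply csSup_le ((Set.nonempty_Ici).image _)
    rintro _ ⟨t, ht, rfl⟩
    have h1 := le_csSup (h'.bdd k (by positivity)) ⟨t, ht, rfl⟩
    calc ρ * k * t - ω (Real.exp t) = (k * t - ρ⁻¹ * ω (Real.exp t)) * ρ := by field_simp
      _ ≤ _ := by gcongr; exact h1
  · apply cpM_le
    intro T hT
    have hT0 : 0 < T := by linarith
    have h1 := le_csSup (h.bdd (ρ * k) (by positivity)) ⟨Real.log T, Real.log_nonneg hT, rfl⟩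
    have h2 := Real.exp_le_exp.mpr (div_le_div_of_nonneg_right h1 hρ.le)
    refine le_trans (le_of_eq ?_) h2
    have : (ρ * k * Real.log T - ω (Real.exp (Real.log T))) / ρ = Real.log T * k + -(ρ⁻¹ * ω T) := by
      rw [Real.exp_log hT0]; field_simp; ring
    beta_reduce
    rw [this, Real.exp_add, Real.exp_mul, Real.exp_log hT0, Real.rpow_natCast]

lemma CpW.max_exists {w : ℝ → ℝ} (h : CpW w) {ε : ℝ} (hε : 0 < ε) :
    ∃ t, 0 ≤ t ∧ ∀ T, 0 ≤ T → w T ≤ w t + ε * (T - t) := by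
  obtain ⟨B, hB⟩ := h.lin (ε/2) (by positivity)
  set X := max 0 (2 * (B - w 0) / ε) with hX
  have hX0 : 0 ≤ X := le_max_left _ _
  obtain ⟨t, ht, htm⟩ := (isCompact_Icc (a := (0:ℝ)) (b := X)).exists_isMaxOn ⟨0, by simp [hX0]⟩
    (f := fun T => w T - ε * T) ((h.cont.mono (fun x hx => hx.1)).sub (by fun_prop))
  refine ⟨t, ht.1, fun T hT => ?_⟩
  rcases le_total T X with hTX | hTX
  · have := htm ⟨hT, hTX⟩
    simp only [Set.mem_ofPred_eq] at this
    linarith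
  · have h1 := htm (show (0:ℝ) ∈ Icc 0 X by simp [hX0])
    simp only [Set.mem_ofPred_eq] at h1
    have h2 := hB T hT
    have h3 : 2 * (B - w 0) / ε ≤ T := (le_max_right _ _).trans hTX
    rw [div_le_iff₀ hε] at h3
    linarith

lemma CpW.log_lower {w : ℝ → ℝ} (h : CpW w) {ε t : ℝ} (hε : 0 < ε) (ht : 1 < t)
    (hm : ∀ T, 0 ≤ T → w T ≤ w t + ε * (T - t)) (T : ℝ) (hT : 1 ≤ T) :
    w t + ε * t * Real.log (T / t) ≤ w T := by
  have ht0 : 0 < t := by linarith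
  have hT0 : 0 < T := by linarith
  rw [Real.log_div hT0.ne' ht0.ne']
  set a := Real.log t with ha
  set d := Real.log T - a with hd
  have ha0 : 0 < a := Real.log_pos ht
  have hp : 0 < ε * t := by positivity
  have hea : Real.exp a = t := Real.exp_log ht0
  -- for small lam
  have key : ∀ lam : ℝ, 0 < lam → lam * |d| ≤ 1 → lam * |d| ≤ a → w t - w T ≤ -(ε*t*d) + lam * (ε * t * d^2) := by
    intro lam hl h1 h2
    have h3 : |lam * d| ≤ 1 := by rw [abs_mul, abs_of_pos hl]; exact h1
    have h4 : 0 ≤ a - lam * d := by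
      have := le_abs_self d
      nlinarith
    have hc := h.conv.2 (show a - lam * d ∈ Ici (0:ℝ) from h4) (show Real.log T ∈ Ici (0:ℝ) from Real.log_nonneg hT)
      (show 0 ≤ 1/(1+lam) by positivity) (show 0 ≤ lam/(1+lam) by positivity) (by field_simp)
    have h5 : (1/(1+lam)) • (a - lam * d) + (lam/(1+lam)) • Real.log T = a := by
      rw [smul_eq_mul, smul_eq_mul, show Real.log T = d + a by rw [hd]; ring]; field_simp; ring
    rw [h5] at hc
    simp only [smul_eq_mul, hea, Real.exp_log hT0] at hc
    have h6 : (1 + lam) * w t ≤ w (Real.exp (a - lam * d)) + lam * w T := by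
      calc (1+lam) * w t ≤ (1+lam) * (1/(1+lam) * w (Real.exp (a - lam * d)) + lam/(1+lam) * w T) := by gcongr
        _ = _ := by field_simp
    have h7 := hm (Real.exp (a - lam * d)) (Real.exp_pos _).le
    have h8 : Real.exp (a - lam * d) = t * Real.exp (-(lam*d)) := by rw [sub_eq_add_neg, Real.exp_add, hea]
    have h9 := Real.abs_exp_sub_one_sub_id_le (x := -(lam*d)) (by rwa [abs_neg])
    have h10 := (abs_le.mp h9).2
    have h11 : ε * (Real.exp (a - lam*d) - t) ≤ ε * t * (-(lam*d) + (lam*d)^2) := by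
      rw [h8]
      calc ε * (t * Real.exp (-(lam*d)) - t) = ε * t * (Real.exp (-(lam*d)) - 1) := by ring
        _ ≤ _ := by
          apply mul_le_mul_of_nonneg_left _ hp.le
          have : (-(lam*d))^2 = (lam*d)^2 := by ring
          linarith
    have h12 : lam * (w t - w T) ≤ lam * (-(ε*t*d) + lam * (ε * t * d^2)) := by
      calc lam * (w t - w T) ≤ ε * t * (-(lam*d) + (lam*d)^2) := by linarith
        _ = _ := by ring
    exact le_of_mul_le_mul_left h12 hl
  by_contra hcon
  push Not at hcon
  set gap := w t + ε * t * d - w T with hgap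
  have hg : 0 < gap := by linarith
  set lam := min (min (1/(|d|+1)) (a/(|d|+1))) (gap / (2 * (ε*t*d^2 + 1))) with hlam
  have hl : 0 < lam := by positivity
  have l1 : lam ≤ 1/(|d|+1) := (min_le_left _ _).trans (min_le_left _ _)
  have l2 : lam ≤ a/(|d|+1) := (min_le_left _ _).trans (min_le_right _ _)
  have l3 : lam ≤ gap / (2 * (ε*t*d^2 + 1)) := min_le_right _ _
  rw [le_div_iff₀ (by positivity)] at l1 l2 l3
  have := key lam hl (by linarith) (by linarith)
  have : 0 ≤ lam * (ε * t * d^2) := by positivity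
  linarith

lemma cp_pow_exp (x : ℝ) (hx : 0 ≤ x) (k : ℕ) : x^k * Real.exp (-x) ≤ k.factorial := by
  have h := Real.pow_div_factorial_le_exp x hx k
  rw [div_le_iff₀ (by positivity)] at h
  calc x^k * Real.exp (-x) ≤ (Real.exp x * k.factorial) * Real.exp (-x) := by gcongr
    _ = k.factorial * (Real.exp x * Real.exp (-x)) := by ring
    _ = _ := by rw [← Real.exp_add]; simp

lemma cp_kk (k : ℕ) : (k:ℝ)^k ≤ k.factorial * Real.exp 1 ^ k := by
  have h := Real.pow_div_factorial_le_exp (k:ℝ) (by positivity) k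
  rw [div_le_iff₀ (by positivity)] at h
  rw [← Real.exp_nat_mul, mul_one]
  linarith

/-- data of a contact point -/
structure CpT (w : ℝ → ℝ) (ε t : ℝ) : Prop where
  hε : 0 < ε
  ht : 1 < t
  hm : ∀ T, 0 ≤ T → w T ≤ w t + ε * (T - t)

-- exponential form of the log lower bound
lemma CpT.expl {w : ℝ → ℝ} (h : CpW w) {ε t : ℝ} (H : CpT w ε t) (T : ℝ) (hT : 1 ≤ T) :
    Real.exp (-w T) ≤ Real.exp (-w t) * (t/T) ^ (ε * t) := by
  have h1 := h.log_lower H.hε H.ht H.hm T hT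
  have hT0 : 0 < T := by linarith
  have ht0 : 0 < t := by linarith [H.ht]
  rw [Real.rpow_def_of_pos (by positivity), ← Real.exp_add, Real.exp_le_exp]
  have : Real.log (t/T) = - Real.log (T/t) := by rw [← Real.log_inv, inv_div]
  rw [this]
  linarith

-- for T ≥ t, k ≤ p
lemma CpT.right {w : ℝ → ℝ} (h : CpW w) {ε t : ℝ} (H : CpT w ε t) (k : ℕ) (hk : (k:ℝ) ≤ ε * t) (T : ℝ) (hT : t ≤ T) :
    T^k * Real.exp (-w T) ≤ t^k * Real.exp (-w t) := by
  have ht := H.ht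
  have hT0 : 0 < T := by linarith
  have ht0 : 0 < t := by linarith
  have h1 := H.expl h T (by linarith)
  have h2 : (t/T) ^ (ε*t) ≤ (t/T)^k := by
    rw [← Real.rpow_natCast]
    exact Real.rpow_le_rpow_of_exponent_ge (by positivity) (by rw [div_le_one hT0]; exact hT) hk
  calc T^k * Real.exp (-w T) ≤ T^k * (Real.exp (-w t) * (t/T)^k) := by
        gcongr; exact h1.trans (by gcongr)
    _ = _ := by rw [div_pow]; field_simp

-- for 1 ≤ T ≤ t, p ≤ k
lemma CpT.left {w : ℝ → ℝ} (h : CpW w) {ε t : ℝ} (H : CpT w ε t) (k : ℕ) (hk : ε * t ≤ k) (T : ℝ) (hT1 : 1 ≤ T) (hT : T ≤ t) :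
    T^k * Real.exp (-w T) ≤ t^k * Real.exp (-w t) := by
  have ht := H.ht
  have hT0 : 0 < T := by linarith
  have ht0 : 0 < t := by linarith
  have h1 := H.expl h T (by linarith)
  have h2 : (t/T) ^ (ε*t) ≤ (t/T)^k := by
    rw [← Real.rpow_natCast]
    exact Real.rpow_le_rpow_of_exponent_le (by rw [one_le_div hT0]; exact hT) hk
  calc T^k * Real.exp (-w T) ≤ T^k * (Real.exp (-w t) * (t/T)^k) := by
        gcongr; exact h1.trans (by gcongr)
    _ = _ := by rw [div_pow]; field_simp

lemma CpT.lin {w : ℝ → ℝ} (h : CpW w) {ε t : ℝ} (H : CpT w ε t) (T : ℝ) (hT1 : 0 ≤ T) (hT : T ≤ t) :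
    ε * T ≤ w T := by
  have ht := H.ht
  have ht0 : 0 < t := by linarith
  have h0 := H.hm 0 le_rfl
  have h00 := h.nonneg 0 le_rfl
  have h2 := h.conc.2 (show (0:ℝ) ∈ Ici (0:ℝ) by simp) (show t ∈ Ici (0:ℝ) from ht0.le)
    (show 0 ≤ 1 - T/t by rw [sub_nonneg, div_le_one ht0]; exact hT) (show 0 ≤ T/t by positivity) (by ring)
  simp only [smul_eq_mul, mul_zero, zero_add] at h2
  have e : T/t*t = T := by field_simp
  rw [e] at h2
  have h3 : 0 ≤ (1 - T/t) * w 0 := mul_nonneg (by rw [sub_nonneg, div_le_one ht0]; exact hT) h00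
  have h4 : ε * T ≤ T/t * w t := by
    calc ε * T = T/t * (ε * t) := by field_simp
      _ ≤ _ := by gcongr; linarith
  linarith

lemma CpT.A {w : ℝ → ℝ} (h : CpW w) {ε t : ℝ} (H : CpT w ε t) (k : ℕ) (hk : (k:ℝ) ≤ ε * t) :
    cpM w k * ε^k ≤ k.factorial := by
  have hε := H.hε
  have ht := H.ht
  rw [← le_div_iff₀ (by positivity)]
  apply cpM_le
  have key : ∀ T : ℝ, 1 ≤ T → T ≤ t → T^k * Real.exp (-w T) ≤ k.factorial / ε^k := by
    intro T hT hTt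
    rw [le_div_iff₀ (by positivity)]
    have h1 := H.lin h T (by linarith) hTt
    calc T^k * Real.exp (-w T) * ε^k ≤ T^k * Real.exp (-(ε * T)) * ε^k := by gcongr
      _ = (ε * T)^k * Real.exp (-(ε*T)) := by rw [mul_pow]; ring
      _ ≤ _ := cp_pow_exp _ (by positivity) _
  intro T hT
  rcases le_total T t with h1 | h1
  · exact key T hT h1
  · exact (H.right h k hk T h1).trans (key t ht.le le_rfl)

lemma CpT.B {w : ℝ → ℝ} (h : CpW w) {ε t : ℝ} (H : CpT w ε t) (n : ℕ) (hn : (n:ℝ) ≤ ε * t) (hn1 : ε * t ≤ n + 1) :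
    cpM w n * ε^n ≤ n.factorial * Real.exp 1 ^(n+1) * (t * Real.exp (-w t)) := by
  have hε := H.hε
  have ht := H.ht
  have ht0 : 0 < t := by linarith
  have h1 : cpM w n ≤ t^(n+1) * Real.exp (-w t) := by
    apply cpM_le
    intro T hT
    rcases le_total T t with h1 | h1
    · refine le_trans ?_ (H.left h (n+1) (by push_cast; exact hn1) T hT h1)
      gcongr
      omega
    · refine (H.right h n hn T h1).trans ?_
      gcongr
      · exact ht.le
      · omega
  have h2 : ((n:ℝ)+1)^n ≤ n.factorial * Real.exp 1 ^ (n+1) := by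
    have := cp_kk (n+1)
    rw [Nat.factorial_succ] at this
    push_cast at this
    rw [pow_succ, mul_assoc, mul_comm] at this
    exact le_of_mul_le_mul_left this (by positivity)
  calc cpM w n * ε^n ≤ (t^(n+1) * Real.exp (-w t)) * ε^n := by gcongr
    _ = (ε * t)^n * (t * Real.exp (-w t)) := by rw [mul_pow]; ring
    _ ≤ (n+1)^n * (t * Real.exp (-w t)) := by gcongr
    _ ≤ _ := by gcongr

lemma CpT.mono_t {w : ℝ → ℝ} (h : CpW w) {ε t t' : ℝ} (H : CpT w ε t) (H' : CpT w (ε/2) t') : t ≤ t' := by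
  have h1 := H.hm t' (by linarith [H'.ht])
  have h2 := H'.hm t (by linarith [H.ht])
  have := H.hε
  by_contra hc
  push Not at hc
  nlinarith

lemma CpT.mono_p {w : ℝ → ℝ} (h : CpW w) {ε t t' : ℝ} (H : CpT w ε t) (H' : CpT w (ε/2) t') : ε * t ≤ ε/2 * t' := by
  have h0 := H.mono_t h H'
  have hε := H.hε
  have ht := H.ht
  have ht0 : 0 < t := by linarith
  have ht1 : 0 < t' := by linarith
  rcases h0.lt_or_eq with hlt | heq
  · have h1 := h.log_lower H.hε H.ht H.hm t' H'.ht.le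
    have h2 := h.log_lower H'.hε H'.ht H'.hm t H.ht.le
    have e : Real.log (t/t') = - Real.log (t'/t) := by rw [← Real.log_inv, inv_div]
    rw [e] at h2
    have h3 : 0 < Real.log (t'/t) := Real.log_pos (by rw [one_lt_div ht0]; exact hlt)
    have h4 : (ε * t) * Real.log (t'/t) ≤ (ε/2*t') * Real.log (t'/t) := by linarith
    exact le_of_mul_le_mul_right h4 h3
  · exfalso
    subst heq
    have h1 := h.log_lower H.hε H.ht H.hm (3/2*t) (by linarith)
    have h2 := H'.hm (3/2*t) (by linarith)
    have e : 3/2*t/t = (3/2:ℝ) := by field_simp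
    rw [e] at h1
    have h3 : (1:ℝ)/3 ≤ Real.log (3/2) := by
      have := Real.one_sub_inv_le_log_of_pos (show (0:ℝ) < 3/2 by norm_num)
      norm_num at this ⊢
      linarith
    have h4 : ε * t * (1/3) ≤ ε * t * Real.log (3/2) := by gcongr
    have : 0 < ε * t := by positivity
    linarith

lemma CpT.C {w : ℝ → ℝ} (h : CpW w) {ε t t' : ℝ} (H : CpT w ε t) (H' : CpT w (ε/2) t') (k : ℕ)
    (hk : ε * t ≤ k) (hk' : (k:ℝ) ≤ ε/2*t') :
    cpM w k * (ε/2)^k ≤ k.factorial * Real.exp 1 ^k * Real.exp (-w t) := by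
  have h0 := H.mono_t h H'
  have hε := H.hε
  have ht := H.ht
  have ht0 : 0 < t := by linarith
  have ht1 : 0 < t' := by linarith
  have he1 : (1:ℝ) ≤ Real.exp 1 := Real.one_le_exp (by norm_num)
  rw [← le_div_iff₀ (by positivity)]
  apply cpM_le
  have key : ∀ T : ℝ, t ≤ T → T ≤ t' → T^k * Real.exp (-w T) ≤ k.factorial * Real.exp 1 ^k * Real.exp (-w t) / (ε/2)^k := by
    intro T hT hTt
    rw [le_div_iff₀ (by positivity)]
    have h1 : w t + ε/2*(T-t) ≤ w T := by
      rcases h0.lt_or_eq with hlt | heq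
      · have hd : 0 < t' - t := by linarith
        have h2 := h.conc.2 (show t ∈ Ici (0:ℝ) from ht0.le) (show t' ∈ Ici (0:ℝ) from ht1.le)
          (show 0 ≤ (t'-T)/(t'-t) from div_nonneg (by linarith) hd.le) (show 0 ≤ (T-t)/(t'-t) from div_nonneg (by linarith) hd.le) (by field_simp; ring)
        have e : ((t'-T)/(t'-t)) • t + ((T-t)/(t'-t)) • t' = T := by
          simp only [smul_eq_mul]; field_simp; ring
        rw [e] at h2
        simp only [smul_eq_mul] at h2
        refine le_trans ?_ h2
        have h3 := H'.hm t ht0.le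
        calc w t + ε/2*(T-t) = (t'-T)/(t'-t) * w t + (T-t)/(t'-t) * (w t + ε/2*(t'-t)) := by field_simp; ring
          _ ≤ _ := by
            have : 0 ≤ (T-t)/(t'-t) := div_nonneg (by linarith) hd.le
            gcongr
            linarith
      · have : T = t := by linarith
        subst this; simp
    have hT0 : 0 < T := by linarith
    have h2 : Real.exp (ε/2*t) ≤ Real.exp 1 ^ k := by
      rw [← Real.exp_nat_mul, Real.exp_le_exp]
      nlinarith
    calc T^k * Real.exp (-w T) * (ε/2)^k ≤ T^k * Real.exp (-w t + (-(ε/2*T)) + ε/2*t) * (ε/2)^k := by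
          gcongr; linarith
      _ = ((ε/2 * T)^k * Real.exp (-(ε/2*T))) * Real.exp (ε/2*t) * Real.exp (-w t) := by
          rw [mul_pow, Real.exp_add, Real.exp_add]; ring
      _ ≤ _ := by
          gcongr
          exact cp_pow_exp _ (by positivity) _
  intro T hT
  rcases le_total T t with h1 | h1
  · exact (H.left h k hk T hT h1).trans (key t le_rfl h0)
  · rcases le_total T t' with h2 | h2
    · exact key T h1 h2
    · exact (H'.right h k hk' T h2).trans (key t' h0 le_rfl)

lemma CpW.exists_T {w : ℝ → ℝ} (h : CpW w) : ∃ ε0 : ℝ, 0 < ε0 ∧ ε0 ≤ 1 ∧ ∀ ε, 0 < ε → ε ≤ ε0 → ∃ t, CpT w ε t := by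
  obtain ⟨B, hB⟩ := h.logg 1 one_pos
  set T0 := Real.exp (max 0 (w 1 + 2 + B)) with hT0
  have hT1 : 1 ≤ T0 := Real.one_le_exp (le_max_left _ _)
  have hw : w 1 + 2 ≤ w T0 := by
    have := hB T0 hT1
    rw [hT0, Real.log_exp] at this
    have h2 := le_max_right 0 (w 1 + 2 + B)
    linarith
  refine ⟨1/T0, by positivity, by rw [div_le_one (by positivity)]; exact hT1, fun ε hε hε0 => ?_⟩
  obtain ⟨t, ht, htm⟩ := h.max_exists hε
  refine ⟨t, hε, ?_, htm⟩
  by_contra hc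
  push Not at hc
  have h1 := htm T0 (by positivity)
  have h2 := h.mono ht (show (1:ℝ) ∈ Ici (0:ℝ) by simp) hc
  rw [le_div_iff₀ (by positivity)] at hε0
  nlinarith [mul_nonneg hε.le ht]

lemma cp_weights {w : ℝ → ℝ} (h : CpW w) (R : ℝ) (hR : 0 < R) : ∃ ε0 : ℝ, 0 < ε0 ∧ ε0 ≤ 1 ∧ ε0 ≤ R ∧ ∃ C1 : ℝ, 1 ≤ C1 ∧ ∃ (u : ℕ → ℝ) (n : ℕ → ℕ),
    (∀ i, 0 ≤ u i) ∧ (∀ i, u i ≤ u (i+1)) ∧ (∀ i, n i ≤ n (i+1)) ∧ (∀ i T, 0 ≤ T → w T ≤ u i + ε0/2^i * T) ∧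
    (∀ i k, k ≤ n i → cpM w k * (ε0/2^i)^k ≤ k.factorial) ∧
    (∀ i, cpM w (n i) * (ε0/2^i)^(n i) ≤ C1 * (n i).factorial * Real.exp 1 ^ (n i) * Real.exp (-(u i/2))) ∧
    (∀ i k, n i < k → k ≤ n (i+1) → cpM w k * (ε0/2^(i+1))^k ≤ C1 * k.factorial * Real.exp 1 ^ k * Real.exp (-(u i/2))) := by
  obtain ⟨ε00, he00, he10, hex0⟩ := h.exists_T
  set ε0 := min ε00 R with hε0
  have he0 : 0 < ε0 := lt_min he00 hR
  have he1 : ε0 ≤ 1 := (min_le_left _ _).trans he10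
  have hex : ∀ ε, 0 < ε → ε ≤ ε0 → ∃ t, CpT w ε t := fun ε h1 h2 => hex0 ε h1 (h2.trans (min_le_left _ _))
  have : ∀ i : ℕ, ∃ t, CpT w (ε0/2^i) t := fun i => hex _ (by positivity) (div_le_self he0.le (one_le_pow₀ (by norm_num)))
  choose t ht using this
  have ht' : ∀ i, CpT w (ε0/2^i/2) (t (i+1)) := by
    intro i
    have := ht (i+1)
    rwa [pow_succ, ← div_div] at this
  obtain ⟨B, hB⟩ := h.logg 2 (by norm_num)
  have hpos : ∀ i, 0 ≤ w (t i) := fun i => h.nonneg _ (by linarith [(ht i).ht])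
  have hte : ∀ i, t i * Real.exp (-w (t i)) ≤ Real.exp (B/2) * Real.exp (-(w (t i)/2)) := by
    intro i
    have h1 := hB (t i) (ht i).ht.le
    have h0 : 0 < t i := by linarith [(ht i).ht]
    rw [← Real.exp_log h0, ← Real.exp_add, ← Real.exp_add, Real.exp_le_exp, Real.exp_log h0]
    linarith
  have hfl : ∀ i, ((⌊ε0/2^i * t i⌋₊ : ℕ):ℝ) ≤ ε0/2^i * t i := fun i => Nat.floor_le (mul_nonneg (by positivity) (by linarith [(ht i).ht]))
  have hfl' : ∀ i, ε0/2^i * t i ≤ ((⌊ε0/2^i * t i⌋₊ : ℕ):ℝ) + 1 := fun i => (Nat.lt_floor_add_one _).le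
  refine ⟨ε0, he0, he1, min_le_right _ _, max 1 (Real.exp 1 * Real.exp (B/2)), le_max_left _ _, fun i => w (t i), fun i => ⌊ε0/2^i * t i⌋₊, hpos, ?_, ?_, ?_, ?_, ?_, ?_⟩
  · intro i
    exact h.mono (show t i ∈ Ici (0:ℝ) from zero_le_one.trans (ht i).ht.le) (show t (i+1) ∈ Ici (0:ℝ) from zero_le_one.trans (ht (i+1)).ht.le) ((ht i).mono_t h (ht' i))
  · intro i
    apply Nat.floor_le_floor
    have := (ht i).mono_p h (ht' i)
    rwa [div_div, ← pow_succ] at this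
  · intro i T hT
    have h1 := (ht i).hm T hT
    have : 0 ≤ ε0/2^i * t i := mul_nonneg (by positivity) (by linarith [(ht i).ht])
    linarith
  · intro i k hk
    exact (ht i).A h k ((Nat.cast_le.mpr hk).trans (hfl i))
  · intro i
    have h1 := (ht i).B h _ (hfl i) (hfl' i)
    refine h1.trans ?_
    set n := ⌊ε0/2^i * t i⌋₊
    calc (n.factorial:ℝ) * Real.exp 1 ^(n+1) * (t i * Real.exp (-w (t i)))
        ≤ n.factorial * Real.exp 1 ^(n+1) * (Real.exp (B/2) * Real.exp (-(w (t i)/2))) := mul_le_mul_of_nonneg_left (hte i) (by positivity)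
      _ = (Real.exp 1 * Real.exp (B/2)) * n.factorial * Real.exp 1 ^n * Real.exp (-(w (t i)/2)) := by ring
      _ ≤ _ := by gcongr; exact le_max_right _ _
  · intro i k hk hk'
    have h1 := (ht i).C h (ht' i) k (by
      refine (hfl' i).trans ?_
      exact_mod_cast hk) (by
      have := (Nat.cast_le (α := ℝ).mpr hk').trans (hfl (i+1))
      rwa [pow_succ, ← div_div] at this)
    rw [pow_succ, ← div_div]
    refine h1.trans ?_
    have h2 := hpos i
    have h3 : Real.exp (-w (t i)) ≤ Real.exp (-(w (t i)/2)) := by rw [Real.exp_le_exp]; linarith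
    calc (k.factorial:ℝ) * Real.exp 1 ^k * Real.exp (-w (t i)) ≤ 1 * k.factorial * Real.exp 1 ^k * Real.exp (-(w (t i)/2)) := by
          rw [one_mul]; gcongr
      _ ≤ _ := by gcongr; exact le_max_left _ _

lemma cp_dbl {ω : ℝ → ℝ} (hω : IsWeightFunction ω) : ∃ L : ℝ, 1 ≤ L ∧ ∀ t, 0 ≤ t → ω (2*t) ≤ L * ω t + L := by
  obtain ⟨h1, h2, h3, h4, h5, h6, h7⟩ := hω
  obtain ⟨c, hc⟩ := h4.bound
  rw [eventually_atTop] at hc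
  obtain ⟨a, ha⟩ := hc
  set b := max a 0 with hb
  have hb0 : 0 ≤ b := le_max_right _ _
  refine ⟨max 1 (max c (ω (2*b))), le_max_left _ _, fun t ht => ?_⟩
  have l1 : 1 ≤ max 1 (max c (ω (2*b))) := le_max_left _ _
  have l2 : c ≤ max 1 (max c (ω (2*b))) := (le_max_left _ _).trans (le_max_right _ _)
  have l3 : ω (2*b) ≤ max 1 (max c (ω (2*b))) := (le_max_right _ _).trans (le_max_right _ _)
  have hωt := h3 t ht
  rcases le_total t b with h | h
  · have := h2 (show 2*t ∈ Ici (0:ℝ) by simp; linarith) (show 2*b ∈ Ici (0:ℝ) by simp; linarith) (by linarith)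
    nlinarith
  · have h8 := ha t ((le_max_left a 0).trans h)
    rw [Real.norm_eq_abs, Real.norm_eq_abs, abs_of_nonneg hωt] at h8
    have := le_abs_self (ω (2*t))
    nlinarith

lemma cp_absorb {ω : ℝ → ℝ} (hω : IsWeightFunction ω) (hconc : ConcaveOn ℝ (Ici 0) ω) (m : ℕ) :
    ∃ a : ℝ, 0 < a ∧ ∀ c : ℝ, 0 < c → ∃ C : ℝ, 0 < C ∧ ∀ k,
      (2^m)^k * cpM (fun t => c * ω t) k ≤ C * cpM (fun t => (c * a) * ω t) k := by
  obtain ⟨L, hL1, hL⟩ := cp_dbl hω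
  have hL0 : 0 < L := by linarith
  have hit : ∀ m : ℕ, ∃ B : ℝ, ∀ t, 0 ≤ t → ω (2^m * t) ≤ L^m * ω t + B := by
    intro m
    induction m with
    | zero => exact ⟨0, fun t _ => by simp⟩
    | succ m ih =>
      obtain ⟨B, hB⟩ := ih
      refine ⟨L * B + L, fun t ht => ?_⟩
      have h1 := hL (2^m*t) (by positivity)
      have h2 := hB t ht
      calc ω (2^(m+1) * t) = ω (2 * (2^m*t)) := by congr 1; ring
        _ ≤ L * ω (2^m*t) + L := h1
        _ ≤ L * (L^m * ω t + B) + L := by gcongr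
        _ = _ := by ring
  obtain ⟨B, hB⟩ := hit m
  refine ⟨(L^m)⁻¹, by positivity, fun c hc => ?_⟩
  refine ⟨Real.exp (c * ((L^m)⁻¹ * B)), Real.exp_pos _, fun k => ?_⟩
  have hW := (CpW.of_weight hω hconc).scale (c := c * (L^m)⁻¹) (by positivity)
  rw [mul_comm, ← le_div_iff₀ (by positivity)]
  apply cpM_le
  intro T hT
  rw [le_div_iff₀ (by positivity)]
  have h1 := hW.M_ge k (T := 2^m*T) (by nlinarith [one_le_pow₀ (M₀ := ℝ) (show (1:ℝ) ≤ 2 by norm_num) (n := m)])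
  have h2 : Real.exp (-(c * ω T)) ≤ Real.exp (c * ((L^m)⁻¹ * B)) * Real.exp (-(c * (L^m)⁻¹ * ω (2^m*T))) := by
    rw [← Real.exp_add, Real.exp_le_exp]
    have h3 := hB T (by linarith)
    have h4 : (L^m)⁻¹ * ω (2^m * T) ≤ (L^m)⁻¹ * (L^m * ω T + B) := by gcongr
    rw [mul_add, ← mul_assoc, inv_mul_cancel₀ (by positivity), one_mul] at h4
    have h5 := mul_le_mul_of_nonneg_left h4 hc.le
    linarith
  calc T^k * Real.exp (-(c * ω T)) * (2^m)^k = (2^m*T)^k * Real.exp (-(c * ω T)) := by rw [mul_pow]; ring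
    _ ≤ (2^m*T)^k * (Real.exp (c * ((L^m)⁻¹ * B)) * Real.exp (-(c * (L^m)⁻¹ * ω (2^m*T)))) := by gcongr
    _ = Real.exp (c * ((L^m)⁻¹ * B)) * ((2^m*T)^k * Real.exp (-(c * (L^m)⁻¹ * ω (2^m*T)))) := by ring
    _ ≤ _ := by gcongr

lemma cp_decay {w : ℝ → ℝ} (h : CpW w) (κ : ℝ) (hκ : 0 < κ) (N : ℕ) : ∃ B : ℝ, 0 < B ∧ ∀ ε u : ℝ, 0 < ε → ε ≤ 1 →
    (∀ T, 0 ≤ T → w T ≤ u + ε * T) → Real.exp (-(κ * u)) ≤ B * ε^N := by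
  obtain ⟨B, hB⟩ := h.logg ((N+1)/κ) (by positivity)
  refine ⟨Real.exp (κ * (B+1)), by positivity, fun ε u hε hε1 hu => ?_⟩
  have h1 := hu (1/ε) (by positivity)
  have h2 := hB (1/ε) (by rw [one_le_div hε]; exact hε1)
  rw [mul_one_div_cancel hε.ne'] at h1
  have h3 : 0 ≤ Real.log (1/ε) := Real.log_nonneg (by rw [one_le_div hε]; exact hε1)
  have h4 : ε^N = Real.exp (-(N * Real.log (1/ε))) := by
    rw [one_div, Real.log_inv, mul_neg, neg_neg, mul_comm, Real.exp_mul, Real.exp_log hε, Real.rpow_natCast]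
  rw [h4, ← Real.exp_add, Real.exp_le_exp]
  have h5 : (N+1) * Real.log (1/ε) ≤ κ * (u + 1 + B) := by
    calc (N+1) * Real.log (1/ε) = κ * ((N+1)/κ * Real.log (1/ε)) := by field_simp
      _ ≤ _ := by gcongr; linarith
  nlinarith

lemma cp_back {w : ℝ → ℝ} (h : CpW w) (κ : ℝ) (hκ : 0 < κ) (hκ1 : κ ≤ 1) (k : ℕ) (hk : 1 ≤ k) (ε u : ℝ) (hε : 0 < ε) (hε1 : ε ≤ 1)
    (hu : ∀ T, 0 ≤ T → w T ≤ u + ε * T) :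
    k.factorial * (1/ε)^k * Real.exp (-(κ * u)) ≤ (κ * Real.exp 1)^k * cpM (fun t => κ * w t) k := by
  set T := k / (κ * ε) with hT
  have hT1 : 1 ≤ T := by
    rw [hT, one_le_div (by positivity)]
    have : (1:ℝ) ≤ k := by exact_mod_cast hk
    nlinarith
  have h1 := (h.scale hκ).M_ge k hT1
  have h2 := hu T (by linarith)
  have h3 : Real.exp (-(κ * u)) ≤ Real.exp 1 ^ k * Real.exp (-(κ * w T)) := by
    rw [← Real.exp_nat_mul, ← Real.exp_add, Real.exp_le_exp]
    have : κ * (ε * T) = k := by rw [hT]; field_simp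
    nlinarith
  have h4 : (k.factorial:ℝ) ≤ (k:ℝ)^k := by exact_mod_cast Nat.factorial_le_pow k
  calc k.factorial * (1/ε)^k * Real.exp (-(κ * u)) ≤ (k:ℝ)^k * (1/ε)^k * (Real.exp 1 ^ k * Real.exp (-(κ * w T))) := by gcongr
    _ = (κ * Real.exp 1)^k * (T^k * Real.exp (-(κ * w T))) := by rw [hT]; simp only [mul_pow, div_pow, one_pow]; field_simp
    _ ≤ _ := by gcongr

lemma cp_taylor_pos (n : ℕ) : ∀ (φ : ℕ → ℝ → ℂ) (S A : ℝ), (∀ k, ∀ y ∈ Icc 0 S, HasDerivAt (φ k) (φ (k+1) y) y) →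
    (∀ y ∈ Icc 0 S, ‖φ n y‖ ≤ A) → ∀ y ∈ Icc 0 S,
    ‖φ 0 y - ∑ k ∈ Finset.range n, φ k 0 * (y:ℂ)^k / k.factorial‖ ≤ A * y^n / n.factorial := by
  induction n with
  | zero => intro φ S A h1 h2 y hy; simpa using h2 y hy
  | succ n ih =>
    intro φ S A h1 h2 y hy
    have ih' := ih (fun k => φ (k+1)) S A (fun k => h1 (k+1)) h2
    have key := image_norm_le_of_norm_deriv_right_le_deriv_boundary
      (f := fun y => φ 0 y - ∑ k ∈ Finset.range (n+1), φ k 0 * (y:ℂ)^k / k.factorial)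
      (f' := fun y => φ 1 y - ∑ k ∈ Finset.range n, φ (k+1) 0 * (y:ℂ)^k / k.factorial)
      (a := 0) (b := S) (B := fun y => A * y^(n+1) / (n+1).factorial) (B' := fun y => A * y^n / n.factorial)
      ?_ ?_ ?_ ?_ ?_ hy
    · exact key
    · apply ContinuousOn.sub
      · exact fun y hy => (h1 0 y hy).continuousAt.continuousWithinAt
      · apply Continuous.continuousOn; fun_prop
    · intro x hx
      apply HasDerivAt.hasDerivWithinAt
      apply (h1 0 x ⟨hx.1, hx.2.le⟩).sub
      have h3 : ∀ k : ℕ, HasDerivAt (fun y : ℝ => φ (k+1) 0 * (y:ℂ)^(k+1) / ((k+1).factorial:ℂ)) (φ (k+1) 0 * (x:ℂ)^k / k.factorial) x := by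
        intro k
        have h4 : HasDerivAt (fun y : ℝ => (y:ℂ)^(k+1)) (((k+1:ℕ):ℂ) * (x:ℂ)^k) x := by
          have := ((hasDerivAt_pow (k+1) (x:ℂ)).comp_ofReal)
          simpa using this
        have h5 := (h4.const_mul (φ (k+1) 0)).div_const (((k+1).factorial:ℂ))
        refine h5.congr_deriv ?_
        rw [Nat.factorial_succ]
        have : (k.factorial:ℂ) ≠ 0 := by exact_mod_cast Nat.factorial_ne_zero k
        have : ((k:ℂ)+1) ≠ 0 := by exact_mod_cast Nat.succ_ne_zero k
        push_cast
        field_simp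
      have h6 := HasDerivAt.fun_sum (fun k (_ : k ∈ Finset.range n) => h3 k)
      have h7 : (fun y : ℝ => ∑ k ∈ Finset.range (n+1), φ k 0 * (y:ℂ)^k / k.factorial) =
          fun y : ℝ => (∑ k ∈ Finset.range n, φ (k+1) 0 * (y:ℂ)^(k+1) / ((k+1).factorial:ℂ)) + φ 0 0 := by
        ext y; rw [Finset.sum_range_succ']; simp
      rw [h7]
      exact h6.add_const _
    · simp [Finset.sum_range_succ']
    · intro x
      have h5 := ((hasDerivAt_pow (n+1) x).const_mul A).div_const ((n+1).factorial:ℝ)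
      refine h5.congr_deriv ?_
      rw [Nat.factorial_succ]
      push_cast
      have : (n.factorial:ℝ) ≠ 0 := by positivity
      field_simp
    · intro x hx
      exact ih' x ⟨hx.1, hx.2.le⟩

lemma cp_taylor (n : ℕ) (φ : ℕ → ℝ → ℂ) (S A x : ℝ) (h1 : ∀ k y, |y - x| ≤ S → HasDerivAt (φ k) (φ (k+1) y) y)
    (h2 : ∀ y, |y - x| ≤ S → ‖φ n y‖ ≤ A) (s : ℝ) (hs : |s| ≤ S) :
    ‖φ 0 (x + s) - ∑ k ∈ Finset.range n, φ k x * (s:ℂ)^k / k.factorial‖ ≤ A * |s|^n / n.factorial := by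
  rcases le_total 0 s with h | h
  · have := cp_taylor_pos n (fun k y => φ k (x + y)) S A (fun k y hy => ?_) (fun y hy => h2 _ (by simpa [abs_of_nonneg hy.1] using hy.2)) s ⟨h, by rwa [abs_of_nonneg h] at hs⟩
    · simpa [abs_of_nonneg h] using this
    · exact (h1 k (x+y) (by simpa [abs_of_nonneg hy.1] using hy.2)).comp_const_add x y
  · have := cp_taylor_pos n (fun k y => (-1)^k * φ k (x - y)) S A (fun k y hy => ?_) (fun y hy => ?_) (-s) ⟨by linarith, by rwa [abs_of_nonpos h] at hs⟩
    · rw [abs_of_nonpos h]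
      convert this using 3
      · simp
      · apply Finset.sum_congr rfl
        intro k _
        push_cast
        rw [neg_pow (s:ℂ)]
        simp only [sub_zero]
        have : ((-1:ℂ)^k)*(-1)^k = 1 := by rw [← mul_pow]; simp
        linear_combination (-(φ k x * (s:ℂ)^k/(k.factorial:ℂ))) * this
    · have h3 := (h1 k (x-y) (by simpa [abs_of_nonneg hy.1] using hy.2)).comp_const_sub x y
      have h4 := h3.const_mul ((-1:ℂ)^k)
      refine h4.congr_deriv ?_
      ring
    · rw [norm_mul]
      simpa using h2 (x-y) (by simpa [abs_of_nonneg hy.1] using hy.2)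

def cpP (A : ℕ → ℂ) (n : ℕ) : Polynomial ℂ := ∑ k ∈ Finset.range n, Polynomial.C (A k) * Polynomial.X^k

lemma cpP_eval (A : ℕ → ℂ) (n : ℕ) (z : ℂ) : (cpP A n).eval z = ∑ k ∈ Finset.range n, A k * z^k := by
  simp [cpP, Polynomial.eval_finsetSum]

lemma cpP_deg (A : ℕ → ℂ) (n : ℕ) : (cpP A n).natDegree ≤ n := by
  unfold cpP
  apply Polynomial.natDegree_sum_le_of_forall_le
  intro k hk
  exact (Polynomial.natDegree_C_mul_X_pow_le _ _).trans (Finset.mem_range.mp hk).le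

lemma cp_geom (n : ℕ) : ∑ k ∈ Finset.range n, ((1:ℝ)/2)^k ≤ 2 := by
  exact (Summable.sum_le_tsum _ (fun _ _ => by positivity) summable_geometric_two).trans tsum_geometric_two.le

lemma cpP_bound (A : ℕ → ℂ) (n : ℕ) (C2 : ℝ) (hA : ∀ k < n, ‖A k‖ * 2^k ≤ C2 * (1/2)^k) (hC : 0 ≤ C2) (z : ℂ) (hz : ‖z‖ ≤ 2) :
    ‖(cpP A n).eval z‖ ≤ 2 * C2 := by
  rw [cpP_eval]
  calc _ ≤ ∑ k ∈ Finset.range n, C2 * (1/2)^k := by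
        apply norm_sum_le_of_le
        intro k hk
        rw [norm_mul, norm_pow]
        refine le_trans ?_ (hA k (Finset.mem_range.mp hk))
        gcongr
    _ ≤ 2 * C2 := by rw [← Finset.mul_sum]; nlinarith [cp_geom n]

lemma cp_single (j : ℕ) (hj : 1 ≤ j) (C2 : ℝ) (hC2 : 1 ≤ C2) : ∃ K : ℝ, 1 ≤ K ∧ ∀ (n : ℕ) (A B : ℕ → ℂ) (φ : ℝ → ℂ) (p : ℝ),
    0 < p → p ≤ 1 → (∀ k < n, ‖A k‖ * 2^k ≤ C2 * (1/2)^k) → (∀ k < n, ‖B k‖ * 2^k ≤ C2 * (1/2)^k) →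
    (∀ s : ℝ, |s| ≤ 2 → ‖φ s^j - (cpP A n).eval (s:ℂ)‖ ≤ C2 * (1/3^(j+1))^n * (p^(2*j))^(2*j*(j+1))) →
    (∀ s : ℝ, |s| ≤ 2 → ‖φ s^(j+1) - (cpP B n).eval (s:ℂ)‖ ≤ C2 * (1/3^(j+1))^n * (p^(2*j))^(2*j*(j+1))) →
    ∃ F : ℂ → ℂ, DifferentiableOn ℂ F (Metric.ball 0 (1/2)) ∧ ∀ z ∈ Metric.ball (0:ℂ) (1/4), ‖F z‖ ≤ K ∧
      ‖(F z)^j - (cpP A n).eval z‖ ≤ K * p^(2*j) ∧ ‖(F z)^(j+1) - (cpP B n).eval z‖ ≤ K * p^(2*j) ∧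
      ∀ s : ℝ, z = s → ‖F z - φ s‖ ≤ K * p := by
  set E := 3 * C2 with hE
  have hE1 : 1 ≤ E := by linarith
  set K1 := E + (j+1:ℕ) * E^(j+1) * C2 + j * E^j * C2 with hK1
  have hK1E : E ≤ K1 := by
    have h1 : 0 ≤ ((j+1:ℕ):ℝ) * E^(j+1) * C2 := by positivity
    have h2 : 0 ≤ (j:ℝ) * E^j * C2 := by positivity
    linarith
  obtain ⟨K', hK', hcore⟩ := cp_core j hj K1 (hE1.trans hK1E)
  set K2 := K' + C2 with hK2
  refine ⟨((K2+1)*K2+K2+2), by nlinarith, ?_⟩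
  intro n A B φ p hp hp1 hA hB hA' hB'
  set q := p^(2*j) with hq
  have hq0 : 0 < q := by positivity
  have hq1 : q ≤ 1 := pow_le_one₀ hp.le hp1
  have hQ1 : q^(2*j*(j+1)) ≤ q := pow_le_of_le_one hq0.le hq1 (by positivity)
  have hn1 : (1/3^(j+1) : ℝ)^n ≤ 1 := pow_le_one₀ (by positivity) (by rw [div_le_one (by positivity)]; exact one_le_pow₀ (by norm_num))
  have hbig : ∀ z ∈ Metric.closedBall (0:ℂ) 2, ‖(cpP A n).eval z‖ ≤ K1 ∧ ‖(cpP B n).eval z‖ ≤ K1 ∧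
      ‖((cpP A n).eval z)^(j+1) - ((cpP B n).eval z)^j‖ ≤ K1 * q^(2*j*(j+1)) := by
    intro z hz
    have hz' : ‖z‖ ≤ 2 := by simpa using hz
    refine ⟨(cpP_bound A n C2 hA (by linarith) z hz').trans (by linarith), (cpP_bound B n C2 hB (by linarith) z hz').trans (by linarith), ?_⟩
    set P : Polynomial ℂ := ((cpP A n)^(j+1) - (cpP B n)^j).comp (Polynomial.C 2 * Polynomial.X) with hP
    have hdeg : P.natDegree ≤ n * (j+1) := by
      rw [hP, Polynomial.natDegree_comp]
      have h1 : (Polynomial.C (2:ℂ) * Polynomial.X).natDegree ≤ 1 := Polynomial.natDegree_C_mul_le _ _ |>.trans Polynomial.natDegree_X_le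
      have h2 : ((cpP A n)^(j+1) - (cpP B n)^j).natDegree ≤ n * (j+1) := by
        apply (Polynomial.natDegree_sub_le _ _).trans
        apply max_le
        · apply Polynomial.natDegree_pow_le.trans
          rw [mul_comm]; exact Nat.mul_le_mul_right _ (cpP_deg A n)
        · apply Polynomial.natDegree_pow_le.trans
          rw [mul_comm]; exact Nat.mul_le_mul (cpP_deg B n) (by omega)
      calc _ ≤ n*(j+1) * 1 := Nat.mul_le_mul h2 h1
        _ = _ := by ring
    have heval : ∀ y, P.eval y = ((cpP A n).eval (2*y))^(j+1) - ((cpP B n).eval (2*y))^j := by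
      intro y; simp [hP]
    have hreal : ∀ y : ℝ, |y| ≤ 1 → ‖P.eval (y:ℂ)‖ ≤ K1 * ((1/3^(j+1))^n * q^(2*j*(j+1))) := by
      intro y hy
      have hs : |2*y| ≤ 2 := by rw [abs_mul]; simp; linarith
      have h1 := hA' (2*y) hs
      have h2 := hB' (2*y) hs
      rw [heval]
      have hc : (((2*y:ℝ)):ℂ) = 2 * (y:ℂ) := by push_cast; ring
      rw [hc] at h1 h2
      set a := (cpP A n).eval (2*(y:ℂ))
      set b := (cpP B n).eval (2*(y:ℂ))
      set f0 := φ (2*y)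
      have hny : ‖(2*(y:ℂ))‖ ≤ 2 := by rw [← hc, Complex.norm_real]; exact hs
      have ha : ‖a‖ ≤ 2 * C2 := cpP_bound A n C2 hA (by linarith) _ hny
      have hb : ‖b‖ ≤ 2 * C2 := cpP_bound B n C2 hB (by linarith) _ hny
      set δ := (1/3^(j+1):ℝ)^n * q^(2*j*(j+1)) with hδ
      have hδ1 : δ ≤ 1 := mul_le_one₀ hn1 (by positivity) (hQ1.trans hq1)
      have hδ0 : 0 < δ := by positivity
      rw [mul_assoc] at h1 h2
      have hCd : C2 * δ ≤ C2 := by nlinarith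
      have hfj : ‖f0^j‖ ≤ E := by
        calc ‖f0^j‖ = ‖(f0^j - a) + a‖ := by ring_nf
          _ ≤ ‖f0^j - a‖ + ‖a‖ := norm_add_le _ _
          _ ≤ E := by linarith
      have hfj1 : ‖f0^(j+1)‖ ≤ E := by
        calc ‖f0^(j+1)‖ = ‖(f0^(j+1) - b) + b‖ := by ring_nf
          _ ≤ ‖f0^(j+1) - b‖ + ‖b‖ := norm_add_le _ _
          _ ≤ E := by linarith
      have h3 := cp_pow_sub a (f0^j) E hE1 (by linarith) hfj (j+1)
      have h4 := cp_pow_sub b (f0^(j+1)) E hE1 (by linarith) hfj1 j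
      rw [norm_sub_rev] at h1 h2
      have h5 : (f0^j)^(j+1) = (f0^(j+1))^j := by rw [← pow_mul, ← pow_mul]; congr 1; ring
      calc ‖a^(j+1) - b^j‖ = ‖(a^(j+1) - (f0^j)^(j+1)) - (b^j - (f0^(j+1))^j)‖ := by rw [h5]; ring_nf
        _ ≤ ‖a^(j+1) - (f0^j)^(j+1)‖ + ‖b^j - (f0^(j+1))^j‖ := norm_sub_le _ _
        _ ≤ (j+1:ℕ) * E^(j+1) * (C2 * δ) + j * E^j * (C2 * δ) := by
            refine add_le_add (h3.trans ?_) (h4.trans ?_)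
            · gcongr
            · gcongr
        _ = ((j+1:ℕ) * E^(j+1) * C2 + j * E^j * C2) * δ := by ring
        _ ≤ K1 * δ := by
            apply mul_le_mul_of_nonneg_right _ hδ0.le
            linarith
    have hz2 : ‖z/2‖ ≤ 1 := by rw [norm_div]; simp; linarith
    have h6 := cp_bernstein P _ hdeg _ hreal (z/2) hz2
    rw [heval, mul_div_cancel₀ z (two_ne_zero)] at h6
    refine h6.trans (le_of_eq ?_)
    have h7 : (3:ℝ)^(n*(j+1)) * (1/3^(j+1))^n = 1 := by
      rw [mul_comm n, pow_mul, ← mul_pow]; simp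
    linear_combination (K1 * q^(2*j*(j+1))) * h7
  obtain ⟨F, hF, hFb⟩ := hcore (fun z => (cpP A n).eval z) (fun z => (cpP B n).eval z) (cpP A n).differentiable (cpP B n).differentiable q hq0 hq1 hbig
  have hKK : K' ≤ ((K2+1)*K2+K2+2) := by nlinarith
  refine ⟨F, hF, fun z hz => ?_⟩
  obtain ⟨h1, h2, h3⟩ := hFb z hz
  refine ⟨h1.trans hKK, h2.trans (by gcongr), h3.trans (by gcongr), ?_⟩
  rintro s rfl
  have hs : |s| ≤ 2 := by
    have : |s| < 1/4 := by simpa using hz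
    linarith
  have hC : C2 * (1/3^(j+1))^n * q^(2*j*(j+1)) ≤ C2 * q := by
    calc C2 * (1/3^(j+1))^n * q^(2*j*(j+1)) ≤ C2 * 1 * q := by gcongr
      _ = _ := by ring
  apply cp_alg j hj K2 (by linarith) _ _ p hp hp1 (by linarith)
  · calc ‖F s^j - φ s^j‖ = ‖(F s^j - (cpP A n).eval (s:ℂ)) - (φ s^j - (cpP A n).eval (s:ℂ))‖ := by ring_nf
      _ ≤ K' * q + C2 * q := (norm_sub_le _ _).trans (add_le_add h2 ((hA' s hs).trans hC))
      _ = K2 * q := by rw [hK2]; ring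
  · calc ‖F s^(j+1) - φ s^(j+1)‖ = ‖(F s^(j+1) - (cpP B n).eval (s:ℂ)) - (φ s^(j+1) - (cpP B n).eval (s:ℂ))‖ := by ring_nf
      _ ≤ K' * q + C2 * q := (norm_sub_le _ _).trans (add_le_add h3 ((hB' s hs).trans hC))
      _ = K2 * q := by rw [hK2]; ring

def cpc (j : ℕ) : ℝ := 1 / (4 * 3^(j+2))
def cpk (j : ℕ) : ℝ := 1 / (8 * j^2 * (j+1))

lemma cpc_pos (j : ℕ) : 0 < cpc j := by unfold cpc; positivity
lemma cpk_pos (j : ℕ) (hj : 1 ≤ j) : 0 < cpk j := by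
  unfold cpk
  have : (0:ℝ) < j := by exact_mod_cast hj
  positivity
lemma cpk_le (j : ℕ) (hj : 1 ≤ j) : cpk j ≤ 1 := by
  unfold cpk
  have : (1:ℝ) ≤ j := by exact_mod_cast hj
  rw [div_le_one (by positivity)]
  nlinarith [sq_nonneg (j:ℝ), mul_nonneg (sq_nonneg (j:ℝ)) (show (0:ℝ) ≤ j by linarith)]

lemma cpc_le (j : ℕ) : cpc j ≤ 1/36 := by
  unfold cpc
  apply one_div_le_one_div_of_le (by norm_num)
  have : (1:ℝ) ≤ 3^j := one_le_pow₀ (by norm_num)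
  rw [pow_add]; nlinarith

lemma cpc_e (j : ℕ) : 2 * cpc j * Real.exp 1 ≤ 1/3^(j+1) := by
  have := Real.exp_one_lt_d9
  have h : (0:ℝ) < 3^(j+1) := by positivity
  have e : cpc j = (1/12) * (1/3^(j+1)) := by unfold cpc; rw [pow_succ _ (j+1)]; field_simp; norm_num
  rw [e]
  have h2 : 0 < 1/(3:ℝ)^(j+1) := by positivity
  nlinarith

lemma cpP_scale (a : ℕ → ℂ) (l : ℝ) (hl : 0 < l) (n : ℕ) (z : ℂ) :
    (cpP (fun k => a k * (l:ℂ)^k) n).eval (z/l) = ∑ k ∈ Finset.range n, a k * z^k := by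
  rw [cpP_eval]
  apply Finset.sum_congr rfl
  intro k _
  have : (l:ℂ) ≠ 0 := by exact_mod_cast hl.ne'
  rw [div_pow]; field_simp

lemma cp_p_eq (j : ℕ) (hj : 1 ≤ j) (u : ℝ) :
    (Real.exp (-(cpk j * u))^(2*j))^(2*j*(j+1)) = Real.exp (-(u/2)) := by
  rw [← pow_mul, ← Real.exp_nat_mul]
  congr 1
  unfold cpk
  have : (j:ℝ) ≠ 0 := by positivity
  push_cast
  field_simp
  ring

-- remainder estimate for one family
lemma cp_rem (j : ℕ) (w : ℝ → ℝ) (C0 C1 R ε u : ℝ) (hC0 : 1 ≤ C0) (hC1 : 1 ≤ C1) (hε : 0 < ε) (hεR : ε ≤ R) (n : ℕ)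
    (hB : cpM w n * ε^n ≤ C1 * n.factorial * Real.exp 1 ^ n * Real.exp (-(u/2)))
    (dg : ℕ → ℝ → ℂ) (hd : ∀ k y, |y| < 2*R → HasDerivAt (dg k) (dg (k+1) y) y)
    (hb : ∀ k y, |y| < 2*R → ‖dg k y‖ ≤ C0 * cpM w k) (x : ℝ) (hx : |x| < R) (s : ℝ) (hs : |s| ≤ 2) :
    ‖dg 0 (x + cpc j * ε * s) - (cpP (fun k => (dg k x / k.factorial) * ((cpc j * ε : ℝ):ℂ)^k) n).eval (s:ℂ)‖
      ≤ C0 * C1 * (1/3^(j+1))^n * Real.exp (-(u/2)) := by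
  have hc := cpc_pos j
  have hc2 := cpc_le j
  have hl : 0 < cpc j * ε := by positivity
  have hS : ∀ y, |y - x| ≤ ε → |y| < 2*R := by
    intro y hy
    have := abs_sub_abs_le_abs_sub y x
    linarith
  have hls : |cpc j * ε * s| ≤ 2 * cpc j * ε := by
    rw [abs_mul, abs_of_pos hl]; nlinarith
  have h1 := cp_taylor n dg ε (C0 * cpM w n) x (fun k y hy => hd k y (hS y hy)) (fun y hy => hb n y (hS y hy)) (cpc j * ε * s)
    (hls.trans (by nlinarith))
  have h2 : (cpP (fun k => (dg k x / k.factorial) * ((cpc j * ε : ℝ):ℂ)^k) n).eval (s:ℂ) =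
      ∑ k ∈ Finset.range n, dg k x * ((cpc j * ε * s : ℝ):ℂ)^k / k.factorial := by
    rw [cpP_eval]
    apply Finset.sum_congr rfl
    intro k _
    push_cast
    rw [mul_pow _ (s:ℂ)]; ring
  rw [h2]
  refine h1.trans ?_
  rw [div_le_iff₀ (by positivity)]
  have hM := cpM_pos w n
  calc C0 * cpM w n * |cpc j * ε * s|^n ≤ C0 * cpM w n * (2 * cpc j * ε)^n := by gcongr
    _ = C0 * (2*cpc j)^n * (cpM w n * ε^n) := by rw [mul_pow _ ε]; ring
    _ ≤ C0 * (2*cpc j)^n * (C1 * n.factorial * Real.exp 1 ^ n * Real.exp (-(u/2))) := by gcongr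
    _ = C0 * C1 * (2*cpc j * Real.exp 1)^n * Real.exp (-(u/2)) * n.factorial := by rw [mul_pow _ (Real.exp 1)]; ring
    _ ≤ _ := by
      have := cpc_e j
      gcongr

lemma cp_coefb (j : ℕ) (w : ℝ → ℝ) (C0 C1 ε : ℝ) (hC0 : 1 ≤ C0) (hC1 : 1 ≤ C1) (hε : 0 < ε) (k : ℕ)
    (hA : cpM w k * ε^k ≤ k.factorial) (a : ℂ) (ha : ‖a‖ ≤ C0 * cpM w k) :
    ‖(a / k.factorial) * ((cpc j * ε : ℝ):ℂ)^k‖ * 2^k ≤ C0 * C1 * (1/2)^k := by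
  have hc := cpc_pos j
  have hc2 := cpc_le j
  rw [norm_mul, norm_div, norm_pow, Complex.norm_natCast, Complex.norm_real, Real.norm_eq_abs, abs_of_pos (by positivity : 0 < cpc j * ε)]
  calc ‖a‖ / k.factorial * (cpc j * ε)^k * 2^k ≤ (C0 * cpM w k) / k.factorial * (cpc j * ε)^k * 2^k := by gcongr
    _ = C0 * (cpM w k * ε^k / k.factorial) * (cpc j * 2)^k := by rw [mul_pow, mul_pow]; ring
    _ ≤ C0 * 1 * (1/2)^k := by
      have := cpM_pos w k
      gcongr
      · rw [div_le_one (by positivity)]; exact hA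
      · linarith
    _ ≤ C0 * C1 * (1/2)^k := by gcongr

lemma cp_diffb (j : ℕ) (w : ℝ → ℝ) (C0 C1 ε u : ℝ) (hC0 : 1 ≤ C0) (hC1 : 1 ≤ C1) (hε : 0 < ε) (n n' : ℕ) (hnn : n ≤ n')
    (hB : cpM w n * ε^n ≤ C1 * n.factorial * Real.exp 1 ^ n * Real.exp (-(u/2)))
    (hC : ∀ k, n < k → k ≤ n' → cpM w k * (ε/2)^k ≤ C1 * k.factorial * Real.exp 1 ^ k * Real.exp (-(u/2)))
    (a : ℕ → ℂ) (ha : ∀ k, ‖a k‖ ≤ C0 * cpM w k) (z : ℂ) (hz : ‖z‖ ≤ cpc j * (ε/2)) :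
    ‖∑ k ∈ Finset.range n, a k / k.factorial * z^k - ∑ k ∈ Finset.range n', a k / k.factorial * z^k‖ ≤ 2 * (C0 * C1) * Real.exp (-(u/2)) := by
  have hc := cpc_pos j
  have hc2 := cpc_le j
  have hce : cpc j * Real.exp 1 ≤ 1/2 := by
    have := Real.exp_one_lt_d9
    nlinarith
  rw [norm_sub_rev, ← Finset.sum_Ico_eq_sub _ hnn]
  calc _ ≤ ∑ k ∈ Finset.Ico n n', (C0 * C1 * Real.exp (-(u/2))) * (1/2)^k := by
        apply norm_sum_le_of_le
        intro k hk
        rw [Finset.mem_Ico] at hk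
        have hM := cpM_pos w k
        have h1 : cpM w k * (ε/2)^k ≤ C1 * k.factorial * Real.exp 1 ^ k * Real.exp (-(u/2)) := by
          rcases hk.1.eq_or_lt with h | h
          · subst h
            refine le_trans ?_ hB
            gcongr
            linarith
          · exact hC k h hk.2.le
        rw [norm_mul, norm_div, norm_pow, Complex.norm_natCast]
        calc ‖a k‖ / k.factorial * ‖z‖^k ≤ C0 * cpM w k / k.factorial * (cpc j * (ε/2))^k := by
              gcongr; exact ha k
          _ = C0 * (cpM w k * (ε/2)^k) / k.factorial * cpc j ^ k := by rw [mul_pow]; ring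
          _ ≤ C0 * (C1 * k.factorial * Real.exp 1 ^ k * Real.exp (-(u/2))) / k.factorial * cpc j ^ k := by gcongr
          _ = (C0 * C1 * Real.exp (-(u/2))) * (cpc j * Real.exp 1)^k := by rw [mul_pow]; field_simp
          _ ≤ _ := by gcongr
    _ ≤ ∑ k ∈ Finset.range n', (C0 * C1 * Real.exp (-(u/2))) * (1/2)^k := by
        apply Finset.sum_le_sum_of_subset_of_nonneg
        · intro k hk; rw [Finset.mem_Ico] at hk; exact Finset.mem_range.mpr hk.2
        · intros; positivity
    _ ≤ _ := by
        rw [← Finset.mul_sum]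
        calc _ ≤ (C0 * C1 * Real.exp (-(u/2))) * 2 := by gcongr; exact cp_geom n'
          _ = _ := by ring

lemma cp_local (j : ℕ) (hj : 1 ≤ j) (w : ℝ → ℝ) (hw : CpW w) (R C0 : ℝ) (hR : 0 < R) (hC0 : 1 ≤ C0) (f : ℝ → ℂ) (dg dh : ℕ → ℝ → ℂ)
    (hdg : ∀ k y, |y| < 2*R → HasDerivAt (dg k) (dg (k+1) y) y) (hdh : ∀ k y, |y| < 2*R → HasDerivAt (dh k) (dh (k+1) y) y)
    (hbg : ∀ k y, |y| < 2*R → ‖dg k y‖ ≤ C0 * cpM w k) (hbh : ∀ k y, |y| < 2*R → ‖dh k y‖ ≤ C0 * cpM w k)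
    (hg : ∀ y, |y| < 2*R → dg 0 y = f y^j) (hh : ∀ y, |y| < 2*R → dh 0 y = f y^(j+1)) :
    ∃ ε0 : ℝ, 0 < ε0 ∧ ε0 ≤ 1 ∧ ε0 ≤ R ∧ ∃ u : ℕ → ℝ, (∀ i, 0 ≤ u i) ∧ (∀ i T, 0 ≤ T → w T ≤ u i + ε0/2^i * T) ∧ ∃ K : ℝ, 1 ≤ K ∧
      ∀ x, |x| < R → ∃ F : ℕ → ℂ → ℂ, ∀ i,
        DifferentiableOn ℂ (F i) (Metric.ball 0 (2 * (cpc j * ε0/4/2^i))) ∧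
        (∀ z ∈ Metric.ball (0:ℂ) (cpc j * ε0/4/2^i), ‖F i z‖ ≤ K) ∧
        (∀ s : ℝ, |s| < cpc j * ε0/4/2^i → ‖F i s - f (x+s)‖ ≤ K * Real.exp (-(cpk j * u i))) ∧
        (∀ z ∈ Metric.ball (0:ℂ) (cpc j * ε0/4/2^(i+1)), ‖F i z - F (i+1) z‖ ≤ K * Real.exp (-(cpk j * u i))) := by
  obtain ⟨ε0, he0, he1, heR, C1, hC1, u, n, hu0, hum, hnm, huT, hA, hB, hC⟩ := cp_weights hw R hR
  have hC2 : 1 ≤ C0 * C1 := by nlinarith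
  obtain ⟨K, hK, hsing⟩ := cp_single j hj (C0*C1) hC2
  have hc := cpc_pos j
  have hc2 := cpc_le j
  set K2 := 2 * K + 2 * (C0 * C1) with hK2
  set K3 := (K2+1)*K2+K2+2 with hK3
  have hKK3 : K ≤ K3 := by nlinarith
  have hee : ∀ i : ℕ, ε0/2^i ≤ ε0 := fun i => div_le_self he0.le (one_le_pow₀ (by norm_num))
  refine ⟨ε0, he0, he1, heR, u, hu0, huT, K3, hK.trans hKK3, fun x hx => ?_⟩
  have hx2 : |x| < 2*R := by linarith
  set p : ℕ → ℝ := fun i => Real.exp (-(cpk j * u i)) with hp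
  have hp0 : ∀ i, 0 < p i := fun i => Real.exp_pos _
  have hp1 : ∀ i, p i ≤ 1 := fun i => by
    rw [hp, Real.exp_le_one_iff]
    have := mul_nonneg (cpk_pos j hj).le (hu0 i)
    linarith
  set lam : ℕ → ℝ := fun i => cpc j * (ε0/2^i) with hlam
  have hl0 : ∀ i, 0 < lam i := fun i => by positivity
  have hex : ∀ i, ∃ F : ℂ → ℂ, DifferentiableOn ℂ F (Metric.ball 0 (1/2)) ∧ ∀ z ∈ Metric.ball (0:ℂ) (1/4), ‖F z‖ ≤ K ∧
      ‖(F z)^j - (cpP (fun k => (dg k x / k.factorial) * ((lam i : ℝ):ℂ)^k) (n i)).eval z‖ ≤ K * p i^(2*j) ∧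
      ‖(F z)^(j+1) - (cpP (fun k => (dh k x / k.factorial) * ((lam i : ℝ):ℂ)^k) (n i)).eval z‖ ≤ K * p i^(2*j) ∧
      ∀ s : ℝ, z = s → ‖F z - f (x + lam i * s)‖ ≤ K * p i := by
    intro i
    have hlt : ∀ s : ℝ, |s| ≤ 2 → |x + lam i * s| < 2 * R := by
      intro s hs
      have h1 : |lam i * s| ≤ R := by
        rw [abs_mul, abs_of_pos (hl0 i)]
        have h2 : lam i ≤ 1/36 * R := by
          have := (hee i).trans heR
          have h3 : 0 < ε0/2^i := by positivity
          calc lam i ≤ 1/36 * (ε0/2^i) := mul_le_mul_of_nonneg_right hc2 h3.le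
            _ ≤ _ := by gcongr
        have := hl0 i
        nlinarith
      have := abs_add_le x (lam i * s)
      linarith
    refine hsing (n i) _ _ (fun s => f (x + lam i * s)) (p i) (hp0 i) (hp1 i) ?_ ?_ ?_ ?_
    · intro k hk
      exact cp_coefb j w C0 C1 _ hC0 hC1 (by positivity) k (hA i k hk.le) _ (hbg k x hx2)
    · intro k hk
      exact cp_coefb j w C0 C1 _ hC0 hC1 (by positivity) k (hA i k hk.le) _ (hbh k x hx2)
    · intro s hs
      have := cp_rem j w C0 C1 R (ε0/2^i) (u i) hC0 hC1 (by positivity) ((hee i).trans heR) (n i) (hB i) dg hdg hbg x hx s hs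
      rw [cp_p_eq j hj, ← hg _ (hlt s hs)]
      exact this
    · intro s hs
      have := cp_rem j w C0 C1 R (ε0/2^i) (u i) hC0 hC1 (by positivity) ((hee i).trans heR) (n i) (hB i) dh hdh hbh x hx s hs
      rw [cp_p_eq j hj, ← hh _ (hlt s hs)]
      exact this
  choose F hFd hF using hex
  have hη : ∀ i : ℕ, cpc j * ε0/4/2^i = lam i * (1/4) := fun i => by rw [hlam]; ring
  have hin : ∀ i (z : ℂ), ‖z‖ < lam i * (1/4) → z / (lam i:ℂ) ∈ Metric.ball (0:ℂ) (1/4) := by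
    intro i z hz
    rw [mem_ball_zero_iff, norm_div, Complex.norm_real, Real.norm_eq_abs, abs_of_pos (hl0 i), div_lt_iff₀ (hl0 i)]
    linarith
  refine ⟨fun i z => F i (z / (lam i:ℂ)), fun i => ⟨?_, ?_, ?_, ?_⟩⟩
  · apply (hFd i).comp (t := Metric.ball (0:ℂ) (1/2))
    · apply Differentiable.differentiableOn; fun_prop
    · intro z hz
      rw [mem_ball_zero_iff] at hz ⊢
      rw [hη] at hz
      rw [norm_div, Complex.norm_real, Real.norm_eq_abs, abs_of_pos (hl0 i), div_lt_iff₀ (hl0 i)]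
      linarith
  · intro z hz
    rw [mem_ball_zero_iff, hη] at hz
    exact (hF i _ (hin i z hz)).1.trans hKK3
  · intro s hs
    rw [hη] at hs
    have h1 := (hF i _ (hin i s (by simpa using hs))).2.2.2 (s / lam i) (by push_cast; rfl)
    rw [mul_div_cancel₀ _ (hl0 i).ne'] at h1
    exact h1.trans (by have := hp0 i; gcongr)
  · intro z hz
    rw [mem_ball_zero_iff, hη] at hz
    have hlam2 : lam (i+1) = cpc j * (ε0/2^i/2) := by rw [hlam]; simp only [pow_succ]; ring
    have hlam3 : lam (i+1) = lam i / 2 := by rw [hlam2, hlam]; ring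
    have hli := hl0 i
    have hli1 := hl0 (i+1)
    have hz1 : ‖z‖ < lam i * (1/4) := by linarith
    have hz2 : ‖z‖ ≤ cpc j * (ε0/2^i/2) := by rw [← hlam2]; linarith
    obtain ⟨a1, a2, a3, -⟩ := hF i _ (hin i z hz1)
    obtain ⟨b1, b2, b3, -⟩ := hF (i+1) _ (hin (i+1) z hz)
    rw [cpP_scale _ _ (hl0 _)] at a2 a3 b2 b3
    have hC' : ∀ k, n i < k → k ≤ n (i+1) → cpM w k * (ε0/2^i/2)^k ≤ C1 * k.factorial * Real.exp 1 ^ k * Real.exp (-(u i/2)) := by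
      intro k h1 h2
      have := hC i k h1 h2
      rwa [pow_succ, ← div_div] at this
    have hdg' := cp_diffb j w C0 C1 (ε0/2^i) (u i) hC0 hC1 (by positivity) (n i) (n (i+1)) (hnm i) (hB i) hC' (fun k => dg k x) (fun k => hbg k x hx2) z hz2
    have hdh' := cp_diffb j w C0 C1 (ε0/2^i) (u i) hC0 hC1 (by positivity) (n i) (n (i+1)) (hnm i) (hB i) hC' (fun k => dh k x) (fun k => hbh k x hx2) z hz2
    have hpm : p (i+1) ≤ p i := by
      rw [hp]; simp only [Real.exp_le_exp]
      have := mul_le_mul_of_nonneg_left (hum i) (cpk_pos j hj).le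
      linarith
    have hpm2 : p (i+1)^(2*j) ≤ p i^(2*j) := pow_le_pow_left₀ (hp0 _).le hpm _
    have hQ : Real.exp (-(u i/2)) ≤ p i^(2*j) := by
      rw [← cp_p_eq j hj]
      exact pow_le_of_le_one (pow_nonneg (hp0 i).le _) (pow_le_one₀ (hp0 i).le (hp1 i)) (by positivity)
    have hcomb : ∀ (X Y S T : ℂ), ‖X - S‖ ≤ K * p i^(2*j) → ‖Y - T‖ ≤ K * p (i+1)^(2*j) → ‖S - T‖ ≤ 2 * (C0 * C1) * Real.exp (-(u i/2)) →
        ‖X - Y‖ ≤ K2 * p i^(2*j) := by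
      intro X Y S T h1 h2 h3
      calc ‖X - Y‖ = ‖(X - S) - (Y - T) + (S - T)‖ := by ring_nf
        _ ≤ ‖X - S‖ + ‖Y - T‖ + ‖S - T‖ := (norm_add_le _ _).trans (by gcongr; exact norm_sub_le _ _)
        _ ≤ K * p i^(2*j) + K * p i^(2*j) + 2 * (C0 * C1) * p i^(2*j) := by
          refine add_le_add (add_le_add h1 (h2.trans (by gcongr))) (h3.trans (by gcongr))
        _ = _ := by rw [hK2]; ring
    exact cp_alg j hj K2 (by linarith) _ _ (p i) (hp0 i) (hp1 i) (a1.trans (by linarith)) (hcomb _ _ _ _ a2 b2 hdg') (hcomb _ _ _ _ a3 b3 hdh')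

def cpcf (D : ℂ → ℂ) (k : ℕ) : ℂ := iteratedDeriv k D 0 / k.factorial

lemma cpcf_bound (D : ℂ → ℂ) (ρ d : ℝ) (hρ : 0 < ρ) (hD : DifferentiableOn ℂ D (Metric.ball 0 ρ))
    (hd : ∀ z ∈ Metric.ball (0:ℂ) ρ, ‖D z‖ ≤ d) (k : ℕ) : ‖cpcf D k‖ ≤ d * (2/ρ)^k := by
  have h1 : DiffContOnCl ℂ D (Metric.ball 0 (ρ/2)) := by
    apply DifferentiableOn.diffContOnCl
    apply hD.mono
    rw [closure_ball _ (by positivity)]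
    exact Metric.closedBall_subset_ball (by linarith)
  have h2 := Complex.norm_iteratedDeriv_le_of_forall_mem_sphere_norm_le (C := d) k (by positivity : 0 < ρ/2) h1
    (fun z hz => hd z (by rw [mem_sphere_zero_iff_norm] at hz; rw [mem_ball_zero_iff, hz]; linarith))
  unfold cpcf
  rw [norm_div, Complex.norm_natCast, div_le_iff₀ (by positivity)]
  refine h2.trans (le_of_eq ?_)
  rw [div_pow, div_pow]; field_simp

lemma cpcf_sub (D E : ℂ → ℂ) (ρ : ℝ) (hρ : 0 < ρ) (hD : DifferentiableOn ℂ D (Metric.ball 0 ρ)) (hE : DifferentiableOn ℂ E (Metric.ball 0 ρ)) (k : ℕ) :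
    cpcf (fun z => D z - E z) k = cpcf D k - cpcf E k := by
  have hb : Metric.ball (0:ℂ) ρ ∈ nhds (0:ℂ) := Metric.ball_mem_nhds _ hρ
  have h1 : ContDiffAt ℂ k D 0 := (hD.contDiffOn Metric.isOpen_ball).contDiffAt hb
  have h2 : ContDiffAt ℂ k E 0 := (hE.contDiffOn Metric.isOpen_ball).contDiffAt hb
  unfold cpcf
  rw [iteratedDeriv_fun_sub h1 h2, sub_div]

lemma cpcf_rem (D : ℂ → ℂ) (ρ d : ℝ) (hρ : 0 < ρ) (hd0 : 0 ≤ d) (hD : DifferentiableOn ℂ D (Metric.ball 0 ρ))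
    (hd : ∀ z ∈ Metric.ball (0:ℂ) ρ, ‖D z‖ ≤ d) (m : ℕ) (s : ℂ) (hs : ‖s‖ ≤ ρ/4) :
    ‖D s - ∑ k ∈ Finset.range m, cpcf D k * s^k‖ ≤ 2 * d * (2 * ‖s‖/ρ)^m := by
  have h1 := Complex.hasSum_taylorSeries_on_ball hD (z := s) (by rw [mem_ball_zero_iff]; linarith)
  have h2 : HasSum (fun k => cpcf D k * s^k) (D s) := by
    have e : (fun k => cpcf D k * s^k) = fun n : ℕ => ((n.factorial : ℂ)⁻¹ • (s - 0)^n • iteratedDeriv n D 0) := by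
      ext k
      unfold cpcf
      simp only [sub_zero, smul_eq_mul]
      field_simp
    rw [e]; exact h1
  have h3 := (hasSum_nat_add_iff' m).mpr h2
  have h4 : HasSum (fun k : ℕ => (d * (2*‖s‖/ρ)^m) * (1/2)^k) ((d * (2*‖s‖/ρ)^m) * 2) := hasSum_geometric_two.mul_left _
  have h5 := h3.norm_le_of_bounded h4
  refine (h5 ?_).trans (le_of_eq (by ring))
  intro k
  rw [norm_mul, norm_pow]
  have h6 : 2 * ‖s‖/ρ ≤ 1/2 := by rw [div_le_iff₀ hρ]; linarith
  calc ‖cpcf D (k+m)‖ * ‖s‖^(k+m) ≤ d * (2/ρ)^(k+m) * ‖s‖^(k+m) := by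
        gcongr; exact cpcf_bound D ρ d hρ hD hd _
    _ = d * (2 * ‖s‖/ρ)^m * (2*‖s‖/ρ)^k := by
        rw [mul_assoc, ← mul_pow, pow_add, mul_assoc, mul_comm ((2*‖s‖/ρ)^m)]; congr 3 <;> ring
    _ ≤ _ := by gcongr

lemma cp_syn (η0 K : ℝ) (hη0 : 0 < η0) (hη1 : η0 ≤ 1) (hK : 1 ≤ K) (P : ℕ → ℝ) (hP0 : ∀ i, 0 ≤ P i)
    (hP : ∀ N : ℕ, ∃ B : ℝ, 0 < B ∧ ∀ i, P i ≤ B * (η0/2^i)^N) :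
    ∃ Cm : ℕ → ℝ, ∀ (φ : ℝ → ℂ) (F : ℕ → ℂ → ℂ), (∀ i, DifferentiableOn ℂ (F i) (Metric.ball 0 (η0/2^i)) ∧
        (∀ z ∈ Metric.ball (0:ℂ) (η0/2^i), ‖F i z‖ ≤ K) ∧
        (∀ s : ℝ, |s| < η0/2^i → ‖F i s - φ s‖ ≤ K * P i) ∧
        (∀ z ∈ Metric.ball (0:ℂ) (η0/2^(i+1)), ‖F i z - F (i+1) z‖ ≤ K * P i)) →
      ∃ a : ℕ → ℂ, (∀ k S, (∀ l, ∑ i ∈ Finset.range l, P i * (4/(η0/2^i))^k ≤ S) → ‖a k‖ ≤ K * (2/η0)^k + K * S) ∧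
        a 0 = φ 0 ∧
        ∀ m : ℕ, 1 ≤ m → ∀ s : ℝ, |s| ≤ η0/4 → ‖φ s - ∑ k ∈ Finset.range m, a k * (s:ℂ)^k‖ ≤ Cm m * |s|^m := by
  choose B hB0 hB using hP
  set η : ℕ → ℝ := fun i => η0/2^i with hη
  have hηp : ∀ i, 0 < η i := fun i => by positivity
  have hηs : ∀ i, η (i+1) = η i / 2 := fun i => by rw [hη]; simp only [pow_succ]; ring
  have hηle : ∀ i, η i ≤ 1 := fun i => (div_le_self hη0.le (one_le_pow₀ (by norm_num))).trans hη1
  -- sums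
  have hsum : ∀ k l : ℕ, ∑ i ∈ Finset.range l, P i * (4/η i)^k ≤ 2 * (B (k+1) * 4^k) := by
    intro k l
    calc ∑ i ∈ Finset.range l, P i * (4/η i)^k ≤ ∑ i ∈ Finset.range l, (B (k+1) * 4^k) * (1/2)^i := by
          apply Finset.sum_le_sum
          intro i _
          have := hηp i
          calc P i * (4/η i)^k ≤ B (k+1) * (η i)^(k+1) * (4/η i)^k := by gcongr; exact hB (k+1) i
            _ = (B (k+1) * 4^k) * η i := by rw [div_pow (4:ℝ) (η i)]; rw [pow_succ (η i)]; field_simp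
            _ ≤ _ := by
              have := hB0 (k+1)
              gcongr
              rw [hη, one_div, inv_pow]
              calc η0/2^i ≤ 1/2^i := by gcongr
                _ = _ := by rw [one_div]
      _ ≤ _ := by
        rw [← Finset.mul_sum]
        have := hB0 (k+1)
        calc _ ≤ (B (k+1) * 4^k) * 2 := by gcongr; exact cp_geom l
          _ = _ := by ring
  refine ⟨fun m => K * B m * 8^m + 2 * K * (2/η0)^m + 2 * K * (2 * (B (m+1) * 4^m)) +
    ∑ k ∈ Finset.range m, (2 * (K * B (m+1) * 4^k)) * 8^(m-k), ?_⟩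
  intro φ F hF
  have hDd : ∀ i, DifferentiableOn ℂ (fun z => F i z - F (i+1) z) (Metric.ball 0 (η (i+1))) := fun i =>
    ((hF i).1.mono (Metric.ball_subset_ball (by show η (i+1) ≤ η i; rw [hηs]; linarith [hηp i]))).sub (hF (i+1)).1
  have hcfd : ∀ i k, cpcf (fun z => F i z - F (i+1) z) k = cpcf (F i) k - cpcf (F (i+1)) k := fun i k =>
    cpcf_sub _ _ (η (i+1)) (hηp _) ((hF i).1.mono (Metric.ball_subset_ball (by show η (i+1) ≤ η i; rw [hηs]; linarith [hηp i]))) (hF (i+1)).1 k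
  have h42 : ∀ i, 2/η (i+1) = 4/η i := fun i => by rw [hηs]; have := hηp i; field_simp; norm_num
  have hcfb : ∀ i k, ‖cpcf (F i) k - cpcf (F (i+1)) k‖ ≤ K * P i * (4/η i)^k := by
    intro i k
    rw [← hcfd, ← h42]
    exact cpcf_bound _ _ _ (hηp _) (hDd i) (hF i).2.2.2 k
  -- tails
  have htail0 : ∀ m k i, k ≤ m → ‖cpcf (F i) k - cpcf (F (i+1)) k‖ ≤ (K * B (m+1) * 4^k) * (η i)^(m-k) * η i := by
    intro m k i hk
    have := hηp i
    refine (hcfb i k).trans ?_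
    calc K * P i * (4/η i)^k ≤ K * (B (m+1) * (η i)^(m+1)) * (4/η i)^k := by gcongr; exact hB (m+1) i
      _ = _ := by
        have : (η i)^(m+1) = (η i)^(m-k) * η i * (η i)^k := by rw [← pow_succ, ← pow_add]; congr 1; omega
        rw [this, div_pow (4:ℝ) (η i)]; field_simp
  have hlim : ∀ k, ∃ a, Tendsto (fun i => cpcf (F i) k) atTop (nhds a) := by
    intro k
    apply cauchySeq_tendsto_of_complete
    apply cauchySeq_of_le_geometric_two (C := 2 * (K * B (k+1) * 4^k))
    intro i
    rw [dist_eq_norm]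
    refine (htail0 k k i le_rfl).trans ?_
    have := hB0 (k+1)
    have h2 : η i ≤ 1/2^i := div_le_div_of_nonneg_right hη1 (by positivity)
    calc (K * B (k+1) * 4^k) * (η i)^(k-k) * η i ≤ (K * B (k+1) * 4^k) * (η i)^(k-k) * (1/2^i) := by gcongr
      _ = _ := by rw [Nat.sub_self, pow_zero]; field_simp
  choose a ha using hlim
  have htail : ∀ m k l, k < m → ‖a k - cpcf (F l) k‖ ≤ (2 * (K * B (m+1) * 4^k)) * (η l)^(m-k) := by
    intro m k l hk
    have hshift : Tendsto (fun i => cpcf (F (l+i)) k) atTop (nhds (a k)) := by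
      have := (ha k).comp (tendsto_add_atTop_nat l)
      simpa [Function.comp_def, add_comm] using this
    have := dist_le_of_le_geometric_two_of_tendsto₀ (C := 2 * ((K * B (m+1) * 4^k) * (η l)^(m-k))) (f := fun i => cpcf (F (l+i)) k) ?_ hshift
    · rw [← dist_eq_norm, dist_comm]
      simp only [add_zero] at this
      refine this.trans (le_of_eq (by ring))
    · intro i
      rw [dist_eq_norm]
      refine (htail0 m k (l+i) hk.le).trans ?_
      have h1 : η (l+i) ≤ η l := by rw [hη]; simp only; gcongr <;> simp
      have h2 : η (l+i) ≤ 1/2^i := by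
        calc η (l+i) ≤ η0/2^i := by rw [hη]; simp only; gcongr <;> simp
          _ ≤ _ := by gcongr
      have := hB0 (m+1)
      have h3 := hηp (l+i)
      have h4 := hηp l
      calc (K * B (m+1) * 4^k) * (η (l+i))^(m-k) * η (l+i) ≤ (K * B (m+1) * 4^k) * (η l)^(m-k) * (1/2^i) := by gcongr
        _ = _ := by field_simp
  have ha0 : a 0 = φ 0 := by
    apply tendsto_nhds_unique (ha 0)
    have h1 : ∀ i, ‖cpcf (F i) 0 - φ 0‖ ≤ K * B 1 * (η0 * (1/2)^i) := by
      intro i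
      have := (hF i).2.2.1 0 (by rw [abs_zero]; exact hηp i)
      unfold cpcf
      simp only [iteratedDeriv_zero, Nat.factorial_zero, Nat.cast_one, div_one]
      simp only [Complex.ofReal_zero] at this
      refine this.trans ?_
      rw [mul_assoc]
      gcongr
      refine (hB 1 i).trans (le_of_eq ?_)
      rw [one_div, inv_pow]; ring
    rw [tendsto_iff_norm_sub_tendsto_zero]
    apply squeeze_zero (fun _ => norm_nonneg _) h1
    have := (tendsto_pow_atTop_nhds_zero_of_lt_one (by norm_num : (0:ℝ) ≤ 1/2) (by norm_num)).const_mul (K * B 1 * η0)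
    simpa [mul_assoc] using this
  refine ⟨a, ?_, ha0, ?_⟩
  · intro k S hS
    have hl : ∀ l, ‖cpcf (F l) k‖ ≤ K * (2/η0)^k + K * ∑ i ∈ Finset.range l, P i * (4/η i)^k := by
      intro l
      induction l with
      | zero =>
        have := cpcf_bound (F 0) (η 0) K (hηp 0) (hF 0).1 (hF 0).2.1 k
        simpa [hη] using this
      | succ l ih =>
        rw [Finset.sum_range_succ]
        have h1 := hcfb l k
        calc ‖cpcf (F (l+1)) k‖ = ‖cpcf (F l) k - (cpcf (F l) k - cpcf (F (l+1)) k)‖ := by ring_nf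
          _ ≤ ‖cpcf (F l) k‖ + ‖cpcf (F l) k - cpcf (F (l+1)) k‖ := norm_sub_le _ _
          _ ≤ _ := by linarith
    apply le_of_tendsto (ha k).norm
    filter_upwards with l
    refine (hl l).trans ?_
    gcongr
    exact hS l
  · intro m hm s hs
    beta_reduce
    have hBm := hB0 m
    have hBm1 := hB0 (m+1)
    rcases eq_or_ne s 0 with h0 | h0
    · subst h0
      obtain ⟨m', rfl⟩ : ∃ m', m = m'+1 := ⟨m-1, by omega⟩
      rw [Finset.sum_range_succ']
      simp [ha0]
    have hs0 : 0 < |s| := abs_pos.mpr h0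
    obtain ⟨l, hl1, hl2⟩ := exists_nat_pow_near_of_lt_one (x := 4*|s|/η0) (y := 1/2) (by positivity) (by rw [div_le_one hη0]; linarith) (by norm_num) (by norm_num)
    have e1 : |s| ≤ η l / 4 := by
      rw [div_le_iff₀ hη0, one_div, inv_pow] at hl2
      have : η l = (2^l)⁻¹ * η0 := by rw [hη]; ring
      rw [this]; linarith
    have e2 : η l ≤ 8 * |s| := by
      rw [lt_div_iff₀ hη0, one_div, inv_pow, pow_succ] at hl1
      have : η l = 2 * ((2^l * 2)⁻¹ * η0) := by rw [hη, mul_inv]; ring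
      rw [this]; linarith
    have hηl := hηp l
    have hns : ‖(s:ℂ)‖ = |s| := by rw [Complex.norm_real, Real.norm_eq_abs]
    -- telescoping
    have htel : ∀ l, |s| ≤ η l/4 → ‖F l s - ∑ k ∈ Finset.range m, cpcf (F l) k * (s:ℂ)^k‖ ≤
        (2 * K * (2/η0)^m + 2 * K * ∑ i ∈ Finset.range l, P i * (4/η i)^m) * |s|^m := by
      intro l
      induction l with
      | zero =>
        intro h
        have := cpcf_rem (F 0) (η 0) K (hηp 0) (by linarith) (hF 0).1 (hF 0).2.1 m s (by rw [hns]; exact h)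
        refine this.trans (le_of_eq ?_)
        rw [hns]
        simp only [hη, pow_zero, div_one, Finset.range_zero, Finset.sum_empty, mul_zero, add_zero]
        rw [mul_assoc (2*K), ← mul_pow]; congr 2; ring
      | succ l ih =>
        intro h
        have hl' : |s| ≤ η l/4 := h.trans (by rw [hηs]; linarith [hηp l])
        have h1 := ih hl'
        have h2 := cpcf_rem _ (η (l+1)) (K * P l) (hηp _) (mul_nonneg (by linarith) (hP0 l)) (hDd l) (hF l).2.2.2 m s (by rw [hns]; exact h)
        have h3 : 2 * ‖(s:ℂ)‖/η (l+1) = (4/η l) * |s| := by rw [hns, ← h42]; ring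
        rw [h3, mul_pow] at h2
        have h4 : F (l+1) s - ∑ k ∈ Finset.range m, cpcf (F (l+1)) k * (s:ℂ)^k =
            (F l s - ∑ k ∈ Finset.range m, cpcf (F l) k * (s:ℂ)^k) -
            ((F l s - F (l+1) s) - ∑ k ∈ Finset.range m, cpcf (fun z => F l z - F (l+1) z) k * (s:ℂ)^k) := by
          simp only [hcfd, sub_mul, Finset.sum_sub_distrib]; ring
        rw [h4, Finset.sum_range_succ]
        refine (norm_sub_le _ _).trans ((add_le_add h1 h2).trans (le_of_eq (by ring)))
    have t1 := htel l e1
    have t2 := (hF l).2.2.1 s (lt_of_le_of_lt e1 (by show η l/4 < η l; linarith))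
    have t3 : ‖∑ k ∈ Finset.range m, (a k - cpcf (F l) k) * (s:ℂ)^k‖ ≤ (∑ k ∈ Finset.range m, (2 * (K * B (m+1) * 4^k)) * 8^(m-k)) * |s|^m := by
      rw [Finset.sum_mul]
      apply norm_sum_le_of_le
      intro k hk
      have hk' := Finset.mem_range.mp hk
      rw [norm_mul, norm_pow, hns]
      calc ‖a k - cpcf (F l) k‖ * |s|^k ≤ (2 * (K * B (m+1) * 4^k)) * (8*|s|)^(m-k) * |s|^k := by
            gcongr
            refine (htail m k l hk').trans ?_
            gcongr
        _ = _ := by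
          have : |s|^m = |s|^(m-k) * |s|^k := by rw [← pow_add]; congr 1; omega
          rw [this, mul_pow]; ring
    have t4 : K * P l ≤ K * B m * 8^m * |s|^m := by
      calc K * P l ≤ K * (B m * (8*|s|)^m) := by
            gcongr
            refine (hB m l).trans ?_
            gcongr
        _ = _ := by rw [mul_pow]; ring
    have t5 : 2 * K * ∑ i ∈ Finset.range l, P i * (4/η i)^m ≤ 2 * K * (2 * (B (m+1) * 4^m)) := by
      gcongr; exact hsum m l
    have e : φ s - ∑ k ∈ Finset.range m, a k * (s:ℂ)^k = -(F l s - φ s) + (F l s - ∑ k ∈ Finset.range m, cpcf (F l) k * (s:ℂ)^k) -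
        ∑ k ∈ Finset.range m, (a k - cpcf (F l) k) * (s:ℂ)^k := by
      simp only [sub_mul, Finset.sum_sub_distrib]; ring
    rw [e]
    have hsm : 0 < |s|^m := by positivity
    calc _ ≤ ‖-(F l s - φ s)‖ + ‖F l s - ∑ k ∈ Finset.range m, cpcf (F l) k * (s:ℂ)^k‖ + ‖∑ k ∈ Finset.range m, (a k - cpcf (F l) k) * (s:ℂ)^k‖ :=
          (norm_sub_le _ _).trans (by gcongr; exact norm_add_le _ _)
      _ ≤ K * B m * 8^m * |s|^m + (2 * K * (2/η0)^m + 2 * K * (2 * (B (m+1) * 4^m))) * |s|^m + (∑ k ∈ Finset.range m, (2 * (K * B (m+1) * 4^k)) * 8^(m-k)) * |s|^m := by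
          refine add_le_add (add_le_add ?_ (t1.trans ?_)) t3
          · rw [norm_neg]; exact t2.trans t4
          · gcongr
      _ = _ := by ring

lemma cp_conv_alg (k : ℕ) (f : ℝ → ℂ) (ax ay : ℕ → ℂ) (x h r C : ℝ) (hC : 0 ≤ C) (h0 : h ≠ 0) (hr : |h| ≤ r/2)
    (hx : ∀ s : ℝ, |s| ≤ r → ‖f (x+s) - ∑ l ∈ Finset.range (k+2), ax l * (s:ℂ)^l‖ ≤ C * |s|^(k+2))
    (hy : ∀ s : ℝ, |s| ≤ r → ‖f (x+h+s) - ∑ l ∈ Finset.range (k+2), ay l * (s:ℂ)^l‖ ≤ C * |s|^(k+2)) :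
    ‖ay k - ax k - (h:ℂ) * ((k+1) * ax (k+1))‖ ≤ 3^(k+2) * (C + C * 2^(k+2)) * |h|^2 := by
  have hh : 0 < |h| := abs_pos.mpr h0
  have hnh : ‖(h:ℂ)‖ = |h| := by rw [Complex.norm_real, Real.norm_eq_abs]
  set Q : Polynomial ℂ := ∑ l ∈ Finset.range (k+2), Polynomial.C (ay l) * Polynomial.X^l -
    ∑ l ∈ Finset.range (k+2), Polynomial.C (ax l) * (Polynomial.X + Polynomial.C (h:ℂ))^l with hQ
  have hdeg : Q.natDegree ≤ k+2 := by
    refine (Polynomial.natDegree_sub_le _ _).trans (max_le ?_ ?_)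
    · apply Polynomial.natDegree_sum_le_of_forall_le
      intro l hl
      refine (Polynomial.natDegree_C_mul_X_pow_le _ _).trans (Finset.mem_range.mp hl).le
    · apply Polynomial.natDegree_sum_le_of_forall_le
      intro l hl
      refine (Polynomial.natDegree_C_mul_le _ _).trans (Polynomial.natDegree_pow_le.trans ?_)
      rw [Polynomial.natDegree_X_add_C, mul_one]
      exact (Finset.mem_range.mp hl).le
  set Q2 := Q.comp (Polynomial.C (h:ℂ) * Polynomial.X) with hQ2
  have hdeg2 : Q2.natDegree ≤ k+2 := by
    refine Polynomial.natDegree_comp_le.trans ?_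
    calc Q.natDegree * (Polynomial.C (h:ℂ) * Polynomial.X).natDegree ≤ (k+2) * 1 := by
          gcongr; simpa using Polynomial.natDegree_C_mul_X_pow_le (h:ℂ) 1
      _ = _ := mul_one _
  have hev : ∀ z : ℂ, Q2.eval z = ∑ l ∈ Finset.range (k+2), ay l * ((h:ℂ)*z)^l - ∑ l ∈ Finset.range (k+2), ax l * ((h:ℂ)*z+h)^l := by
    intro z
    simp [hQ2, hQ, Polynomial.eval_comp, Polynomial.eval_finsetSum]
  have hb : ∀ t : ℝ, |t| ≤ 1 → ‖Q2.eval (t:ℂ)‖ ≤ (C + C * 2^(k+2)) * |h|^(k+2) := by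
    intro t ht
    rw [hev]
    have e1 : |h*t| ≤ |h| := by rw [abs_mul]; exact mul_le_of_le_one_right (abs_nonneg _) ht
    have e2 : |h*t+h| ≤ 2*|h| := (abs_add_le _ _).trans (by linarith)
    have i1 := hy (h*t) (by linarith)
    have i2 := hx (h*t+h) (by linarith)
    have e3 : x + (h*t+h) = x+h+h*t := by ring
    rw [e3] at i2
    push_cast at i1 i2
    calc _ = ‖(f (x+h+h*t) - ∑ l ∈ Finset.range (k+2), ax l * ((h:ℂ)*t+h)^l) - (f (x+h+h*t) - ∑ l ∈ Finset.range (k+2), ay l * ((h:ℂ)*t)^l)‖ := by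
          congr 1; ring
      _ ≤ C * |h*t+h|^(k+2) + C * |h*t|^(k+2) := (norm_sub_le _ _).trans (add_le_add i2 i1)
      _ ≤ C * (2*|h|)^(k+2) + C * |h|^(k+2) := by gcongr
      _ = _ := by rw [mul_pow]; ring
  have h1 := cp_coeff Q2 _ 1 one_pos (cp_bernstein Q2 (k+2) hdeg2 _ hb) k
  rw [one_pow, div_one, hQ2, Polynomial.comp_C_mul_X_coeff, norm_mul, norm_pow, hnh] at h1
  have hco : Q.coeff k = ay k - ax k - (h:ℂ) * ((k+1) * ax (k+1)) := by
    rw [hQ, Polynomial.coeff_sub, Polynomial.finsetSum_coeff, Polynomial.finsetSum_coeff]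
    simp only [Polynomial.coeff_C_mul, Polynomial.coeff_X_pow, Polynomial.coeff_X_add_C_pow]
    rw [Finset.sum_range_succ _ (k+1), Finset.sum_range_succ _ k, Finset.sum_range_succ _ (k+1), Finset.sum_range_succ _ k]
    rw [Finset.sum_eq_zero, Finset.sum_eq_zero]
    · simp; ring
    · intro l hl
      rw [Nat.choose_eq_zero_of_lt (Finset.mem_range.mp hl)]; simp
    · intro l hl
      rw [if_neg (Finset.mem_range.mp hl).ne']; simp
  rw [← hco]
  have h2 : |h|^(k+2) = |h|^2 * |h|^k := by rw [pow_add, mul_comm]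
  rw [h2] at h1
  have hk : 0 < |h|^k := by positivity
  refine le_of_mul_le_mul_right (h1.trans (le_of_eq (by ring))) hk

lemma cp_conv (f : ℝ → ℂ) (a : ℝ → ℕ → ℂ) (R r : ℝ) (hr : 0 < r) (Cm : ℕ → ℝ)
    (H : ∀ x, |x| < R → ∀ m : ℕ, 1 ≤ m → ∀ s : ℝ, |s| ≤ r → ‖f (x+s) - ∑ k ∈ Finset.range m, a x k * (s:ℂ)^k‖ ≤ Cm m * |s|^m)
    (x : ℝ) (hx : |x| < R) (k : ℕ) : HasDerivAt (fun y => a y k) ((k+1) * a x (k+1)) x := by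
  set C := max (Cm (k+2)) 0
  have hC : 0 ≤ C := le_max_right _ _
  rw [hasDerivAt_iff_isLittleO_nhds_zero]
  have hO : (fun h : ℝ => a (x+h) k - a x k - h • ((k+1) * a x (k+1))) =O[nhds 0] (fun h : ℝ => h^2) := by
    apply IsBigO.of_bound (3^(k+2) * (C + C * 2^(k+2)))
    have hR : 0 < min (r/2) (R - |x|) := lt_min (by linarith) (by linarith)
    filter_upwards [Metric.ball_mem_nhds (0:ℝ) hR] with h hh
    rw [mem_ball_zero_iff, Real.norm_eq_abs, lt_min_iff] at hh
    rcases eq_or_ne h 0 with h0 | h0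
    · subst h0; simp
    have hxh : |x+h| < R := (abs_add_le _ _).trans_lt (by linarith [hh.2])
    have hle : Cm (k+2) ≤ C := le_max_left _ _
    have := cp_conv_alg k f (a x) (a (x+h)) x h r C hC h0 hh.1.le
      (fun s hs => (H x hx (k+2) (by omega) s hs).trans (by gcongr))
      (fun s hs => (H (x+h) hxh (k+2) (by omega) s hs).trans (by gcongr))
    rw [Complex.real_smul, norm_pow, Real.norm_eq_abs]
    exact this
  refine hO.trans_isLittleO ?_
  have := isLittleO_pow_id (𝕜 := ℝ) (n := 2) (by norm_num)
  exact this

lemma cp_main (ω : ℝ → ℝ) (hω : IsWeightFunction ω) (hconc : ConcaveOn ℝ (Ici 0) ω) (j : ℕ) (hj : 1 ≤ j) :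
    ∃ A : ℝ, 0 < A ∧ ∀ (ρ R C0 : ℝ) (f : ℝ → ℂ) (dg dh : ℕ → ℝ → ℂ), 0 < ρ → 0 < R → 1 ≤ C0 →
      (∀ k y, |y| < 2*R → HasDerivAt (dg k) (dg (k+1) y) y) →
      (∀ k y, |y| < 2*R → HasDerivAt (dh k) (dh (k+1) y) y) →
      (∀ k y, |y| < 2*R → ‖dg k y‖ ≤ C0 * Real.exp (phiStar ω (ρ*k)/ρ)) →
      (∀ k y, |y| < 2*R → ‖dh k y‖ ≤ C0 * Real.exp (phiStar ω (ρ*k)/ρ)) →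
      (∀ y, |y| < 2*R → dg 0 y = f y^j) → (∀ y, |y| < 2*R → dh 0 y = f y^(j+1)) →
      ∃ C : ℝ, 0 < C ∧ ∃ df : ℕ → ℝ → ℂ, (∀ x, |x| < R → df 0 x = f x) ∧
        (∀ k x, |x| < R → HasDerivAt (df k) (df (k+1) x) x) ∧
        (∀ k x, |x| < R → ‖df k x‖ ≤ C * Real.exp (phiStar ω (A*ρ*k)/(A*ρ))) := by
  have hcp := cpc_pos j
  have hc1 := cpc_le j
  have hkp := cpk_pos j hj
  have hk1 := cpk_le j hj
  set c := cpc j with hc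
  set κ := cpk j / 2 with hκ
  have hκp : 0 < κ := by positivity
  have hκ1 : κ ≤ 1 := by rw [hκ]; linarith
  obtain ⟨m, hm⟩ := pow_unbounded_of_one_lt (16/c * (κ * Real.exp 1)) (one_lt_two : (1:ℝ) < 2)
  obtain ⟨a, hap, hab⟩ := cp_absorb hω hconc m
  have hW := CpW.of_weight hω hconc
  refine ⟨(κ*a)⁻¹, by positivity, ?_⟩
  intro ρ R C0 f dg dh hρ hR hC0 hdg hdh hbg hbh hg hh
  obtain ⟨C1, hC1, hab1⟩ := hab (κ * ρ⁻¹) (by positivity)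
  have hw : CpW (fun t => ρ⁻¹ * ω t) := hW.scale (by positivity)
  simp only [hW.M_eq ρ hρ] at hbg hbh
  simp only [hW.M_eq ((κ*a)⁻¹*ρ) (by positivity)]
  have hinv : ((κ*a)⁻¹*ρ)⁻¹ = κ * ρ⁻¹ * a := by
    rw [mul_inv, inv_inv]; ring
  rw [hinv]
  obtain ⟨ε0, hε0, hε1, -, u, hu0, hu, K, hK, hF⟩ := cp_local j hj _ hw R C0 hR hC0 f dg dh hdg hdh hbg hbh hg hh
  have hεp : ∀ i : ℕ, 0 < ε0/2^i := fun i => by positivity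
  have hεle : ∀ i : ℕ, ε0/2^i ≤ 1 := fun i => (div_le_self hε0.le (one_le_pow₀ (by norm_num))).trans hε1
  obtain ⟨B, hB0, hB⟩ := cp_decay hw κ hκp 1
  have hPd : ∀ i, Real.exp (-(cpk j * u i)) = Real.exp (-(κ * u i)) * Real.exp (-(κ * u i)) := by
    intro i; rw [← Real.exp_add]; congr 1; rw [hκ]; ring
  have hE1 : ∀ i, Real.exp (-(κ * u i)) ≤ B * (1/2)^i := by
    intro i
    refine (hB _ (u i) (hεp i) (hεle i) (hu i)).trans ?_
    gcongr
    rw [pow_one, one_div, inv_pow, ← one_div]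
    exact div_le_div_of_nonneg_right hε1 (by positivity)
  have hη0 : 0 < c*ε0/4 := by positivity
  have hη1 : c*ε0/4 ≤ 1 := by nlinarith
  have hcε : ∀ i : ℕ, c*ε0/4/2^i = (c/4) * (ε0/2^i) := fun i => by ring
  obtain ⟨Cm, hsyn⟩ := cp_syn (c*ε0/4) K hη0 hη1 hK (fun i => Real.exp (-(cpk j * u i))) (fun i => (Real.exp_pos _).le) (by
    intro N
    obtain ⟨B', hB'0, hB'⟩ := cp_decay hw (cpk j) hkp N
    refine ⟨B' * (4/c)^N, by positivity, fun i => ?_⟩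
    refine (hB' _ (u i) (hεp i) (hεle i) (hu i)).trans (le_of_eq ?_)
    rw [hcε, mul_assoc, ← mul_pow]
    congr 2
    field_simp)
  have hx : ∀ x : ℝ, ∃ b : ℕ → ℂ, |x| < R → (∀ k S, (∀ l, ∑ i ∈ Finset.range l, Real.exp (-(cpk j * u i)) * (4/(c*ε0/4/2^i))^k ≤ S) → ‖b k‖ ≤ K * (2/(c*ε0/4))^k + K * S) ∧
        b 0 = f x ∧
        ∀ m : ℕ, 1 ≤ m → ∀ s : ℝ, |s| ≤ c*ε0/4/4 → ‖f (x+s) - ∑ k ∈ Finset.range m, b k * (s:ℂ)^k‖ ≤ Cm m * |s|^m := by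
    intro x
    by_cases hx : |x| < R
    · obtain ⟨F, hF⟩ := hF x hx
      obtain ⟨b, hb1, hb2, hb3⟩ := hsyn (fun s => f (x+s)) F (fun i => ⟨(hF i).1.mono (Metric.ball_subset_ball (by
        have : 0 < c*ε0/4/2^i := by positivity
        linarith)), (hF i).2.1, (hF i).2.2.1, (hF i).2.2.2⟩)
      exact ⟨b, fun _ => ⟨hb1, by simpa using hb2, hb3⟩⟩
    · exact ⟨0, fun h => absurd h hx⟩
  choose b hb using hx
  have hder := cp_conv f b R (c*ε0/4/4) (by positivity) Cm (fun x hx => (hb x hx).2.2)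
  set M : ℕ → ℝ := fun k => cpM (fun t => κ * (ρ⁻¹ * ω t)) k with hM
  have hMp : ∀ k, 0 < M k := fun k => cpM_pos _ k
  set M' : ℕ → ℝ := fun k => cpM (fun t => κ * ρ⁻¹ * a * ω t) k with hM'
  have hM'p : ∀ k, 0 < M' k := fun k => cpM_pos _ k
  have hMM : ∀ k, (16/c * (κ * Real.exp 1))^k * M k ≤ C1 * M' k := by
    intro k
    refine le_trans ?_ (hab1 k)
    have : M k = cpM (fun t => κ * ρ⁻¹ * ω t) k := by
      rw [hM]; simp only [mul_assoc]
    rw [this]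
    have := (cpM_pos (fun t => κ * ρ⁻¹ * ω t) k).le
    gcongr
  refine ⟨K * (Real.exp (κ * u 0) + 2 * B) * C1 + (K + K * (2*B)) / M' 0, by
    have := hM'p 0
    positivity, fun k x => k.factorial * b x k, ?_, ?_, ?_⟩
  · intro x hx
    simp [(hb x hx).2.1]
  · intro k x hx
    refine ((hder x hx k).const_mul (k.factorial : ℂ)).congr_deriv ?_
    show _ = ((k+1).factorial : ℂ) * b x (k+1)
    rw [Nat.factorial_succ]; push_cast; ring
  · intro k x hx
    rw [norm_mul, Complex.norm_natCast]
    show _ ≤ _ * M' k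
    rcases Nat.eq_zero_or_pos k with h0 | hk
    · subst h0
      have h1 := (hb x hx).1 0 (2*B) (by
        intro l
        calc ∑ i ∈ Finset.range l, Real.exp (-(cpk j * u i)) * (4/(c*ε0/4/2^i))^0 ≤ ∑ i ∈ Finset.range l, B * (1/2)^i := by
              apply Finset.sum_le_sum
              intro i _
              rw [pow_zero, mul_one]
              refine le_trans ?_ (hE1 i)
              apply Real.exp_le_exp.mpr
              have := hu0 i
              rw [hκ]; nlinarith
          _ = B * ∑ i ∈ Finset.range l, (1/2)^i := by rw [Finset.mul_sum]
          _ ≤ B * 2 := by gcongr; exact cp_geom l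
          _ = _ := by ring)
      rw [pow_zero, mul_one] at h1
      rw [Nat.factorial_zero, Nat.cast_one, one_mul]
      refine h1.trans ?_
      have h2 := hM'p 0
      rw [add_mul, div_mul_cancel₀ _ h2.ne']
      have : 0 ≤ K * (Real.exp (κ * u 0) + 2 * B) * C1 * M' 0 := by positivity
      linarith
    · have hback : ∀ i : ℕ, k.factorial * (1/(ε0/2^i))^k * Real.exp (-(κ * u i)) ≤ (κ * Real.exp 1)^k * M k := fun i =>
        cp_back hw κ hκp hκ1 k hk _ (u i) (hεp i) (hεle i) (hu i)
      set D := (16/c * (κ * Real.exp 1))^k * M k with hD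
      have hMk := hMp k
      have hD0 : 0 < D := by positivity
      have hkf : (0:ℝ) < k.factorial := by positivity
      have h1 := (hb x hx).1 k (2*B*D/k.factorial) (by
        intro l
        calc ∑ i ∈ Finset.range l, Real.exp (-(cpk j * u i)) * (4/(c*ε0/4/2^i))^k ≤ ∑ i ∈ Finset.range l, (B * D / k.factorial) * (1/2)^i := by
              apply Finset.sum_le_sum
              intro i _
              rw [hPd]
              have e : 4/(c*ε0/4/2^i) = 16/c * (1/(ε0/2^i)) := by field_simp; norm_num
              rw [e, mul_pow]
              calc Real.exp (-(κ * u i)) * Real.exp (-(κ * u i)) * ((16/c)^k * (1/(ε0/2^i))^k)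
                  = (k.factorial * (1/(ε0/2^i))^k * Real.exp (-(κ * u i))) * Real.exp (-(κ * u i)) * (16/c)^k / k.factorial := by field_simp
                _ ≤ ((κ * Real.exp 1)^k * M k) * (B * (1/2)^i) * (16/c)^k / k.factorial := by
                  refine div_le_div_of_nonneg_right (mul_le_mul_of_nonneg_right (mul_le_mul (hback i) (hE1 i) (Real.exp_pos _).le ?_) ?_) hkf.le
                  · positivity
                  · positivity
                _ = _ := by rw [hD, mul_pow (16/c) (κ * Real.exp 1)]; ring
          _ = (B * D / k.factorial) * ∑ i ∈ Finset.range l, (1/2)^i := by rw [Finset.mul_sum]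
          _ ≤ (B * D / k.factorial) * 2 := by gcongr; exact cp_geom l
          _ = _ := by ring)
      have h2 : k.factorial * (2/(c*ε0/4))^k ≤ Real.exp (κ * u 0) * D := by
        have h3 := hback 0
        rw [Real.exp_neg, ← div_eq_mul_inv, div_le_iff₀ (Real.exp_pos _), pow_zero, div_one] at h3
        have e : 2/(c*ε0/4) = 8/c * (1/ε0) := by field_simp; norm_num
        rw [e, mul_pow]
        calc (k.factorial:ℝ) * ((8/c)^k * (1/ε0)^k) = (8/c)^k * (k.factorial * (1/ε0)^k) := by ring
          _ ≤ (16/c)^k * ((κ * Real.exp 1)^k * M k * Real.exp (κ * u 0)) := by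
            gcongr; norm_num
          _ = _ := by rw [hD, mul_pow (16/c) (κ * Real.exp 1)]; ring
      calc (k.factorial:ℝ) * ‖b x k‖ ≤ k.factorial * (K * (2/(c*ε0/4))^k + K * (2*B*D/k.factorial)) := by gcongr
        _ = K * (k.factorial * (2/(c*ε0/4))^k) + K * (2*B) * D := by field_simp
        _ ≤ K * (Real.exp (κ * u 0) * D) + K * (2*B) * D := by gcongr
        _ = K * (Real.exp (κ * u 0) + 2*B) * D := by ring
        _ ≤ K * (Real.exp (κ * u 0) + 2*B) * (C1 * M' k) := by gcongr; exact hMM k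
        _ ≤ _ := by
          have h2 := hM'p 0
          have h3 := hM'p k
          have : 0 ≤ (K + K * (2*B)) / M' 0 * M' k := by positivity
          linarith

lemma cp_fam (g : ℝ → ℂ) (U : Set ℝ) (hU : IsOpen U) (hg : ContDiffOn ℝ (⊤ : ℕ∞) g U) (k : ℕ) (y : ℝ) (hy : y ∈ U) :
    HasDerivAt (iteratedDerivWithin k g U) (iteratedDerivWithin (k+1) g U y) y := by
  have h1 := hg.differentiableOn_iteratedDerivWithin (m := k) (by exact_mod_cast ENat.coe_lt_top k) hU.uniqueDiffOn y hy
  have h2 := h1.hasDerivWithinAt.hasDerivAt (hU.mem_nhds hy)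
  rw [iteratedDerivWithin_succ]
  exact h2

lemma cp_fam_conv (f : ℝ → ℂ) (df : ℕ → ℝ → ℂ) (U : Set ℝ) (hU : IsOpen U) (h0 : ∀ x ∈ U, df 0 x = f x)
    (hd : ∀ k, ∀ x ∈ U, HasDerivAt (df k) (df (k+1) x) x) :
    ContDiffOn ℝ (⊤ : ℕ∞) f U ∧ ∀ k, ∀ x ∈ U, iteratedDerivWithin k f U x = df k x := by
  have h1 : ∀ k, ∀ x ∈ U, iteratedDerivWithin k f U x = df k x := by
    intro k
    induction k with
    | zero => intro x hx; rw [iteratedDerivWithin_zero, h0 x hx]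
    | succ k ih =>
      intro x hx
      rw [iteratedDerivWithin_succ, derivWithin_congr (f := df k) ih (ih x hx)]
      exact (hd k x hx).hasDerivWithinAt.derivWithin (hU.uniqueDiffOn x hx)
  refine ⟨contDiffOn_of_differentiableOn_deriv (n := ⊤) fun m _ => ?_, h1⟩
  have h2 : DifferentiableOn ℝ (df m) U := fun x hx => (hd m x hx).differentiableAt.differentiableWithinAt
  exact h2.congr (h1 m)

lemma cp_mono (ω : ℝ → ℝ) (hW : CpW ω) (ρ1 ρ2 : ℝ) (h1 : 0 < ρ1) (h12 : ρ1 ≤ ρ2) (k : ℕ) :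
    Real.exp (phiStar ω (ρ1*k)/ρ1) ≤ Real.exp (phiStar ω (ρ2*k)/ρ2) := by
  have h2 : 0 < ρ2 := h1.trans_le h12
  rw [hW.M_eq ρ1 h1, hW.M_eq ρ2 h2]
  apply cpM_le
  intro T hT
  refine le_trans ?_ ((hW.scale (inv_pos.mpr h2)).M_ge k hT)
  have := hW.nonneg T (by linarith)
  gcongr

lemma cp_rad (U1 U2 : Set ℝ) (h1 : IsOpen U1) (h2 : IsOpen U2) (m1 : (0:ℝ) ∈ U1) (m2 : (0:ℝ) ∈ U2) :
    ∃ R : ℝ, 0 < R ∧ Metric.closedBall (0:ℝ) (2*R) ⊆ U1 ∧ Metric.closedBall (0:ℝ) (2*R) ⊆ U2 := by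
  obtain ⟨ε, hε, h⟩ := Metric.isOpen_iff.mp (h1.inter h2) 0 ⟨m1, m2⟩
  refine ⟨ε/4, by positivity, fun x hx => (h (?_)).1, fun x hx => (h ?_).2⟩ <;>
  · rw [mem_closedBall_zero_iff] at hx
    rw [mem_ball_zero_iff]
    linarith

lemma cp_fin (ω : ℝ → ℝ) (hω : IsWeightFunction ω) (hconc : ConcaveOn ℝ (Ici 0) ω) (j : ℕ) (hj : 1 ≤ j) :
    ∃ A : ℝ, 0 < A ∧ ∀ (ρ R C : ℝ) (f : ℝ → ℂ) (U1 U2 : Set ℝ), 0 < ρ → 0 < R → IsOpen U1 → IsOpen U2 →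
      Metric.closedBall (0:ℝ) (2*R) ⊆ U1 → Metric.closedBall (0:ℝ) (2*R) ⊆ U2 →
      ContDiffOn ℝ (⊤ : ℕ∞) (f^j) U1 → ContDiffOn ℝ (⊤ : ℕ∞) (f^(j+1)) U2 →
      (∀ x ∈ Metric.ball (0:ℝ) (2*R), ∀ k : ℕ, ‖iteratedFDerivWithin ℝ k (f^j) U1 x‖ ≤ C * Real.exp (phiStar ω (ρ*k)/ρ)) →
      (∀ x ∈ Metric.ball (0:ℝ) (2*R), ∀ k : ℕ, ‖iteratedFDerivWithin ℝ k (f^(j+1)) U2 x‖ ≤ C * Real.exp (phiStar ω (ρ*k)/ρ)) →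
      ContDiffOn ℝ (⊤ : ℕ∞) f (Metric.ball 0 R) ∧ ∃ C' : ℝ, 0 < C' ∧
        ∀ x ∈ Metric.ball (0:ℝ) R, ∀ k : ℕ, ‖iteratedFDerivWithin ℝ k f (Metric.ball 0 R) x‖ ≤ C' * Real.exp (phiStar ω (A*ρ*k)/(A*ρ)) := by
  obtain ⟨A, hA, H⟩ := cp_main ω hω hconc j hj
  refine ⟨A, hA, ?_⟩
  intro ρ R C f U1 U2 hρ hR hU1 hU2 hs1 hs2 hc1 hc2 hb1 hb2
  have hin : ∀ y : ℝ, |y| < 2*R → y ∈ Metric.ball (0:ℝ) (2*R) := fun y hy => by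
    rwa [mem_ball_zero_iff, Real.norm_eq_abs]
  have hin2 : ∀ y : ℝ, |y| < 2*R → y ∈ Metric.closedBall (0:ℝ) (2*R) := fun y hy =>
    Metric.ball_subset_closedBall (hin y hy)
  obtain ⟨C', hC', df, hd0, hd, hdb⟩ := H ρ R (max C 1) f (fun k => iteratedDerivWithin k (f^j) U1) (fun k => iteratedDerivWithin k (f^(j+1)) U2)
    hρ hR (le_max_right _ _) (fun k y hy => cp_fam _ _ hU1 hc1 k y (hs1 (hin2 y hy)))
    (fun k y hy => cp_fam _ _ hU2 hc2 k y (hs2 (hin2 y hy)))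
    (fun k y hy => by
      beta_reduce
      rw [← norm_iteratedFDerivWithin_eq_norm_iteratedDerivWithin]
      refine (hb1 y (hin y hy) k).trans ?_
      gcongr
      exact le_max_left _ _)
    (fun k y hy => by
      beta_reduce
      rw [← norm_iteratedFDerivWithin_eq_norm_iteratedDerivWithin]
      refine (hb2 y (hin y hy) k).trans ?_
      gcongr
      exact le_max_left _ _)
    (fun y _ => by simp) (fun y _ => by simp)
  have hin3 : ∀ y ∈ Metric.ball (0:ℝ) R, |y| < R := fun y hy => by
    rwa [mem_ball_zero_iff, Real.norm_eq_abs] at hy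
  obtain ⟨h1, h2⟩ := cp_fam_conv f df (Metric.ball 0 R) Metric.isOpen_ball (fun x hx => hd0 x (hin3 x hx)) (fun k x hx => hd k x (hin3 x hx))
  refine ⟨h1, C', hC', fun x hx k => ?_⟩
  rw [norm_iteratedFDerivWithin_eq_norm_iteratedDerivWithin, h2 k x hx]
  exact hdb k x (hin3 x hx)

/-- for a concave weight function `ω`, the rings of germs at `0 ∈ ℝ` of
`E^{ω}`- (Roumieu) and `E^{(ω)}`- (Beurling) functions have property (D). -/
theorem statement7 (ω : ℝ → ℝ) (hω : IsWeightFunction ω)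
    (hconc : ConcaveOn ℝ (Ici 0) ω) :
    (∀ f : ℝ → ℂ, ∀ j : ℕ, 1 ≤ j →
        (∃ U : Set ℝ, IsOpen U ∧ (0 : ℝ) ∈ U ∧ OmegaRoumieuOn ω (f ^ j) U) →
        (∃ U : Set ℝ, IsOpen U ∧ (0 : ℝ) ∈ U ∧ OmegaRoumieuOn ω (f ^ (j + 1)) U) →
        ∃ U : Set ℝ, IsOpen U ∧ (0 : ℝ) ∈ U ∧ OmegaRoumieuOn ω f U) ∧
    (∀ f : ℝ → ℂ, ∀ j : ℕ, 1 ≤ j →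
        (∃ U : Set ℝ, IsOpen U ∧ (0 : ℝ) ∈ U ∧ OmegaBeurlingOn ω (f ^ j) U) →
        (∃ U : Set ℝ, IsOpen U ∧ (0 : ℝ) ∈ U ∧ OmegaBeurlingOn ω (f ^ (j + 1)) U) →
        ∃ U : Set ℝ, IsOpen U ∧ (0 : ℝ) ∈ U ∧ OmegaBeurlingOn ω f U) := by
  have hW := CpW.of_weight hω hconc
  constructor
  · rintro f j hj ⟨U1, hU1, m1, hc1, hb1⟩ ⟨U2, hU2, m2, hc2, hb2⟩
    obtain ⟨A, hA, H⟩ := cp_fin ω hω hconc j hj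
    obtain ⟨R, hR, s1, s2⟩ := cp_rad U1 U2 hU1 hU2 m1 m2
    have hcl : closure (Metric.ball (0:ℝ) (2*R)) = Metric.closedBall 0 (2*R) := closure_ball _ (by positivity)
    obtain ⟨C1, ρ1, hC1, hρ1, hb1⟩ := hb1 (Metric.ball 0 (2*R)) Metric.isOpen_ball (by rw [hcl]; exact isCompact_closedBall _ _) (by rw [hcl]; exact s1)
    obtain ⟨C2, ρ2, hC2, hρ2, hb2⟩ := hb2 (Metric.ball 0 (2*R)) Metric.isOpen_ball (by rw [hcl]; exact isCompact_closedBall _ _) (by rw [hcl]; exact s2)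
    obtain ⟨h1, C, hC, h2⟩ := H (max ρ1 ρ2) R (max C1 C2) f U1 U2 (lt_max_of_lt_left hρ1) hR hU1 hU2 s1 s2 hc1 hc2
      (fun x hx k => (hb1 x hx k).trans (mul_le_mul (le_max_left _ _) (cp_mono ω hW _ _ hρ1 (le_max_left _ _) k) (Real.exp_pos _).le (hC1.le.trans (le_max_left _ _))))
      (fun x hx k => (hb2 x hx k).trans (mul_le_mul (le_max_right _ _) (cp_mono ω hW _ _ hρ2 (le_max_right _ _) k) (Real.exp_pos _).le (hC1.le.trans (le_max_left _ _))))
    refine ⟨Metric.ball 0 R, Metric.isOpen_ball, Metric.mem_ball_self hR, h1, fun V _ _ hV => ?_⟩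
    exact ⟨C, A * max ρ1 ρ2, hC, mul_pos hA (lt_max_of_lt_left hρ1), fun x hx k => h2 x (hV (subset_closure hx)) k⟩
  · rintro f j hj ⟨U1, hU1, m1, hc1, hb1⟩ ⟨U2, hU2, m2, hc2, hb2⟩
    obtain ⟨A, hA, H⟩ := cp_fin ω hω hconc j hj
    obtain ⟨R, hR, s1, s2⟩ := cp_rad U1 U2 hU1 hU2 m1 m2
    have hcl : closure (Metric.ball (0:ℝ) (2*R)) = Metric.closedBall 0 (2*R) := closure_ball _ (by positivity)
    have key : ∀ ρ : ℝ, 0 < ρ → ContDiffOn ℝ (⊤ : ℕ∞) f (Metric.ball 0 R) ∧ ∃ C' : ℝ, 0 < C' ∧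
        ∀ x ∈ Metric.ball (0:ℝ) R, ∀ k : ℕ, ‖iteratedFDerivWithin ℝ k f (Metric.ball 0 R) x‖ ≤ C' * Real.exp (phiStar ω (ρ*k)/ρ) := by
      intro ρ hρ
      have hρA : 0 < ρ/A := by positivity
      obtain ⟨C1, hC1, hb1⟩ := hb1 (Metric.ball 0 (2*R)) Metric.isOpen_ball (by rw [hcl]; exact isCompact_closedBall _ _) (by rw [hcl]; exact s1) (ρ/A) hρA
      obtain ⟨C2, hC2, hb2⟩ := hb2 (Metric.ball 0 (2*R)) Metric.isOpen_ball (by rw [hcl]; exact isCompact_closedBall _ _) (by rw [hcl]; exact s2) (ρ/A) hρA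
      have h := H (ρ/A) R (max C1 C2) f U1 U2 hρA hR hU1 hU2 s1 s2 hc1 hc2
        (fun x hx k => (hb1 x hx k).trans (mul_le_mul_of_nonneg_right (le_max_left _ _) (Real.exp_pos _).le))
        (fun x hx k => (hb2 x hx k).trans (mul_le_mul_of_nonneg_right (le_max_right _ _) (Real.exp_pos _).le))
      rwa [mul_div_cancel₀ ρ hA.ne'] at h
    refine ⟨Metric.ball 0 R, Metric.isOpen_ball, Metric.mem_ball_self hR, (key 1 one_pos).1, fun V _ _ hV ρ hρ => ?_⟩
    obtain ⟨-, C, hC, h2⟩ := key ρ hρ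
    exact ⟨C, hC, fun x hx k => h2 x (hV (subset_closure hx)) k⟩
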